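/- arXiv:2402.11921 — 3 statements merged into one kernel-verified Lean document; each statement's English description precedes it below -/
import Mathlib

section
/- Let p ∈ (1/2,1], V ∈ C¹((0,1);(0,∞)), ρ ∈ C¹([0,1];(0,1)) and u₀ : (0,1) → [0,1] measurable. If u : (0,∞)×(0,1) → [0,1] is an entropy solution of ∂_t u + ∂_x J(u) + V(x)(u − ρ(x)) = 0 with initial datum u₀, then for every T > 0 one has the energy estimate ∫₀^T ∫₀¹ V(x) (u(t,x) − ρ(x))² dx dt < ∞. -/
open MeasureTheory Set Filter Topology

/-- The macroscopic flux `J(u) = (2p-1) u (1-u)`. -/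
noncomputable def fluxJ (p : ℝ) (u : ℝ) : ℝ := (2 * p - 1) * u * (1 - u)

/-- A Lax entropy–flux pair: `f, q ∈ C²(ℝ)`, `f'' ≥ 0` and `q' = J' · f'`. -/
def IsLaxPair (p : ℝ) (f q : ℝ → ℝ) : Prop :=
  ContDiff ℝ 2 f ∧ ContDiff ℝ 2 q ∧ (∀ u : ℝ, 0 ≤ deriv (deriv f) u) ∧
    ∀ u : ℝ, deriv q u = deriv (fluxJ p) u * deriv f u

/-- `u : (0,∞)×(0,1) → [0,1]` is an entropy solution of
`∂ₜ u + ∂ₓ J(u) + V(x)(u - ρ(x)) = 0` with initial datum `u₀` and boundary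
conditions `u(·,0) = ρ(0)`, `u(·,1) = ρ(1)`:  for every Lax entropy–flux pair
`(f,q)` and every nonnegative `φ ∈ C_c²(ℝ × (0,1))`,
`∫₀¹ f(u₀)φ(0,·) + ∬ [f(u)∂ₜφ + q(u)∂ₓφ] ≥ ∬ f'(u) V(x)(u-ρ(x)) φ`. -/
def IsEntropySolution (p : ℝ) (V ρ : ℝ → ℝ) (u₀ : ℝ → ℝ) (u : ℝ × ℝ → ℝ) : Prop :=
  Measurable u ∧ (∀ z : ℝ × ℝ, u z ∈ Icc (0 : ℝ) 1) ∧
    ∀ f q : ℝ → ℝ, IsLaxPair p f q →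
      ∀ φ : ℝ × ℝ → ℝ, ContDiff ℝ 2 φ → HasCompactSupport φ →
        (∀ z : ℝ × ℝ, 0 ≤ φ z) → (∀ z : ℝ × ℝ, z.2 ∉ Ioo (0 : ℝ) 1 → φ z = 0) →
        (∫ x in Ioo (0 : ℝ) 1, f (u₀ x) * φ (0, x))
            + (∫ z in Ioi (0 : ℝ) ×ˢ Ioo (0 : ℝ) 1,
                (f (u z) * deriv (fun s => φ (s, z.2)) z.1
                  + q (u z) * deriv (fun y => φ (z.1, y)) z.2))
          ≥ ∫ z in Ioi (0 : ℝ) ×ˢ Ioo (0 : ℝ) 1,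
              deriv f (u z) * (V z.2 * (u z - ρ z.2)) * φ z

lemma ee_cutoff (a : ℝ) (ha : 0 < a) : ∃ χ G : ℝ → ℝ, ContDiff ℝ 2 χ ∧ (∀ x, 0 ≤ χ x) ∧
    (∀ x, χ x ≤ 1) ∧ (∀ x, 2 / a ≤ x → x ≤ 1 - 2 / a → χ x = 1) ∧
    (∀ x, x ∉ Icc (1 / a) (1 - 1 / a) → χ x = 0) ∧ Continuous G ∧
    (∀ x, |deriv χ x| ≤ G x) ∧ (∫ x in Ioo (0:ℝ) 1, G x) ≤ 2 := by
  set A : ℝ → ℝ := fun x => Real.smoothTransition (a * x - 1) with hA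
  set B : ℝ → ℝ := fun x => Real.smoothTransition (a * (1 - x) - 1) with hB
  have cS : ContDiff ℝ 2 Real.smoothTransition := Real.smoothTransition.contDiff (n := 2)
  have cA : ContDiff ℝ 2 A := cS.comp (by fun_prop)
  have cB : ContDiff ℝ 2 B := cS.comp (by fun_prop)
  have mA : Monotone A := fun x y h => Real.smoothTransition.monotone (by nlinarith)
  have mB : Antitone B := fun x y h => Real.smoothTransition.monotone (by nlinarith)
  have dA : ∀ x, 0 ≤ deriv A x := fun x => mA.deriv_nonneg
  have dB : ∀ x, deriv B x ≤ 0 := fun x => mB.deriv_nonpos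
  have A0 : ∀ x, 0 ≤ A x := fun x => Real.smoothTransition.nonneg _
  have A1 : ∀ x, A x ≤ 1 := fun x => Real.smoothTransition.le_one _
  have B0 : ∀ x, 0 ≤ B x := fun x => Real.smoothTransition.nonneg _
  have B1 : ∀ x, B x ≤ 1 := fun x => Real.smoothTransition.le_one _
  have DA : Differentiable ℝ A := cA.differentiable (by norm_num)
  have DB : Differentiable ℝ B := cB.differentiable (by norm_num)
  have cA' : Continuous (deriv A) := cA.continuous_deriv (by norm_num)
  have cB' : Continuous (deriv B) := cB.continuous_deriv (by norm_num)
  refine ⟨fun x => A x * B x, fun x => deriv A x - deriv B x, cA.mul cB,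
    fun x => mul_nonneg (A0 x) (B0 x), fun x => mul_le_one₀ (A1 x) (B0 x) (B1 x), ?_, ?_,
    cA'.sub cB', ?_, ?_⟩
  · intro x h1 h2
    have h1' : 2 ≤ x * a := by rwa [div_le_iff₀ ha] at h1
    have h2' : 2 ≤ (1 - x) * a := by rw [← div_le_iff₀ ha]; linarith
    have e1 : A x = 1 := Real.smoothTransition.one_of_one_le (by nlinarith)
    have e2 : B x = 1 := Real.smoothTransition.one_of_one_le (by nlinarith)
    simp [e1, e2]
  · intro x hx
    by_cases h : 1 / a ≤ x
    · have h2 : ¬ (x ≤ 1 - 1 / a) := fun h2 => hx ⟨h, h2⟩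
      have h3 : 1 - x < 1 / a := by linarith
      rw [lt_div_iff₀ ha] at h3
      have e2 : B x = 0 := Real.smoothTransition.zero_of_nonpos (by nlinarith)
      simp [e2]
    · push Not at h
      rw [lt_div_iff₀ ha] at h
      have e2 : A x = 0 := Real.smoothTransition.zero_of_nonpos (by nlinarith)
      simp [e2]
  · intro x
    have : deriv (fun x => A x * B x) x = deriv A x * B x + A x * deriv B x :=
      ((DA x).hasDerivAt.mul (DB x).hasDerivAt).deriv
    rw [this, abs_le]
    have := dA x; have := dB x; have := A0 x; have := A1 x; have := B0 x; have := B1 x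
    constructor <;> nlinarith [mul_nonneg (dA x) (B0 x), mul_nonneg (neg_nonneg.2 (dB x)) (A0 x),
      mul_nonneg (dA x) (sub_nonneg.2 (B1 x)), mul_nonneg (neg_nonneg.2 (dB x)) (sub_nonneg.2 (A1 x))]
  · rw [← integral_Ioc_eq_integral_Ioo, ← intervalIntegral.integral_of_le zero_le_one,
      intervalIntegral.integral_sub (cA'.intervalIntegrable _ _) (cB'.intervalIntegrable _ _),
      intervalIntegral.integral_deriv_eq_sub (fun x _ => DA x) (cA'.intervalIntegrable _ _),
      intervalIntegral.integral_deriv_eq_sub (fun x _ => DB x) (cB'.intervalIntegrable _ _)]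
    linarith [A0 0, A1 1, B0 1, B1 0]

lemma ee_time (T : ℝ) (hT : 0 < T) : ∃ (ψ : ℝ → ℝ) (D : ℝ), ContDiff ℝ 2 ψ ∧ HasCompactSupport ψ ∧
    (∀ t, 0 ≤ ψ t) ∧ (∀ t, ψ t ≤ 1) ∧ (∀ t ∈ Ioo 0 T, ψ t = 1) ∧ 0 ≤ D ∧
    (∀ t, |deriv ψ t| ≤ D) ∧ (∀ t, T + 2 ≤ t → ψ t = 0 ∧ deriv ψ t = 0) := by
  let b : ContDiffBump (0:ℝ) := ⟨T, T + 1, hT, by linarith⟩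
  have cb : ContDiff ℝ 2 b := b.contDiff (n := 2)
  obtain ⟨D, hD⟩ := (b.hasCompactSupport.deriv).exists_bound_of_continuous
    (cb.continuous_deriv (by norm_num))
  have z : ∀ t, T + 1 < t → b t = 0 := fun t ht => b.zero_of_le_dist (by
    rw [Real.dist_eq, sub_zero, abs_of_pos (by linarith)]; exact ht.le)
  refine ⟨b, D, cb, b.hasCompactSupport, fun t => b.nonneg, fun t => b.le_one, ?_,
    (norm_nonneg _).trans (hD 0), hD, ?_⟩
  · intro t ht
    apply b.one_of_mem_closedBall
    rw [Metric.mem_closedBall, Real.dist_eq, sub_zero, abs_of_pos ht.1]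
    exact ht.2.le
  · intro t ht
    refine ⟨z t (by linarith), ?_⟩
    have : (b : ℝ → ℝ) =ᶠ[𝓝 t] fun _ => 0 := by
      filter_upwards [Ioi_mem_nhds (show T + 1 < t by linarith)] with s hs using z s hs
    rw [this.deriv_eq]; simp

lemma ee_approx (ρ : ℝ → ℝ) (hρ : ContDiffOn ℝ 1 ρ (Icc 0 1)) (η : ℝ) (hη : 0 < η) :
    ∃ r : ℝ → ℝ, ContDiff ℝ 2 r ∧ ∀ x ∈ Icc (0:ℝ) 1, |r x - ρ x| ≤ η ∧
      |deriv r x - derivWithin ρ (Icc 0 1) x| ≤ η := by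
  have hu : UniqueDiffOn ℝ (Icc (0:ℝ) 1) := uniqueDiffOn_Icc zero_lt_one
  obtain ⟨P, hP⟩ := exists_polynomial_near_of_continuousOn 0 1 _
    (hρ.continuousOn_derivWithin hu le_rfl) η hη
  have cP : Continuous (fun x => P.eval x) := P.continuous
  let r : ℝ → ℝ := fun x => ρ 0 + ∫ y in (0:ℝ)..x, P.eval y
  have hr : ∀ x, HasDerivAt r (P.eval x) x := fun x =>
    (intervalIntegral.integral_hasDerivAt_right (cP.intervalIntegrable _ _)
      cP.stronglyMeasurable.stronglyMeasurableAtFilter cP.continuousAt).const_add _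
  have hr' : deriv r = fun x => P.eval x := funext fun x => (hr x).deriv
  refine ⟨r, ?_, ?_⟩
  · have : ContDiff ℝ (1 + 1) r := by
      rw [contDiff_succ_iff_deriv]
      refine ⟨fun x => (hr x).differentiableAt, by simp, ?_⟩
      rw [hr']; simpa using P.contDiff_aeval (𝕜 := ℝ) (n := 1)
    simpa [one_add_one_eq_two] using this
  · intro x hx
    refine ⟨?_, by rw [hr']; exact (hP x hx).le⟩
    have key := Convex.norm_image_sub_le_of_norm_hasDerivWithin_le
      (f := fun x => r x - ρ x) (s := Icc (0:ℝ) 1)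
      (f' := fun x => P.eval x - derivWithin ρ (Icc 0 1) x) (C := η) (x := 0) (y := x)
      (fun y hy => (hr y).hasDerivWithinAt.sub
        ((hρ.differentiableOn (by norm_num)) y hy).hasDerivWithinAt)
      (fun y hy => (hP y hy).le) (convex_Icc 0 1) (by simp) hx
    have r0 : r 0 = ρ 0 := by simp [r]
    simp only [r0, sub_self, sub_zero, Real.norm_eq_abs] at key
    rw [abs_of_nonneg hx.1] at key
    nlinarith [hx.2]

/-- bound of the entropy left-hand side -/
lemma ee_lhs (f q : ℝ → ℝ) (hf : ∀ y ∈ Icc (0:ℝ) 1, |f y| ≤ 1) (hq : ∀ y ∈ Icc (0:ℝ) 1, |q y| ≤ 1)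
    (u₀ : ℝ → ℝ) (hu₀ : ∀ x, u₀ x ∈ Icc (0:ℝ) 1) (u : ℝ × ℝ → ℝ) (hu : ∀ z, u z ∈ Icc (0:ℝ) 1)
    (ψ g G : ℝ → ℝ) (D L K M : ℝ) (hL : 0 < L) (hK : 0 ≤ K) (hD0 : 0 ≤ D)
    (hψ0 : ∀ t, 0 ≤ ψ t) (hψ1 : ∀ t, ψ t ≤ 1) (hD : ∀ t, |deriv ψ t| ≤ D)
    (hψL : ∀ t, L ≤ t → ψ t = 0 ∧ deriv ψ t = 0)
    (hg : ∀ x ∈ Ioo (0:ℝ) 1, |g x| ≤ K) (hG : ∀ x ∈ Ioo (0:ℝ) 1, |deriv g x| ≤ G x)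
    (hGi : IntegrableOn G (Ioo 0 1)) (hGM : ∫ x in Ioo (0:ℝ) 1, G x ≤ M) :
    (∫ x in Ioo (0 : ℝ) 1, f (u₀ x) * (ψ 0 * g x))
            + (∫ z in Ioi (0 : ℝ) ×ˢ Ioo (0 : ℝ) 1,
                (f (u z) * deriv (fun s => ψ s * g z.2) z.1
                  + q (u z) * deriv (fun y => ψ z.1 * g y) z.2)) ≤ K + L * (D * K + M) := by
  have h1 : (∫ x in Ioo (0 : ℝ) 1, f (u₀ x) * (ψ 0 * g x)) ≤ K := by
    refine (Real.le_norm_self _).trans ?_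
    have := norm_setIntegral_le_of_norm_le_const (μ := volume) (s := Ioo (0:ℝ) 1) (C := K)
      (f := fun x => f (u₀ x) * (ψ 0 * g x)) (by simp) (fun x hx => by
        rw [Real.norm_eq_abs, abs_mul, abs_mul, abs_of_nonneg (hψ0 0)]
        have a1 := hf _ (hu₀ x)
        have a2 : ψ 0 * |g x| ≤ K := by nlinarith [hg x hx, hψ0 0, hψ1 0, abs_nonneg (g x)]
        have a3 : 0 ≤ ψ 0 * |g x| := mul_nonneg (hψ0 0) (abs_nonneg _)
        nlinarith [abs_nonneg (f (u₀ x))])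
    simpa using this
  let h : ℝ → ℝ := (Ioo 0 L).indicator fun _ => 1
  have hh : ∫ t in Ioi (0:ℝ), h t = L := by
    rw [setIntegral_indicator measurableSet_Ioo]
    have : Ioi (0:ℝ) ∩ Ioo 0 L = Ioo 0 L := by ext; simp
    rw [this]; simp [hL.le]
  have hhi : IntegrableOn h (Ioi 0) := by
    apply Integrable.integrableOn
    rw [integrable_indicator_iff measurableSet_Ioo]
    exact integrableOn_const (by simp)
  have hcK : IntegrableOn (fun x => D * K + G x) (Ioo 0 1) :=
    (integrableOn_const (by simp)).add hGi
  have vp : (volume : Measure (ℝ × ℝ)) = (volume : Measure ℝ).prod volume := rfl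
  have h2 : (∫ z in Ioi (0 : ℝ) ×ˢ Ioo (0 : ℝ) 1,
                (f (u z) * deriv (fun s => ψ s * g z.2) z.1
                  + q (u z) * deriv (fun y => ψ z.1 * g y) z.2)) ≤ L * (D * K + M) := by
    have e : ∫ z in Ioi (0 : ℝ) ×ˢ Ioo (0 : ℝ) 1, h z.1 * (D * K + G z.2) ≤ L * (D * K + M) := by
      rw [vp, setIntegral_prod_mul h (fun x => D * K + G x), hh,
        integral_add (μ := volume.restrict (Ioo (0:ℝ) 1)) (f := fun _ => D * K) (g := G) (integrable_const _) hGi]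
      simp only [setIntegral_const, measureReal_def, Real.volume_Ioo]
      norm_num
      gcongr
    refine (Real.le_norm_self _).trans (le_trans (norm_integral_le_of_norm_le ?_ ?_) e)
    · rw [vp, ← Measure.prod_restrict]
      exact hhi.mul_prod hcK
    · rw [ae_restrict_iff' (measurableSet_Ioi.prod measurableSet_Ioo)]
      refine Eventually.of_forall fun z hz => ?_
      have hz2 : z.2 ∈ Ioo (0:ℝ) 1 := hz.2
      have hz1 : 0 < z.1 := hz.1
      have d1 : deriv (fun s => ψ s * g z.2) z.1 = deriv ψ z.1 * g z.2 := by simp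
      have d2 : deriv (fun y => ψ z.1 * g y) z.2 = ψ z.1 * deriv g z.2 := by simp
      rw [d1, d2]
      by_cases hzL : L ≤ z.1
      · have : h z.1 = 0 := by simp only [h]; rw [indicator_of_notMem]; simp; intro; exact hzL
        rw [(hψL _ hzL).1, (hψL _ hzL).2, this]; simp
      · push Not at hzL
        have : h z.1 = 1 := by simp only [h]; rw [indicator_of_mem]; exact ⟨hz1, hzL⟩
        rw [this, one_mul]
        refine (norm_add_le _ _).trans (add_le_add ?_ ?_)
        · rw [Real.norm_eq_abs, abs_mul, abs_mul]
          have a := mul_le_mul (hD z.1) (hg _ hz2) (abs_nonneg _) hD0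
          nlinarith [hf _ (hu z), abs_nonneg (f (u z)), mul_nonneg (abs_nonneg (deriv ψ z.1)) (abs_nonneg (g z.2))]
        · rw [Real.norm_eq_abs, abs_mul, abs_mul, abs_of_nonneg (hψ0 _)]
          have a : ψ z.1 * |deriv g z.2| ≤ G z.2 := by
            nlinarith [hG _ hz2, hψ0 z.1, hψ1 z.1, abs_nonneg (deriv g z.2)]
          nlinarith [hq _ (hu z), abs_nonneg (q (u z)), mul_nonneg (hψ0 z.1) (abs_nonneg (deriv g z.2))]
  linarith

lemma ee_apply (p : ℝ) (V ρ u₀ : ℝ → ℝ) (hu₀ : ∀ x, u₀ x ∈ Icc (0:ℝ) 1) (u : ℝ × ℝ → ℝ)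
    (hu : IsEntropySolution p V ρ u₀ u)
    (f q : ℝ → ℝ) (hfq : IsLaxPair p f q)
    (hf : ∀ y ∈ Icc (0:ℝ) 1, |f y| ≤ 1) (hq : ∀ y ∈ Icc (0:ℝ) 1, |q y| ≤ 1)
    (ψ g G : ℝ → ℝ) (D L K M : ℝ) (hL : 0 < L) (hK : 0 ≤ K) (hD0 : 0 ≤ D)
    (cψ : ContDiff ℝ 2 ψ) (sψ : HasCompactSupport ψ) (cg : ContDiff ℝ 2 g)
    (hg0 : ∀ x, 0 ≤ g x) (hg1 : ∀ x, x ∉ Ioo (0:ℝ) 1 → g x = 0)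
    (hψ0 : ∀ t, 0 ≤ ψ t) (hψ1 : ∀ t, ψ t ≤ 1) (hD : ∀ t, |deriv ψ t| ≤ D)
    (hψL : ∀ t, L ≤ t → ψ t = 0 ∧ deriv ψ t = 0)
    (hg : ∀ x ∈ Ioo (0:ℝ) 1, |g x| ≤ K) (hG : ∀ x ∈ Ioo (0:ℝ) 1, |deriv g x| ≤ G x)
    (hGi : IntegrableOn G (Ioo 0 1)) (hGM : ∫ x in Ioo (0:ℝ) 1, G x ≤ M) :
    ∫ z in Ioi (0 : ℝ) ×ˢ Ioo (0 : ℝ) 1,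
      deriv f (u z) * (V z.2 * (u z - ρ z.2)) * (ψ z.1 * g z.2) ≤ K + L * (D * K + M) := by
  have h1 := hu.2.2 f q hfq (fun z => ψ z.1 * g z.2)
    ((cψ.comp contDiff_fst).mul (cg.comp contDiff_snd))
    (HasCompactSupport.intro (sψ.isCompact.prod (isCompact_Icc (a := (0:ℝ)) (b := 1))) (by
      intro z hz
      by_cases h : z.1 ∈ tsupport ψ
      · have : z.2 ∉ Ioo (0:ℝ) 1 := fun h2 => hz ⟨h, Ioo_subset_Icc_self h2⟩
        simp [hg1 _ this]
      · simp [image_eq_zero_of_notMem_tsupport h]))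
    (fun z => mul_nonneg (hψ0 _) (hg0 _)) (fun z hz => by simp [hg1 _ hz])
  exact le_trans h1 (ee_lhs f q hf hq u₀ hu₀ u hu.2.1 ψ g G D L K M hL hK hD0 hψ0 hψ1 hD hψL hg hG
    hGi hGM)

lemma ee_int (F : ℝ × ℝ → ℝ) (L B : ℝ) (hL : 0 < L)
    (hF : AEStronglyMeasurable F (volume.restrict (Ioi (0 : ℝ) ×ˢ Ioo (0 : ℝ) 1)))
    (hB : ∀ z ∈ Ioi (0 : ℝ) ×ˢ Ioo (0 : ℝ) 1, |F z| ≤ B)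
    (h0 : ∀ z, L ≤ z.1 → F z = 0) :
    IntegrableOn F (Ioi (0 : ℝ) ×ˢ Ioo (0 : ℝ) 1) ∧
      ∫ z in Ioi (0 : ℝ) ×ˢ Ioo (0 : ℝ) 1, F z ≤ L * B := by
  let h : ℝ → ℝ := (Ioo 0 L).indicator fun _ => 1
  have hh : ∫ t in Ioi (0:ℝ), h t = L := by
    rw [setIntegral_indicator measurableSet_Ioo]
    have : Ioi (0:ℝ) ∩ Ioo 0 L = Ioo 0 L := by ext; simp
    rw [this]; simp [hL.le]
  have hhi : IntegrableOn h (Ioi 0) := by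
    apply Integrable.integrableOn
    rw [integrable_indicator_iff measurableSet_Ioo]
    exact integrableOn_const (by simp)
  have vp : (volume : Measure (ℝ × ℝ)) = (volume : Measure ℝ).prod volume := rfl
  have hi : IntegrableOn (fun z : ℝ × ℝ => h z.1 * B) (Ioi (0 : ℝ) ×ˢ Ioo (0 : ℝ) 1) := by
    unfold IntegrableOn
    rw [vp, ← Measure.prod_restrict]
    exact Integrable.mul_prod (g := fun _ : ℝ => B) hhi (integrable_const _)
  have hle : ∀ᵐ z ∂(volume.restrict (Ioi (0 : ℝ) ×ˢ Ioo (0 : ℝ) 1)), ‖F z‖ ≤ h z.1 * B := by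
    rw [ae_restrict_iff' (measurableSet_Ioi.prod measurableSet_Ioo)]
    refine Eventually.of_forall fun z hz => ?_
    have hz1 : 0 < z.1 := hz.1
    by_cases hzL : L ≤ z.1
    · have : h z.1 = 0 := by simp only [h]; rw [indicator_of_notMem]; simp; intro; exact hzL
      rw [h0 _ hzL, this]; simp
    · push Not at hzL
      have : h z.1 = 1 := by simp only [h]; rw [indicator_of_mem]; exact ⟨hz1, hzL⟩
      rw [this, one_mul]; exact hB z hz
  refine ⟨hi.mono' hF hle, ?_⟩
  refine (Real.le_norm_self _).trans ((norm_integral_le_of_norm_le hi hle).trans (le_of_eq ?_))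
  rw [vp, setIntegral_prod_mul h (fun _ => B), hh]
  simp

lemma ee_pair1 (p : ℝ) : IsLaxPair p (fun y => y ^ 2 / 2)
    (fun y => (2 * p - 1) * (y ^ 2 / 2 - 2 * y ^ 3 / 3)) ∧ deriv (fun y : ℝ => y ^ 2 / 2) = fun y => y := by
  have e : deriv (fun y : ℝ => y ^ 2 / 2) = fun y => y := by
    funext y; simp
  refine ⟨⟨by fun_prop, by fun_prop, ?_, ?_⟩, e⟩
  · intro y; rw [e]; simp
  · intro y; rw [e]
    have h1 : HasDerivAt (fun y : ℝ => (2 * p - 1) * (y ^ 2 / 2 - 2 * y ^ 3 / 3))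
        ((2 * p - 1) * (((2:ℕ) * y ^ 1) / 2 - 2 * ((3:ℕ) * y ^ 2) / 3)) y :=
      (((hasDerivAt_pow 2 y).div_const 2).sub (((hasDerivAt_pow 3 y).const_mul 2).div_const 3)).const_mul _
    have h2 : HasDerivAt (fluxJ p) ((2 * p - 1) * 1 * (1 - y) + (2 * p - 1) * y * (-1)) y :=
      ((hasDerivAt_id y).const_mul (2 * p - 1)).mul ((hasDerivAt_id y).const_sub 1)
    rw [h1.deriv, h2.deriv]; push_cast; ring

lemma ee_pair2 (p : ℝ) : IsLaxPair p (fun y => -y) (fun y => - fluxJ p y) ∧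
    deriv (fun y : ℝ => -y) = fun _ => -1 := by
  have e : deriv (fun y : ℝ => -y) = fun _ => -1 := by
    funext y; simp
  refine ⟨⟨by fun_prop, by unfold fluxJ; fun_prop, ?_, ?_⟩, e⟩
  · intro y; rw [e]; simp
  · intro y; rw [e]
    have h2 : HasDerivAt (fluxJ p) ((2 * p - 1) * 1 * (1 - y) + (2 * p - 1) * y * (-1)) y :=
      ((hasDerivAt_id y).const_mul (2 * p - 1)).mul ((hasDerivAt_id y).const_sub 1)
    rw [h2.fun_neg.deriv, h2.deriv]; ring

/-- every entropy solution satisfies the energy estimate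
`∫₀ᵀ ∫₀¹ V(x) (u(t,x) - ρ(x))² dx dt < ∞` for every `T > 0`. -/
theorem energy_estimate (p : ℝ) (hp : p ∈ Ioc (1 / 2 : ℝ) 1)
    (V ρ : ℝ → ℝ)
    (hV : ContDiffOn ℝ 1 V (Ioo 0 1)) (hVpos : ∀ x ∈ Ioo (0 : ℝ) 1, 0 < V x)
    (hρ : ContDiffOn ℝ 1 ρ (Icc 0 1)) (hρmem : ∀ x ∈ Icc (0 : ℝ) 1, ρ x ∈ Ioo (0 : ℝ) 1)
    (u₀ : ℝ → ℝ) (hu₀ : Measurable u₀) (hu₀mem : ∀ x, u₀ x ∈ Icc (0 : ℝ) 1)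
    (u : ℝ × ℝ → ℝ) (hu : IsEntropySolution p V ρ u₀ u) :
    ∀ T > 0, (∫⁻ z in Ioo (0 : ℝ) T ×ˢ Ioo (0 : ℝ) 1,
      ENNReal.ofReal (V z.2 * (u z - ρ z.2) ^ 2)) < ⊤ := by
  intro T hT
  obtain ⟨ψ, D, cψ, sψ, hψ0, hψ1, hψT, hD0, hD, hψL⟩ := ee_time T hT
  have hL : 0 < T + 2 := by linarith
  generalize T + 2 = L at hψL hL
  have hsol := hu
  obtain ⟨hum, hur, -⟩ := hu
  have hρc : ContinuousOn ρ (Icc 0 1) := hρ.continuousOn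
  obtain ⟨x₀, hx₀, hmin⟩ := isCompact_Icc.exists_isMinOn (nonempty_Icc.2 zero_le_one) hρc
  have hc : 0 < ρ x₀ := (hρmem x₀ hx₀).1
  obtain ⟨R, hR⟩ := isCompact_Icc.exists_bound_of_continuousOn
    (hρ.continuousOn_derivWithin (uniqueDiffOn_Icc zero_lt_one) le_rfl)
  have hDm : MeasurableSet (Ioi (0 : ℝ) ×ˢ Ioo (0 : ℝ) 1) := measurableSet_Ioi.prod measurableSet_Ioo
  have mV : AEStronglyMeasurable (fun z : ℝ × ℝ => V z.2)
      (volume.restrict (Ioi (0 : ℝ) ×ˢ Ioo (0 : ℝ) 1)) :=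
    (hV.continuousOn.comp continuous_snd.continuousOn (fun z hz => hz.2)).aestronglyMeasurable hDm
  have mρ : AEStronglyMeasurable (fun z : ℝ × ℝ => ρ z.2)
      (volume.restrict (Ioi (0 : ℝ) ×ˢ Ioo (0 : ℝ) 1)) :=
    (hρc.comp continuous_snd.continuousOn
      (fun z hz => Ioo_subset_Icc_self hz.2)).aestronglyMeasurable hDm
  have mu : AEStronglyMeasurable u (volume.restrict (Ioi (0 : ℝ) ×ˢ Ioo (0 : ℝ) 1)) :=
    hum.aestronglyMeasurable
  have mψ : AEStronglyMeasurable (fun z : ℝ × ℝ => ψ z.1)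
      (volume.restrict (Ioi (0 : ℝ) ×ˢ Ioo (0 : ℝ) 1)) :=
    (cψ.continuous.comp continuous_fst).aestronglyMeasurable
  have p1 : 0 < 2 * p - 1 := by linarith [hp.1]
  have p2 : 2 * p - 1 ≤ 1 := by linarith [hp.2]
  have key : ∀ a : ℝ, 0 < a →
      ∫⁻ z in Ioo (0 : ℝ) T ×ˢ Ioo (2 / a) (1 - 2 / a), ENNReal.ofReal (V z.2 * (u z - ρ z.2) ^ 2)
      ≤ ENNReal.ofReal ((1 + L * (D * 1 + 2)) + (2 + L * (D * 2 + (R + 5))) + L * 1) := by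
    intro a ha
    obtain ⟨χ, G, cχ, hχ0, hχ1, hχe, hχz, cG, hG, hGI⟩ := ee_cutoff a ha
    have ia : 0 < 1 / a := by positivity
    have hsub : Icc (1 / a) (1 - 1 / a) ⊆ Ioo (0:ℝ) 1 := fun x hx =>
      ⟨by linarith [hx.1], by linarith [hx.2]⟩
    have hχo : ∀ x, x ∉ Ioo (0:ℝ) 1 → χ x = 0 := fun x hx => hχz x (fun h => hx (hsub h))
    obtain ⟨B', hB'⟩ := isCompact_Icc.exists_bound_of_continuousOn (hV.continuousOn.mono hsub)
    obtain ⟨B, hB0, hB⟩ : ∃ B : ℝ, 0 ≤ B ∧ ∀ x ∈ Ioo (0:ℝ) 1, |V x * χ x| ≤ B := by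
      refine ⟨max B' 0, le_max_right _ _, fun x hx => ?_⟩
      by_cases h : x ∈ Icc (1 / a) (1 - 1 / a)
      · rw [abs_mul, abs_of_nonneg (hχ0 x)]
        have := hB' x h
        rw [Real.norm_eq_abs] at this
        have := le_max_left B' 0
        nlinarith [hχ0 x, hχ1 x, abs_nonneg (V x)]
      · rw [hχz x h]; simp
    obtain ⟨η, hη, η1, η2, η3⟩ : ∃ η : ℝ, 0 < η ∧ η ≤ ρ x₀ ∧ η ≤ 1 ∧ B * η ≤ 1 := by
      refine ⟨min (ρ x₀) (1 / (B + 1)), by positivity, min_le_left _ _, ?_, ?_⟩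
      · refine (min_le_right _ _).trans ?_
        rw [div_le_one (by positivity)]; linarith
      · refine (mul_le_mul_of_nonneg_left (min_le_right _ _) hB0).trans ?_
        rw [mul_one_div, div_le_one (by positivity)]; linarith
    obtain ⟨r, cr, hr⟩ := ee_approx ρ hρ η hη
    have cr' : Differentiable ℝ r := cr.differentiable (by norm_num)
    have cχ' : Differentiable ℝ χ := cχ.differentiable (by norm_num)
    have mχ : AEStronglyMeasurable (fun z : ℝ × ℝ => χ z.2)
        (volume.restrict (Ioi (0 : ℝ) ×ˢ Ioo (0 : ℝ) 1)) :=
      (cχ.continuous.comp continuous_snd).aestronglyMeasurable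
    have mr : AEStronglyMeasurable (fun z : ℝ × ℝ => r z.2)
        (volume.restrict (Ioi (0 : ℝ) ×ˢ Ioo (0 : ℝ) 1)) :=
      (cr.continuous.comp continuous_snd).aestronglyMeasurable
    have hr0 : ∀ x ∈ Icc (0:ℝ) 1, 0 ≤ r x := fun x hx => by
      have h1 := (abs_le.1 (hr x hx).1).1
      have h2 : ρ x₀ ≤ ρ x := hmin hx
      linarith
    have hr2 : ∀ x ∈ Icc (0:ℝ) 1, |r x| ≤ 2 := fun x hx => by
      rw [abs_of_nonneg (hr0 x hx)]
      have h1 := (abs_le.1 (hr x hx).1).2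
      linarith [(hρmem x hx).2]
    have hr' : ∀ x ∈ Icc (0:ℝ) 1, |deriv r x| ≤ R + 1 := fun x hx => by
      have h1 := (hr x hx).2
      have h2 := hR x hx
      rw [Real.norm_eq_abs] at h2
      rw [abs_le] at h1 h2 ⊢
      constructor <;> linarith
    have hGi : IntegrableOn G (Ioo 0 1) :=
      (cG.integrableOn_Icc (a := 0) (b := 1)).mono_set Ioo_subset_Icc_self
    have I1 := ee_apply p V ρ u₀ hu₀mem u hsol _ _ (ee_pair1 p).1
      (fun y hy => by
        rw [abs_le]; constructor <;> nlinarith [hy.1, hy.2])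
      (fun y hy => by
        have h3 : y ^ 3 ≤ 1 := pow_le_one₀ hy.1 hy.2
        have h2 : y ^ 2 ≤ 1 := pow_le_one₀ hy.1 hy.2
        have h30 : 0 ≤ y ^ 3 := pow_nonneg hy.1 3
        have h20 : 0 ≤ y ^ 2 := pow_nonneg hy.1 2
        rw [abs_mul, abs_of_pos p1]
        have : |y ^ 2 / 2 - 2 * y ^ 3 / 3| ≤ 1 := by
          rw [abs_le]; constructor <;> linarith
        exact mul_le_one₀ p2 (abs_nonneg _) this)
      ψ χ G D L 1 2 hL zero_le_one hD0 cψ sψ cχ hχ0 hχo hψ0 hψ1 hD hψL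
      (fun x _ => by rw [abs_of_nonneg (hχ0 x)]; exact hχ1 x) (fun x _ => hG x) hGi hGI
    have I2 := ee_apply p V ρ u₀ hu₀mem u hsol _ _ (ee_pair2 p).1
      (fun y hy => by
        rw [abs_neg, abs_of_nonneg hy.1]; exact hy.2)
      (fun y hy => by
        have h0 : 0 ≤ y * (1 - y) := mul_nonneg hy.1 (by linarith [hy.2])
        have h1 : y * (1 - y) ≤ 1 := by nlinarith [hy.1, hy.2]
        rw [abs_neg, fluxJ, mul_assoc, abs_mul, abs_of_pos p1, abs_of_nonneg h0]
        exact mul_le_one₀ p2 h0 h1)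
      ψ (fun x => r x * χ x) (fun x => (R + 1) + 2 * G x) D L 2 (R + 5) hL zero_le_two hD0 cψ sψ
      (cr.mul cχ)
      (fun x => by
        by_cases hx : x ∈ Ioo (0:ℝ) 1
        · exact mul_nonneg (hr0 x (Ioo_subset_Icc_self hx)) (hχ0 x)
        · simp [hχo x hx])
      (fun x hx => by simp [hχo x hx]) hψ0 hψ1 hD hψL
      (fun x hx => by
        rw [abs_mul, abs_of_nonneg (hχ0 x)]
        nlinarith [hr2 x (Ioo_subset_Icc_self hx), hχ0 x, hχ1 x, abs_nonneg (r x)])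
      (fun x hx => by
        have hx' := Ioo_subset_Icc_self hx
        have : deriv (fun x => r x * χ x) x = deriv r x * χ x + r x * deriv χ x :=
          ((cr' x).hasDerivAt.mul (cχ' x).hasDerivAt).deriv
        rw [this]
        refine (abs_add_le _ _).trans (add_le_add ?_ ?_)
        · rw [abs_mul, abs_of_nonneg (hχ0 x)]
          nlinarith [hr' x hx', hχ0 x, hχ1 x, abs_nonneg (deriv r x)]
        · rw [abs_mul]
          exact mul_le_mul (hr2 x hx') (hG x) (abs_nonneg _) zero_le_two)
      ((integrableOn_const (by simp)).add (hGi.const_mul 2))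
      (by
        rw [integral_add (μ := volume.restrict (Ioo (0:ℝ) 1)) (f := fun _ => R + 1)
          (g := fun x => 2 * G x) (integrable_const _) (hGi.const_mul 2), integral_const_mul]
        simp only [setIntegral_const, measureReal_def, Real.volume_Ioo]
        norm_num
        linarith)
    rw [(ee_pair1 p).2] at I1
    rw [(ee_pair2 p).2] at I2
    have huρ : ∀ z ∈ Ioi (0 : ℝ) ×ˢ Ioo (0 : ℝ) 1, |u z - ρ z.2| ≤ 1 := fun z hz => by
      have h1 := hur z
      have h2 := hρmem z.2 (Ioo_subset_Icc_self hz.2)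
      rw [abs_le]; constructor <;> linarith [h1.1, h1.2, h2.1, h2.2]
    -- the common factor, bounded by `B`
    have hW : ∀ z ∈ Ioi (0 : ℝ) ×ˢ Ioo (0 : ℝ) 1,
        |V z.2 * (u z - ρ z.2) * (ψ z.1 * χ z.2)| ≤ B := fun z hz => by
      have e : V z.2 * (u z - ρ z.2) * (ψ z.1 * χ z.2)
        = (V z.2 * χ z.2) * ((u z - ρ z.2) * ψ z.1) := by ring
      rw [e, abs_mul, abs_mul (u z - ρ z.2), abs_of_nonneg (hψ0 _)]
      have h1 : |u z - ρ z.2| * ψ z.1 ≤ 1 := mul_le_one₀ (huρ z hz) (hψ0 _) (hψ1 _)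
      exact (mul_le_mul (hB _ hz.2) h1 (mul_nonneg (abs_nonneg _) (hψ0 _)) hB0).trans
        (by rw [mul_one])
    have gen : ∀ (h : ℝ × ℝ → ℝ) (K : ℝ), 0 ≤ K →
        AEStronglyMeasurable h (volume.restrict (Ioi (0 : ℝ) ×ˢ Ioo (0 : ℝ) 1)) →
        (∀ z ∈ Ioi (0 : ℝ) ×ˢ Ioo (0 : ℝ) 1, |h z| ≤ K) →
        IntegrableOn (fun z => h z * (V z.2 * (u z - ρ z.2) * (ψ z.1 * χ z.2)))
          (Ioi (0 : ℝ) ×ˢ Ioo (0 : ℝ) 1) ∧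
        ∫ z in Ioi (0 : ℝ) ×ˢ Ioo (0 : ℝ) 1,
          h z * (V z.2 * (u z - ρ z.2) * (ψ z.1 * χ z.2)) ≤ L * (K * B) := by
      intro h K hK hm hb
      refine ee_int _ L (K * B) hL (hm.mul ((mV.mul (mu.sub mρ)).mul (mψ.mul mχ))) ?_ ?_
      · intro z hz
        rw [abs_mul]
        exact mul_le_mul (hb z hz) (hW z hz) (abs_nonneg _) hK
      · intro z hz
        simp [(hψL _ hz).1]
    have G1 := gen u 1 zero_le_one mu (fun z _ => by
      rw [abs_of_nonneg (hur z).1]; exact (hur z).2)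
    have G2 := gen (fun z => - r z.2) 2 zero_le_two mr.neg (fun z hz => by
      rw [abs_neg]; exact hr2 _ (Ioo_subset_Icc_self hz.2))
    have G3 := gen (fun z => r z.2 - ρ z.2) η hη.le (mr.sub mρ)
      (fun z hz => (hr _ (Ioo_subset_Icc_self hz.2)).1)
    have G4 := gen (fun z => u z - ρ z.2) 1 zero_le_one (mu.sub mρ) huρ
    have tot : ∫ z in Ioi (0 : ℝ) ×ˢ Ioo (0 : ℝ) 1,
        (u z - ρ z.2) * (V z.2 * (u z - ρ z.2) * (ψ z.1 * χ z.2)) ≤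
        (1 + L * (D * 1 + 2)) + (2 + L * (D * 2 + (R + 5))) + L * 1 := by
      have e : (fun z : ℝ × ℝ => (u z - ρ z.2) * (V z.2 * (u z - ρ z.2) * (ψ z.1 * χ z.2))) =
          fun z => (u z * (V z.2 * (u z - ρ z.2) * (ψ z.1 * χ z.2)) +
            (- r z.2) * (V z.2 * (u z - ρ z.2) * (ψ z.1 * χ z.2))) +
            (r z.2 - ρ z.2) * (V z.2 * (u z - ρ z.2) * (ψ z.1 * χ z.2)) := by
        funext z; ring
      have G12 : IntegrableOn (fun z : ℝ × ℝ => u z * (V z.2 * (u z - ρ z.2) * (ψ z.1 * χ z.2)) +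
            (- r z.2) * (V z.2 * (u z - ρ z.2) * (ψ z.1 * χ z.2)))
            (Ioi (0 : ℝ) ×ˢ Ioo (0 : ℝ) 1) := G1.1.add G2.1
      rw [e, integral_add G12 G3.1, integral_add G1.1 G2.1]
      refine add_le_add (add_le_add ?_ ?_) ?_
      · refine le_trans (le_of_eq ?_) I1
        congr 1; funext z; ring
      · refine le_trans (le_of_eq ?_) I2
        congr 1; funext z; ring
      · refine G3.2.trans ?_
        have : η * B ≤ 1 := by linarith
        gcongr
    have nonneg : ∀ z ∈ Ioi (0 : ℝ) ×ˢ Ioo (0 : ℝ) 1,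
        0 ≤ (u z - ρ z.2) * (V z.2 * (u z - ρ z.2) * (ψ z.1 * χ z.2)) := fun z hz => by
      have e : (u z - ρ z.2) * (V z.2 * (u z - ρ z.2) * (ψ z.1 * χ z.2)) =
        V z.2 * (u z - ρ z.2) ^ 2 * (ψ z.1 * χ z.2) := by ring
      rw [e]
      exact mul_nonneg (mul_nonneg (hVpos _ hz.2).le (sq_nonneg _)) (mul_nonneg (hψ0 _) (hχ0 _))
    have i2 : 0 < 2 / a := by positivity
    calc ∫⁻ z in Ioo (0 : ℝ) T ×ˢ Ioo (2 / a) (1 - 2 / a),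
          ENNReal.ofReal (V z.2 * (u z - ρ z.2) ^ 2)
        ≤ ∫⁻ z in Ioo (0 : ℝ) T ×ˢ Ioo (2 / a) (1 - 2 / a), ENNReal.ofReal
            ((u z - ρ z.2) * (V z.2 * (u z - ρ z.2) * (ψ z.1 * χ z.2))) := by
          refine setLIntegral_mono' (measurableSet_Ioo.prod measurableSet_Ioo) fun z hz => ?_
          rw [hψT _ hz.1, hχe _ hz.2.1.le hz.2.2.le]
          apply le_of_eq; congr 1; ring
      _ ≤ ∫⁻ z in Ioi (0 : ℝ) ×ˢ Ioo (0 : ℝ) 1, ENNReal.ofReal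
            ((u z - ρ z.2) * (V z.2 * (u z - ρ z.2) * (ψ z.1 * χ z.2))) := by
          refine lintegral_mono_set (prod_mono Ioo_subset_Ioi_self ?_)
          exact Ioo_subset_Ioo i2.le (by linarith)
      _ = ENNReal.ofReal (∫ z in Ioi (0 : ℝ) ×ˢ Ioo (0 : ℝ) 1,
            (u z - ρ z.2) * (V z.2 * (u z - ρ z.2) * (ψ z.1 * χ z.2))) := by
          rw [ofReal_integral_eq_lintegral_ofReal G4.1]
          exact (ae_restrict_iff' hDm).2 (Eventually.of_forall nonneg)
      _ ≤ _ := ENNReal.ofReal_le_ofReal tot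
  have hU : Ioo (0 : ℝ) T ×ˢ Ioo (0 : ℝ) 1 =
      ⋃ n : ℕ, Ioo (0 : ℝ) T ×ˢ Ioo (2 / ((n:ℝ) + 1)) (1 - 2 / ((n:ℝ) + 1)) := by
    ext z
    simp only [mem_iUnion, mem_prod, mem_Ioo]
    constructor
    · rintro ⟨h1, h2, h3⟩
      obtain ⟨n, hn⟩ := exists_nat_one_div_lt
        (show 0 < min (z.2 / 2) ((1 - z.2) / 2) from lt_min (by linarith) (by linarith))
      have a1 := hn.trans_le (min_le_left _ _)
      have a2 := hn.trans_le (min_le_right _ _)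
      have a3 : 2 / ((n:ℝ) + 1) = 2 * (1 / ((n:ℝ) + 1)) := by ring
      refine ⟨n, h1, ?_, ?_⟩ <;> rw [a3] <;> linarith
    · rintro ⟨n, h1, h2, h3⟩
      have : 0 < 2 / ((n:ℝ) + 1) := by positivity
      exact ⟨h1, by linarith, by linarith⟩
  rw [hU, setLIntegral_iUnion_of_directed]
  · exact lt_of_le_of_lt (iSup_le fun n => key _ (by positivity)) ENNReal.ofReal_lt_top
  · apply Monotone.directed_le
    intro m n hmn
    have : 2 / ((n:ℝ) + 1) ≤ 2 / ((m:ℝ) + 1) := by gcongr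
    exact prod_mono le_rfl (Ioo_subset_Ioo this (by linarith))
end

section
/- Assume V ∈ C¹((0,1);(0,∞)) satisfies Condition (V1) and ρ ∈ C¹([0,1];(0,1)) satisfies Condition (V2). Then for any measurable u₀ : (0,1) → [0,1] there exists at most one entropy solution: if u₁, u₂ : (0,∞)×(0,1) → [0,1] are both entropy solutions of ∂_t u + ∂_x J(u) + V(x)(u − ρ(x)) = 0 with the same initial datum u₀, then u₁ = u₂ almost everywhere on (0,∞)×(0,1). -/
open MeasureTheory Set Filter Topology

/-- Condition (V1): `limsup_{y→0+} y⁻² ∫₀^y [1/V(x) + 1/V(1−x)] dx < ∞`. -/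
def CondV1 (V : ℝ → ℝ) : Prop :=
  Filter.limsup
    (fun y : ℝ => ENNReal.ofReal (1 / y ^ 2) *
      ∫⁻ x in Ioo (0 : ℝ) y, ENNReal.ofReal (1 / V x + 1 / V (1 - x)))
    (𝓝[>] (0 : ℝ)) < ⊤

/-- Condition (V2):
`lim_{y→0+} [∫₀^y V(x)(ρ(x)−ρ(0))² dx + ∫_{1−y}^1 V(x)(ρ(x)−ρ(1))² dx] = 0`. -/
def CondV2 (V ρ : ℝ → ℝ) : Prop :=
  Filter.Tendsto
    (fun y : ℝ =>
      (∫⁻ x in Ioo (0 : ℝ) y, ENNReal.ofReal (V x * (ρ x - ρ 0) ^ 2)) +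
      ∫⁻ x in Ioo (1 - y) (1 : ℝ), ENNReal.ofReal (V x * (ρ x - ρ 1) ^ 2))
    (𝓝[>] (0 : ℝ)) (𝓝 0)


open MeasureTheory Set Filter Topology

namespace ES

/-- Extension of a solution by its initial datum to nonpositive times. -/
noncomputable def uext (u₀ : ℝ → ℝ) (u : ℝ × ℝ → ℝ) : ℝ × ℝ → ℝ :=
  fun z => if 0 < z.1 then u z else u₀ z.2

/-- Heaviside function. -/
noncomputable def Hv (t : ℝ) : ℝ := if 0 < t then 1 else 0

lemma measurable_Hv : Measurable Hv :=
  Measurable.ite measurableSet_Ioi measurable_const measurable_const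

lemma Hv_nonneg (t : ℝ) : 0 ≤ Hv t := by unfold Hv; split_ifs <;> norm_num
lemma Hv_le_one (t : ℝ) : Hv t ≤ 1 := by unfold Hv; split_ifs <;> norm_num
lemma abs_Hv_le (t : ℝ) : |Hv t| ≤ 1 := by
  rw [abs_of_nonneg (Hv_nonneg t)]; exact Hv_le_one t

lemma measurable_uext {u₀ : ℝ → ℝ} {u : ℝ × ℝ → ℝ} (h0 : Measurable u₀) (h : Measurable u) :
    Measurable (uext u₀ u) :=
  Measurable.ite (measurable_fst measurableSet_Ioi) h (h0.comp measurable_snd)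

lemma uext_mem {u₀ : ℝ → ℝ} {u : ℝ × ℝ → ℝ} (h0 : ∀ x, u₀ x ∈ Icc (0 : ℝ) 1)
    (h : ∀ z, u z ∈ Icc (0 : ℝ) 1) (z : ℝ × ℝ) : uext u₀ u z ∈ Icc (0 : ℝ) 1 := by
  unfold uext; split_ifs
  · exact h z
  · exact h0 _

/-- Time test functions. -/
structure TT (g : ℝ → ℝ) : Prop where
  cd : ContDiff ℝ 2 g
  cs : HasCompactSupport g
  nn : ∀ t, 0 ≤ g t

/-- Space test functions. -/
structure TX (h : ℝ → ℝ) : Prop extends TT h where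
  sup : tsupport h ⊆ Ioo 0 1

lemma TT.bounds {g : ℝ → ℝ} (hg : TT g) : ∃ M R : ℝ, 0 < M ∧ 0 < R ∧ (∀ t, |g t| ≤ M) ∧
    (∀ t, |deriv g t| ≤ M) ∧ ∀ t, t ∉ Icc (-R) R → g t = 0 ∧ deriv g t = 0 := by
  have hc := hg.cd.continuous
  have hc' : Continuous (deriv g) := hg.cd.continuous_deriv (by norm_num)
  obtain ⟨M1, h1⟩ := hg.cs.exists_bound_of_continuous hc
  obtain ⟨M2, h2⟩ := hg.cs.deriv.exists_bound_of_continuous hc'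
  obtain ⟨R, hR⟩ := hg.cs.isCompact.isBounded.subset_closedBall (0 : ℝ)
  refine ⟨max 1 (max M1 M2), max 1 R, by positivity, by positivity, ?_, ?_, ?_⟩
  · intro t; exact (h1 t).trans (by simp)
  · intro t; exact (h2 t).trans (by simp)
  · intro t ht
    have : t ∉ tsupport g := by
      intro h
      apply ht
      have := hR h
      rw [Metric.mem_closedBall, dist_zero_right, Real.norm_eq_abs] at this
      rw [mem_Icc, ← abs_le]
      exact this.trans (le_max_right _ _)
    refine ⟨image_eq_zero_of_notMem_tsupport this, ?_⟩
    exact image_eq_zero_of_notMem_tsupport (fun h => this (tsupport_deriv_subset h))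

lemma TX.exists_Icc {h : ℝ → ℝ} (hh : TX h) : ∃ a b : ℝ, 0 < a ∧ b < 1 ∧ a ≤ b ∧
    (∀ x, x ∉ Icc a b → h x = 0 ∧ deriv h x = 0) := by
  rcases (tsupport h).eq_empty_or_nonempty with he | hne
  · refine ⟨1/2, 1/2, by norm_num, by norm_num, le_rfl, fun x _ => ?_⟩
    have : x ∉ tsupport h := by simp [he]
    exact ⟨image_eq_zero_of_notMem_tsupport this,
      image_eq_zero_of_notMem_tsupport (fun h => this (tsupport_deriv_subset h))⟩
  · obtain ⟨a, ha, ha'⟩ := hh.cs.isCompact.exists_isLeast hne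
    obtain ⟨b, hb, hb'⟩ := hh.cs.isCompact.exists_isGreatest hne
    refine ⟨a, b, (hh.sup ha).1, (hh.sup hb).2, ha' hb, fun x hx => ?_⟩
    have : x ∉ tsupport h := fun h => hx ⟨ha' h, hb' h⟩
    exact ⟨image_eq_zero_of_notMem_tsupport this,
      image_eq_zero_of_notMem_tsupport (fun h => this (tsupport_deriv_subset h))⟩

lemma TX.of_Icc {h : ℝ → ℝ} {a b : ℝ} (h1 : ContDiff ℝ 2 h) (h2 : ∀ x, 0 ≤ h x)
    (ha : 0 < a) (hb : b < 1) (h0 : ∀ x, x ∉ Icc a b → h x = 0) : TX h := by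
  have hs : tsupport h ⊆ Icc a b :=
    closure_minimal (fun x hx => by_contra fun hn => hx (h0 x hn)) isClosed_Icc
  refine ⟨⟨h1, HasCompactSupport.of_support_subset_isCompact isCompact_Icc
    ((subset_tsupport h).trans hs), h2⟩, hs.trans fun x hx => ⟨ha.trans_le hx.1, hx.2.trans_lt hb⟩⟩

lemma TT.of_Icc {h : ℝ → ℝ} {a b : ℝ} (h1 : ContDiff ℝ 2 h) (h2 : ∀ x, 0 ≤ h x)
    (h0 : ∀ x, x ∉ Icc a b → h x = 0) : TT h := by
  refine ⟨h1, HasCompactSupport.intro isCompact_Icc h0, h2⟩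

lemma integrable_of_bdd {X : Type*} [MeasurableSpace X] {μ : Measure X} {F : X → ℝ} {S : Set X}
    (hμ : μ S ≠ ⊤) (C : ℝ) (hF : Measurable F) (h0 : ∀ z, z ∉ S → F z = 0)
    (hC : ∀ z, |F z| ≤ C) : Integrable F μ := by
  rw [← integrableOn_iff_integrable_of_support_subset (s := S)
    (fun z hz => by_contra fun hn => hz (h0 z hn))]
  exact Measure.integrableOn_of_bounded hμ hF.aestronglyMeasurable (M := C)
    (Eventually.of_forall fun z => hC z)

/-- hypotheses on the coefficients -/
structure Coef (V ρ : ℝ → ℝ) : Prop where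
  mV : Measurable V
  nV : ∀ x, 0 ≤ V x
  pV : ∀ x ∈ Ioo (0 : ℝ) 1, 0 < V x
  cV : ContinuousOn V (Ioo 0 1)
  mρ : Measurable ρ
  bρ : ∀ x, ρ x ∈ Icc (0 : ℝ) 1
  cρ : ContinuousOn ρ (Icc 0 1)

lemma Coef.bdd {V ρ : ℝ → ℝ} (hc : Coef V ρ) {a b : ℝ} (ha : 0 < a) (hb : b < 1) :
    ∃ M, 0 < M ∧ ∀ x ∈ Icc a b, V x ≤ M := by
  obtain ⟨M, hM⟩ := (isCompact_Icc (a := a) (b := b)).exists_bound_of_continuousOn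
    (hc.cV.mono fun x hx => ⟨ha.trans_le hx.1, hx.2.trans_lt hb⟩)
  exact ⟨max 1 M, by positivity, fun x hx => (le_abs_self _).trans ((hM x hx).trans (by simp))⟩

lemma Coef.mul_bdd {V ρ h : ℝ → ℝ} (hc : Coef V ρ) (hh : TX h) :
    ∃ M, 0 < M ∧ ∀ x, |V x * h x| ≤ M := by
  obtain ⟨a, b, ha, hb, -, h0⟩ := hh.exists_Icc
  obtain ⟨M, R, hM, -, h1, -⟩ := hh.bounds
  obtain ⟨N, hN, h2⟩ := hc.bdd ha hb
  refine ⟨N * M, by positivity, fun x => ?_⟩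
  by_cases hx : x ∈ Icc a b
  · rw [abs_mul, abs_of_nonneg (hc.nV x)]
    exact mul_le_mul (h2 x hx) (h1 x) (abs_nonneg _) hN.le
  · rw [(h0 x hx).1]; simp; positivity

lemma TX.zero_of_notMem {h : ℝ → ℝ} (hh : TX h) {x : ℝ} (hx : x ∉ Ioo (0:ℝ) 1) :
    h x = 0 ∧ deriv h x = 0 := by
  have : x ∉ tsupport h := fun h => hx (hh.sup h)
  exact ⟨image_eq_zero_of_notMem_tsupport this,
      image_eq_zero_of_notMem_tsupport (fun h => this (tsupport_deriv_subset h))⟩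

/-- kernel-based entropies -/
lemma laxPair {p k : ℝ} {s : ℝ → ℝ} (hs : ContDiff ℝ 1 s) (hs' : Monotone s) :
    IsLaxPair p (fun u => ∫ v in k..u, s v) (fun u => ∫ v in k..u, deriv (fluxJ p) v * s v) ∧
    deriv (fun u => ∫ v in k..u, s v) = s := by
  have hJ : ContDiff ℝ 1 (fun v => deriv (fluxJ p) v * s v) := by
    have : ContDiff ℝ 2 (fluxJ p) := by unfold fluxJ; fun_prop
    have : ContDiff ℝ 1 (deriv (fluxJ p)) := by
      exact ((contDiff_succ_iff_deriv (n := 1)).1 this).2.2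
    exact this.mul hs
  have key : ∀ r : ℝ → ℝ, ContDiff ℝ 1 r → (∀ u, HasDerivAt (fun u => ∫ v in k..u, r v) (r u) u) := by
    intro r hr u
    exact intervalIntegral.integral_hasDerivAt_right (hr.continuous.intervalIntegrable _ _)
      (hr.continuous.stronglyMeasurableAtFilter _ _) hr.continuous.continuousAt
  have keyd : ∀ r : ℝ → ℝ, ContDiff ℝ 1 r → deriv (fun u => ∫ v in k..u, r v) = r :=
    fun r hr => funext fun u => (key r hr u).deriv
  have key2 : ∀ r : ℝ → ℝ, ContDiff ℝ 1 r → ContDiff ℝ 2 (fun u => ∫ v in k..u, r v) := by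
    intro r hr
    refine (contDiff_succ_iff_deriv (n := 1)).2 ⟨fun u => (key r hr u).differentiableAt, by simp, ?_⟩
    rw [keyd r hr]; exact hr
  refine ⟨⟨key2 _ hs, key2 _ hJ, fun u => ?_, fun u => ?_⟩, keyd _ hs⟩
  · rw [keyd s hs]; exact hs'.deriv_nonneg
  · rw [keyd _ hJ, keyd _ hs]

lemma deriv_fluxJ (p v : ℝ) : deriv (fluxJ p) v = (2 * p - 1) * (1 - 2 * v) := by
  have : HasDerivAt (fluxJ p) ((2 * p - 1) * (1 - 2 * v)) v := by
    have h := ((hasDerivAt_id v).const_mul (2*p-1)).mul ((hasDerivAt_id v).const_sub 1)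
    refine h.congr_deriv ?_
    simp; ring
  exact this.deriv

lemma abs_deriv_fluxJ_le {p v : ℝ} (hp : p ∈ Ioc (1/2 : ℝ) 1) (hv : v ∈ Icc (0:ℝ) 1) :
    |deriv (fluxJ p) v| ≤ 1 := by
  rw [deriv_fluxJ, abs_mul]
  have h1 : |2 * p - 1| ≤ 1 := by rw [abs_le]; constructor <;> linarith [hp.1, hp.2]
  have h2 : |1 - 2 * v| ≤ 1 := by rw [abs_le]; constructor <;> linarith [hv.1, hv.2]
  calc _ ≤ (1:ℝ) * 1 := mul_le_mul h1 h2 (abs_nonneg _) zero_le_one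
    _ = 1 := one_mul 1

lemma abs_int_le {k u : ℝ} (hk : k ∈ Icc (0:ℝ) 1) (hu : u ∈ Icc (0:ℝ) 1) {r : ℝ → ℝ}
    (hr : ∀ v ∈ Icc (0:ℝ) 1, |r v| ≤ 1) : |∫ v in k..u, r v| ≤ 1 := by
  have := intervalIntegral.norm_integral_le_of_norm_le_const (a := k) (b := u) (f := r) (C := 1) ?_
  · refine (this.trans ?_)
    rw [one_mul, abs_le]; constructor <;> linarith [hk.1, hk.2, hu.1, hu.2]
  · intro v hv
    apply hr
    have := uIoc_subset_uIcc hv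
    exact (uIcc_subset_Icc hk hu) this

end ES

open MeasureTheory Set Filter Topology

namespace ES

lemma int_prod {A : ℝ × ℝ → ℝ} {g h : ℝ → ℝ} {C M R N : ℝ} (mA : Measurable A) (hA : ∀ z, |A z| ≤ C)
    (mg : Measurable g) (hg : ∀ t, |g t| ≤ M) (hg0 : ∀ t, t ∉ Icc (-R) R → g t = 0)
    (mh : Measurable h) (hh : ∀ t, |h t| ≤ N) (hh0 : ∀ t, t ∉ Icc (0:ℝ) 1 → h t = 0) :
    Integrable (fun z : ℝ × ℝ => A z * (g z.1 * h z.2)) := by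
  refine integrable_of_bdd (S := Icc (-R) R ×ˢ Icc (0:ℝ) 1) ?_ (C * (M * N)) ?_ ?_ ?_
  · rw [Measure.volume_eq_prod, Measure.prod_prod]
    simp [Real.volume_Icc]
  · fun_prop
  · intro z hz
    by_cases h1 : z.1 ∈ Icc (-R) R
    · have h2 : z.2 ∉ Icc (0:ℝ) 1 := fun h2 => hz ⟨h1, h2⟩
      simp [hh0 _ h2]
    · simp [hg0 _ h1]
  · intro z
    rw [abs_mul, abs_mul]
    have hM : 0 ≤ M := (abs_nonneg _).trans (hg 0)
    have hC : 0 ≤ C := (abs_nonneg _).trans (hA (0,0))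
    exact mul_le_mul (hA z) (mul_le_mul (hg _) (hh _) (abs_nonneg _) hM) (by positivity) hC

/-- three kinds of integrability facts for products of test functions -/
lemma int_gh {V ρ g h : ℝ → ℝ} (hc : Coef V ρ) (hg : TT g) (hh : TX h) {A : ℝ × ℝ → ℝ} {C : ℝ}
    (mA : Measurable A) (hA : ∀ z, |A z| ≤ C) :
    Integrable (fun z : ℝ × ℝ => A z * (deriv g z.1 * h z.2)) ∧
    Integrable (fun z : ℝ × ℝ => A z * (g z.1 * deriv h z.2)) ∧
    Integrable (fun z : ℝ × ℝ => A z * (g z.1 * h z.2)) ∧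
    Integrable (fun z : ℝ × ℝ => A z * (g z.1 * (V z.2 * h z.2))) := by
  obtain ⟨M, R, hM, hR, b1, b2, b3⟩ := hg.bounds
  obtain ⟨N, R', hN, hR', c1, c2, -⟩ := hh.bounds
  obtain ⟨N', hN', c3⟩ := hc.mul_bdd hh
  have hz : ∀ x, x ∉ Icc (0:ℝ) 1 → h x = 0 ∧ deriv h x = 0 :=
    fun x hx => hh.zero_of_notMem (fun h => hx (Ioo_subset_Icc_self h))
  have mg := hg.cd.continuous.measurable
  have mh := hh.cd.continuous.measurable
  have mV := hc.mV
  refine ⟨int_prod mA hA (measurable_deriv _) b2 (fun t ht => (b3 t ht).2) mh c1 fun t ht => (hz t ht).1,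
    int_prod mA hA mg b1 (fun t ht => (b3 t ht).1) (measurable_deriv _) c2 fun t ht => (hz t ht).2,
    int_prod mA hA mg b1 (fun t ht => (b3 t ht).1) mh c1 fun t ht => (hz t ht).1,
    int_prod mA hA mg b1 (fun t ht => (b3 t ht).1) (h := fun x => V x * h x) (by fun_prop) c3
      fun t ht => by simp [(hz t ht).1]⟩

lemma ext_ineq {p : ℝ} (hp : p ∈ Ioc (1/2 : ℝ) 1) {V ρ : ℝ → ℝ} (hc : Coef V ρ) {u₀ : ℝ → ℝ}
    (hu₀ : Measurable u₀) (hu₀m : ∀ x, u₀ x ∈ Icc (0:ℝ) 1) {u : ℝ × ℝ → ℝ}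
    (hu : IsEntropySolution p V ρ u₀ u) {g h : ℝ → ℝ} (hg : TT g) (hh : TX h)
    {k : ℝ} (hk : k ∈ Icc (0:ℝ) 1) {s : ℝ → ℝ} (hs : ContDiff ℝ 1 s) (hs' : Monotone s)
    (hsb : ∀ v ∈ Icc (0:ℝ) 1, |s v| ≤ 1) :
    0 ≤ ∫ z : ℝ × ℝ, ((∫ v in k..(uext u₀ u z), s v) * (deriv g z.1 * h z.2)
      + Hv z.1 * ((∫ v in k..(uext u₀ u z), deriv (fluxJ p) v * s v) * (g z.1 * deriv h z.2)
        - s (uext u₀ u z) * (V z.2 * (uext u₀ u z - ρ z.2)) * (g z.1 * h z.2))) := by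
  obtain ⟨hlax, hder⟩ := laxPair (p := p) (k := k) hs hs'
  obtain ⟨mu, bu, ent⟩ := hu
  set f : ℝ → ℝ := fun u => ∫ v in k..u, s v with hf
  set q : ℝ → ℝ := fun u => ∫ v in k..u, deriv (fluxJ p) v * s v with hq
  have mf : Measurable f := hlax.1.continuous.measurable
  have mq : Measurable q := hlax.2.1.continuous.measurable
  have ms : Measurable s := hs.continuous.measurable
  have mue := measurable_uext hu₀ mu
  have bue := uext_mem hu₀m bu
  set w := uext u₀ u with hw
  have E := ent f q hlax (fun z => g z.1 * h z.2) ?_ ?_ ?_ ?_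
  rotate_left
  · exact (hg.cd.comp contDiff_fst).mul (hh.cd.comp contDiff_snd)
  · refine HasCompactSupport.intro (hg.cs.isCompact.prod hh.cs.isCompact) ?_
    intro z hz
    by_cases h1 : z.1 ∈ tsupport g
    · have h2 : z.2 ∉ tsupport h := fun h2 => hz ⟨h1, h2⟩
      simp [image_eq_zero_of_notMem_tsupport h2]
    · simp [image_eq_zero_of_notMem_tsupport h1]
  · exact fun z => mul_nonneg (hg.nn _) (hh.nn _)
  · intro z hz; simp [(hh.zero_of_notMem hz).1]
  have d1 : ∀ z : ℝ × ℝ, deriv (fun s => g s * h z.2) z.1 = deriv g z.1 * h z.2 := by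
    intro z; exact deriv_mul_const_field _
  have d2 : ∀ z : ℝ × ℝ, deriv (fun y => g z.1 * h y) z.2 = g z.1 * deriv h z.2 := by
    intro z; exact deriv_const_mul_field _
  simp only [d1, d2, hder] at E
  -- bounds
  have bf : ∀ z, |f (w z)| ≤ 1 := fun z => abs_int_le hk (bue z) hsb
  have bq : ∀ z, |q (w z)| ≤ 1 := fun z => abs_int_le hk (bue z) fun v hv => by
    rw [abs_mul]
    exact mul_le_one₀ (abs_deriv_fluxJ_le hp hv) (abs_nonneg _) (hsb v hv)
  have bs : ∀ z, |s (w z)| ≤ 1 := fun z => hsb _ (bue z)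
  have bd : ∀ z : ℝ × ℝ, |w z - ρ z.2| ≤ 1 := fun z => by
    have h1 := bue z; have h2 := hc.bρ z.2
    rw [abs_le]; constructor <;> linarith [h1.1, h1.2, h2.1, h2.2]
  have mρ := hc.mρ
  have mH := measurable_Hv
  have I1 := (int_gh hc hg hh (A := fun z => f (w z)) (mf.comp mue) bf).1
  have I2 := (int_gh hc hg hh (A := fun z => Hv z.1 * q (w z)) (C := 1)
    ((mH.comp measurable_fst).mul (mq.comp mue)) (fun z => by
      rw [abs_mul]; exact mul_le_one₀ (abs_Hv_le _) (abs_nonneg _) (bq z))).2.1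
  have I3 := (int_gh hc hg hh (A := fun z => Hv z.1 * (s (w z) * (w z - ρ z.2))) (C := 1)
    (by fun_prop) (fun z => by
      rw [abs_mul, abs_mul]
      exact mul_le_one₀ (abs_Hv_le _) (by positivity) (mul_le_one₀ (bs z) (by positivity) (bd z)))).2.2.2
  -- restricted domain
  set D : Set (ℝ × ℝ) := Ioi (0:ℝ) ×ˢ Ioo (0:ℝ) 1 with hD
  have mD : MeasurableSet D := measurableSet_Ioi.prod measurableSet_Ioo
  have hwu : ∀ z ∈ D, w z = u z := fun z hz => if_pos hz.1
  have hH1 : ∀ z ∈ D, Hv z.1 = 1 := fun z hz => if_pos hz.1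
  -- the H terms
  have e2 : ∫ z, (Hv z.1 * q (w z)) * (g z.1 * deriv h z.2) = ∫ z in D, q (u z) * (g z.1 * deriv h z.2) := by
    rw [← setIntegral_eq_integral_of_forall_compl_eq_zero (s := D)]
    · exact setIntegral_congr_fun mD fun z hz => by simp only [hwu z hz, hH1 z hz, one_mul]
    · intro z hz
      by_cases h1 : 0 < z.1
      · have : z.2 ∉ Ioo (0:ℝ) 1 := fun h2 => hz ⟨h1, h2⟩
        simp [(hh.zero_of_notMem this).2]
      · simp [Hv, h1]
  have e3 : ∫ z, (Hv z.1 * (s (w z) * (w z - ρ z.2))) * (g z.1 * (V z.2 * h z.2)) =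
      ∫ z in D, s (u z) * (V z.2 * (u z - ρ z.2)) * (g z.1 * h z.2) := by
    rw [← setIntegral_eq_integral_of_forall_compl_eq_zero (s := D)]
    · exact setIntegral_congr_fun mD fun z hz => by simp only [hwu z hz, hH1 z hz, one_mul]; ring
    · intro z hz
      by_cases h1 : 0 < z.1
      · have : z.2 ∉ Ioo (0:ℝ) 1 := fun h2 => hz ⟨h1, h2⟩
        simp [(hh.zero_of_notMem this).1]
      · simp [Hv, h1]
  -- the time derivative term
  have e1 : ∫ z, f (w z) * (deriv g z.1 * h z.2) =
      (∫ x in Ioo (0:ℝ) 1, f (u₀ x) * (g 0 * h x)) + ∫ z in D, f (u z) * (deriv g z.1 * h z.2) := by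
    have mS : MeasurableSet (Ioi (0:ℝ) ×ˢ (univ : Set ℝ)) := measurableSet_Ioi.prod MeasurableSet.univ
    rw [← integral_add_compl mS I1, add_comm]
    congr 1
    · have hcpl : (Ioi (0:ℝ) ×ˢ (univ : Set ℝ))ᶜ = Iic (0:ℝ) ×ˢ (univ : Set ℝ) := by
        ext z; simp
      rw [hcpl]
      have : ∫ z in Iic (0:ℝ) ×ˢ (univ : Set ℝ), f (w z) * (deriv g z.1 * h z.2) =
          ∫ z in Iic (0:ℝ) ×ˢ (univ : Set ℝ), deriv g z.1 * (f (u₀ z.2) * h z.2) := by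
        refine setIntegral_congr_fun (measurableSet_Iic.prod MeasurableSet.univ) fun z hz => ?_
        have : w z = u₀ z.2 := if_neg (not_lt.2 hz.1)
        simp only [this]; ring
      rw [this, Measure.volume_eq_prod, setIntegral_prod_mul (deriv g) (fun x => f (u₀ x) * h x),
        HasCompactSupport.integral_Iic_deriv_eq (hg.cd.of_le (by norm_num)) hg.cs 0,
        setIntegral_univ, ← integral_const_mul,
        ← setIntegral_eq_integral_of_forall_compl_eq_zero (s := Ioo (0:ℝ) 1)]
      · exact setIntegral_congr_fun measurableSet_Ioo fun x _ => by ring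
      · intro x hx; simp [(hh.zero_of_notMem hx).1]
    · rw [setIntegral_eq_of_subset_of_forall_sdiff_eq_zero mS (s := D)]
      · exact setIntegral_congr_fun mD fun z hz => by simp only [hwu z hz]
      · exact fun z hz => ⟨hz.1, trivial⟩
      · intro z hz
        have : z.2 ∉ Ioo (0:ℝ) 1 := fun h2 => hz.2 ⟨hz.1.1, h2⟩
        simp [(hh.zero_of_notMem this).1]
  have J1 : IntegrableOn (fun z => f (u z) * (deriv g z.1 * h z.2)) D :=
    I1.integrableOn.congr_fun (fun z hz => by simp only [hwu z hz]) mD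
  have J2 : IntegrableOn (fun z => q (u z) * (g z.1 * deriv h z.2)) D :=
    I2.integrableOn.congr_fun (fun z hz => by simp only [hwu z hz, hH1 z hz, one_mul]) mD
  rw [integral_add J1 J2] at E
  have tot : ∫ z : ℝ × ℝ, (f (w z) * (deriv g z.1 * h z.2)
      + Hv z.1 * (q (w z) * (g z.1 * deriv h z.2)
        - s (w z) * (V z.2 * (w z - ρ z.2)) * (g z.1 * h z.2))) =
      (∫ z, f (w z) * (deriv g z.1 * h z.2)) + ((∫ z, (Hv z.1 * q (w z)) * (g z.1 * deriv h z.2)) -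
       ∫ z, (Hv z.1 * (s (w z) * (w z - ρ z.2))) * (g z.1 * (V z.2 * h z.2))) := by
    have I23 := integral_add I1 (I2.sub I3)
    rw [integral_sub' I2 I3] at I23
    rw [← I23]
    congr 1; ext z; simp only [Pi.sub_apply]; ring
  change 0 ≤ ∫ z : ℝ × ℝ, (f (w z) * (deriv g z.1 * h z.2)
      + Hv z.1 * (q (w z) * (g z.1 * deriv h z.2)
        - s (w z) * (V z.2 * (w z - ρ z.2)) * (g z.1 * h z.2)))
  rw [tot, e1, e2, e3]
  linarith

end ES

open MeasureTheory Set Filter Topology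

namespace ES

/-- Kruzhkov entropy flux -/
noncomputable def Q (p a b : ℝ) : ℝ := fluxJ p (max a b) - fluxJ p (min a b)

lemma Q_comm (p a b : ℝ) : Q p a b = Q p b a := by
  unfold Q; rw [max_comm, min_comm]

/-- smooth approximations of the sign -/
noncomputable def sn (k : ℝ) (n : ℕ) (v : ℝ) : ℝ := (2 / Real.pi) * Real.arctan (n * (v - k))

lemma sn_contDiff (k : ℝ) (n : ℕ) : ContDiff ℝ 1 (sn k n) := by
  unfold sn
  exact contDiff_const.mul (Real.contDiff_arctan.comp (by fun_prop))

lemma sn_mono (k : ℝ) (n : ℕ) : Monotone (sn k n) := by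
  intro a b hab
  unfold sn
  have hpi := Real.pi_pos
  apply mul_le_mul_of_nonneg_left _ (by positivity)
  apply Real.arctan_strictMono.monotone
  apply mul_le_mul_of_nonneg_left _ (by positivity)
  linarith

lemma sn_abs (k : ℝ) (n : ℕ) (v : ℝ) : |sn k n v| ≤ 1 := by
  unfold sn
  have hpi := Real.pi_pos
  rw [abs_mul, abs_of_pos (by positivity : 0 < 2 / Real.pi)]
  have h := Real.arctan_lt_pi_div_two (n * (v - k))
  have h' := Real.neg_pi_div_two_lt_arctan (n * (v - k))
  have : |Real.arctan (n * (v - k))| ≤ Real.pi / 2 := abs_le.2 ⟨by linarith, h.le⟩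
  calc _ ≤ 2 / Real.pi * (Real.pi / 2) := mul_le_mul_of_nonneg_left this (by positivity)
    _ = 1 := by field_simp

lemma sn_tendsto (k v : ℝ) : Tendsto (fun n => sn k n v) atTop (𝓝 (Real.sign (v - k))) := by
  unfold sn
  have hpi := Real.pi_pos
  rcases lt_trichotomy (v - k) 0 with h | h | h
  · rw [Real.sign_of_neg h]
    have h1 : Tendsto (fun n : ℕ => (n:ℝ) * (v - k)) atTop atBot :=
      tendsto_natCast_atTop_atTop.atTop_mul_const_of_neg h
    have h2 := ((tendsto_nhds_of_tendsto_nhdsWithin Real.tendsto_arctan_atBot).comp h1).const_mul (2 / Real.pi)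
    have e : 2 / Real.pi * -(Real.pi / 2) = -1 := by field_simp
    rw [e] at h2
    exact h2
  · simp [h]
  · rw [Real.sign_of_pos h]
    have h1 : Tendsto (fun n : ℕ => (n:ℝ) * (v - k)) atTop atTop :=
      tendsto_natCast_atTop_atTop.atTop_mul_const h
    have h2 := ((tendsto_nhds_of_tendsto_nhdsWithin Real.tendsto_arctan_atTop).comp h1).const_mul (2 / Real.pi)
    have e : 2 / Real.pi * (Real.pi / 2) = 1 := by field_simp
    rw [e] at h2
    exact h2

lemma measurable_sign : Measurable Real.sign := by
  unfold Real.sign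
  exact Measurable.ite measurableSet_Iio measurable_const
    (Measurable.ite measurableSet_Ioi measurable_const measurable_const)

lemma abs_sign_le (r : ℝ) : |Real.sign r| ≤ 1 := by
  rcases Real.sign_apply_eq r with h | h | h <;> simp [h]

lemma int_sign {k u : ℝ} {r : ℝ → ℝ} :
    ∫ v in k..u, r v * Real.sign (v - k) = ∫ v in (min u k)..(max u k), r v := by
  rcases le_total k u with h | h
  · rw [min_eq_right h, max_eq_left h]
    rw [intervalIntegral.integral_of_le h, intervalIntegral.integral_of_le h]
    refine setIntegral_congr_fun measurableSet_Ioc fun v hv => ?_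
    rw [Real.sign_of_pos (by linarith [hv.1])]; simp
  · rw [min_eq_left h, max_eq_right h, intervalIntegral.integral_symm]
    rw [intervalIntegral.integral_of_le h, intervalIntegral.integral_of_le h, ← integral_neg,
      integral_Ioc_eq_integral_Ioo, integral_Ioc_eq_integral_Ioo]
    refine setIntegral_congr_fun measurableSet_Ioo fun v hv => ?_
    rw [Real.sign_of_neg (by linarith [hv.2])]; simp

lemma int_sn_tendsto {k u : ℝ} {r : ℝ → ℝ} (hr : Continuous r) :
    Tendsto (fun n => ∫ v in k..u, r v * sn k n v) atTop (𝓝 (∫ v in (min u k)..(max u k), r v)) := by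
  rw [← int_sign]
  refine intervalIntegral.tendsto_integral_filter_of_dominated_convergence (fun v => |r v|) ?_ ?_ ?_ ?_
  · exact Eventually.of_forall fun n =>
      (hr.mul (sn_contDiff k n).continuous).aestronglyMeasurable
  · refine Eventually.of_forall fun n => Eventually.of_forall fun v _ => ?_
    rw [Real.norm_eq_abs, abs_mul]
    exact mul_le_of_le_one_right (abs_nonneg _) (sn_abs _ _ _)
  · exact hr.abs.intervalIntegrable _ _
  · exact Eventually.of_forall fun v _ => (sn_tendsto k v).const_mul _

lemma contDiff_fluxJ (p : ℝ) : ContDiff ℝ 2 (fluxJ p) := by unfold fluxJ; fun_prop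

lemma krz {p : ℝ} (hp : p ∈ Ioc (1/2 : ℝ) 1) {V ρ : ℝ → ℝ} (hc : Coef V ρ) {u₀ : ℝ → ℝ}
    (hu₀ : Measurable u₀) (hu₀m : ∀ x, u₀ x ∈ Icc (0:ℝ) 1) {u : ℝ × ℝ → ℝ}
    (hu : IsEntropySolution p V ρ u₀ u) {g h : ℝ → ℝ} (hg : TT g) (hh : TX h)
    {k : ℝ} (hk : k ∈ Icc (0:ℝ) 1) :
    0 ≤ ∫ z : ℝ × ℝ, (|uext u₀ u z - k| * (deriv g z.1 * h z.2)
      + Hv z.1 * (Q p (uext u₀ u z) k * (g z.1 * deriv h z.2)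
        - Real.sign (uext u₀ u z - k) * (V z.2 * (uext u₀ u z - ρ z.2)) * (g z.1 * h z.2))) := by
  have mue := measurable_uext hu₀ hu.1
  have bue := uext_mem hu₀m hu.2.1
  set w := uext u₀ u with hw
  have cJ : Continuous (deriv (fluxJ p)) := (contDiff_fluxJ p).continuous_deriv (by norm_num)
  have main := fun n : ℕ => ext_ineq hp hc hu₀ hu₀m hu hg hh hk (sn_contDiff k n) (sn_mono k n)
    (fun v _ => sn_abs k n v)
  rw [← hw] at main
  refine ge_of_tendsto' (x := atTop) ?_ main
  have ig := int_gh hc hg hh (A := fun _ => (1:ℝ)) (C := 1) measurable_const (by simp)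
  have mV := hc.mV
  have mρ := hc.mρ
  have mH := measurable_Hv
  have mg := hg.cd.continuous.measurable
  have mh := hh.cd.continuous.measurable
  have bd : ∀ z : ℝ × ℝ, |w z - ρ z.2| ≤ 1 := fun z => by
    have h1 := bue z; have h2 := hc.bρ z.2
    rw [abs_le]; constructor <;> linarith [h1.1, h1.2, h2.1, h2.2]
  refine tendsto_integral_of_dominated_convergence
    (fun z => |1 * (deriv g z.1 * h z.2)| + (|1 * (g z.1 * deriv h z.2)| +
      |1 * (g z.1 * (V z.2 * h z.2))|)) ?_ ?_ ?_ ?_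
  · intro n
    have hl := (laxPair (p := p) (k := k) (sn_contDiff k n) (sn_mono k n)).1
    have mf := hl.1.continuous.measurable.comp mue
    have mq := hl.2.1.continuous.measurable.comp mue
    have ms := (sn_contDiff k n).continuous.measurable.comp mue
    simp only [Function.comp_def] at mf mq ms
    refine Measurable.aestronglyMeasurable ?_
    have md1 := measurable_deriv g
    have md2 := measurable_deriv h
    fun_prop
  · exact ig.1.abs.add (ig.2.1.abs.add ig.2.2.2.abs)
  · intro n
    refine Eventually.of_forall fun z => ?_
    have bf : |∫ v in k..(w z), sn k n v| ≤ 1 := abs_int_le hk (bue z) fun v _ => sn_abs k n v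
    have bq : |∫ v in k..(w z), deriv (fluxJ p) v * sn k n v| ≤ 1 :=
      abs_int_le hk (bue z) fun v hv => by
        rw [abs_mul]; exact mul_le_one₀ (abs_deriv_fluxJ_le hp hv) (abs_nonneg _) (sn_abs k n v)
    have bs := sn_abs k n (w z)
    have bH := abs_Hv_le z.1
    rw [Real.norm_eq_abs]
    refine (abs_add_le _ _).trans (add_le_add ?_ ?_)
    · rw [abs_mul, abs_mul 1, abs_one]
      exact mul_le_mul_of_nonneg_right bf (abs_nonneg _)
    · rw [abs_mul]
      refine (mul_le_of_le_one_left (abs_nonneg _) bH).trans ((abs_sub _ _).trans (add_le_add ?_ ?_))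
      · rw [abs_mul, abs_mul 1, abs_one]
        exact mul_le_mul_of_nonneg_right bq (abs_nonneg _)
      · have : sn k n (w z) * (V z.2 * (w z - ρ z.2)) * (g z.1 * h z.2) =
          (sn k n (w z) * (w z - ρ z.2)) * (g z.1 * (V z.2 * h z.2)) := by ring
        rw [this, abs_mul, abs_mul 1, abs_one]
        refine mul_le_mul_of_nonneg_right ?_ (abs_nonneg _)
        rw [abs_mul]
        exact mul_le_one₀ bs (abs_nonneg _) (bd z)
  · refine Eventually.of_forall fun z => ?_
    have t1 := int_sn_tendsto (k := k) (u := w z) (r := fun _ => 1) continuous_const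
    have t2 := int_sn_tendsto (k := k) (u := w z) cJ
    simp only [one_mul, intervalIntegral.integral_const, smul_eq_mul, mul_one] at t1
    rw [max_sub_min_eq_abs'] at t1
    have e : ∫ v in (min (w z) k)..(max (w z) k), deriv (fluxJ p) v = Q p (w z) k := by
      unfold Q
      exact intervalIntegral.integral_deriv_eq_sub
        (fun x _ => (contDiff_fluxJ p).differentiable (by norm_num) x) (cJ.intervalIntegrable _ _)
    rw [e] at t2
    exact (t1.mul_const _).add (((t2.mul_const _).sub
      (((sn_tendsto k (w z)).mul_const _).mul_const _)).const_mul _)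

end ES

open MeasureTheory Set Filter Topology

namespace ES

lemma fluxJ_lip {p a b : ℝ} (hp : p ∈ Ioc (1/2 : ℝ) 1) (ha : a ∈ Icc (0:ℝ) 1) (hb : b ∈ Icc (0:ℝ) 1) :
    |fluxJ p a - fluxJ p b| ≤ |a - b| := by
  have e : fluxJ p a - fluxJ p b = ((2 * p - 1) * (1 - a - b)) * (a - b) := by unfold fluxJ; ring
  rw [e, abs_mul]
  apply mul_le_of_le_one_left (abs_nonneg _)
  rw [abs_mul]
  refine mul_le_one₀ ?_ (abs_nonneg _) ?_
  · rw [abs_le]; constructor <;> linarith [hp.1, hp.2]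
  · rw [abs_le]; constructor <;> linarith [ha.1, ha.2, hb.1, hb.2]

lemma max_mem' {a b : ℝ} (ha : a ∈ Icc (0:ℝ) 1) (hb : b ∈ Icc (0:ℝ) 1) : max a b ∈ Icc (0:ℝ) 1 :=
  ⟨le_max_of_le_left ha.1, max_le ha.2 hb.2⟩
lemma min_mem' {a b : ℝ} (ha : a ∈ Icc (0:ℝ) 1) (hb : b ∈ Icc (0:ℝ) 1) : min a b ∈ Icc (0:ℝ) 1 :=
  ⟨le_min ha.1 hb.1, min_le_of_left_le ha.2⟩

lemma Q_lip {p a b c : ℝ} (hp : p ∈ Ioc (1/2 : ℝ) 1) (ha : a ∈ Icc (0:ℝ) 1) (hb : b ∈ Icc (0:ℝ) 1)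
    (hc : c ∈ Icc (0:ℝ) 1) : |Q p a b - Q p a c| ≤ 2 * |b - c| := by
  unfold Q
  have h1 := fluxJ_lip hp (max_mem' ha hb) (max_mem' ha hc)
  have h2 := fluxJ_lip hp (min_mem' ha hb) (min_mem' ha hc)
  have h3 : |max a b - max a c| ≤ |b - c| := by
    have := abs_max_sub_max_le_max a b a c
    simpa using this
  have h4 : |min a b - min a c| ≤ |b - c| := by
    have := abs_min_sub_min_le_max a b a c
    simpa using this
  have e : fluxJ p (max a b) - fluxJ p (min a b) - (fluxJ p (max a c) - fluxJ p (min a c)) =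
    (fluxJ p (max a b) - fluxJ p (max a c)) - (fluxJ p (min a b) - fluxJ p (min a c)) := by ring
  rw [e]
  refine (abs_sub _ _).trans ?_
  linarith

lemma Q_abs {p a b : ℝ} (hp : p ∈ Ioc (1/2 : ℝ) 1) (ha : a ∈ Icc (0:ℝ) 1) (hb : b ∈ Icc (0:ℝ) 1) :
    |Q p a b| ≤ |a - b| := by
  unfold Q
  refine (fluxJ_lip hp (max_mem' ha hb) (min_mem' ha hb)).trans ?_
  rw [max_sub_min_eq_abs', abs_abs]

lemma abs_sub_le_one {a b : ℝ} (ha : a ∈ Icc (0:ℝ) 1) (hb : b ∈ Icc (0:ℝ) 1) : |a - b| ≤ 1 := by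
  rw [abs_le]; constructor <;> linarith [ha.1, ha.2, hb.1, hb.2]

lemma measurable_Q {X : Type*} [MeasurableSpace X] (p : ℝ) {a b : X → ℝ} (ha : Measurable a)
    (hb : Measurable b) : Measurable (fun z => Q p (a z) (b z)) := by
  have hJ : Measurable (fluxJ p) := (contDiff_fluxJ p).continuous.measurable
  unfold Q
  exact (hJ.comp (ha.max hb)).sub (hJ.comp (ha.min hb))

lemma exists_moll {δ : ℝ} (hδ : 0 < δ) : ∃ α : ℝ → ℝ, TT α ∧ ∫ t, α t = 1 ∧
    ∀ t, δ ≤ |t| → α t = 0 ∧ deriv α t = 0 := by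
  let f : ContDiffBump (0:ℝ) := ⟨δ/4, δ/2, by positivity, by linarith⟩
  refine ⟨f.normed volume, ⟨f.contDiff_normed, f.hasCompactSupport_normed, f.nonneg_normed⟩,
    f.integral_normed, fun t ht => ?_⟩
  have : t ∉ tsupport (f.normed volume) := by
    rw [f.tsupport_normed_eq, Metric.mem_closedBall, dist_zero_right, Real.norm_eq_abs, not_le]
    change δ/2 < |t|
    linarith
  exact ⟨image_eq_zero_of_notMem_tsupport this,
      image_eq_zero_of_notMem_tsupport (fun h => this (tsupport_deriv_subset h))⟩

lemma approx {v : ℝ × ℝ → ℝ} (mv : Measurable v) (bv : ∀ z, v z ∈ Icc (0:ℝ) 1) (R : ℝ) {η : ℝ}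
    (hη : 0 < η) : ∃ e : ℝ × ℝ → ℝ, Integrable e ∧ (∀ z, 0 ≤ e z) ∧ ∫ z, e z ≤ η ∧
    ∃ δ > 0, ∀ z w : ℝ × ℝ, z.1 ∈ Icc (-R) R → z.2 ∈ Icc (0:ℝ) 1 → |z.1 - w.1| ≤ δ → |z.2 - w.2| ≤ δ →
      |v z - v w| ≤ e z + e w + η := by
  set K : Set (ℝ × ℝ) := Icc (-R - 1) (R + 1) ×ˢ Icc (-1:ℝ) 2 with hK
  have mK : MeasurableSet K := measurableSet_Icc.prod measurableSet_Icc
  have iv : Integrable (K.indicator v) := by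
    refine integrable_of_bdd (S := K) ?_ 1 (mv.indicator mK) (fun z hz => indicator_of_notMem hz _) ?_
    · rw [hK, Measure.volume_eq_prod, Measure.prod_prod]
      rw [Real.volume_Icc, Real.volume_Icc]
      exact ENNReal.mul_ne_top ENNReal.ofReal_ne_top ENNReal.ofReal_ne_top
    · intro z
      rw [indicator_apply]; split_ifs
      · rw [abs_of_nonneg (bv z).1]; exact (bv z).2
      · simp
  obtain ⟨c, hcs, hci, hcc, ic⟩ := iv.exists_hasCompactSupport_integral_sub_le hη
  obtain ⟨δ, hδ, hu⟩ := Metric.uniformContinuous_iff.1 (hcs.uniformContinuous_of_continuous hcc) η hη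
  · refine ⟨fun z => ‖K.indicator v z - c z‖, (iv.sub ic).norm, fun z => norm_nonneg _, hci,
      min 1 (δ / 2), by positivity, ?_⟩
    intro z w h1 h2 h3 h4
    have hz : z ∈ K := ⟨⟨by linarith [h1.1], by linarith [h1.2]⟩, ⟨by linarith [h2.1], by linarith [h2.2]⟩⟩
    have h3' := abs_le.1 (h3.trans (min_le_left _ _))
    have h4' := abs_le.1 (h4.trans (min_le_left _ _))
    have hw : w ∈ K := ⟨⟨by linarith [h1.1], by linarith [h1.2]⟩, ⟨by linarith [h2.1], by linarith [h2.2]⟩⟩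
    have hd : dist z w < δ := by
      rw [Prod.dist_eq, max_lt_iff, Real.dist_eq, Real.dist_eq]
      have := min_le_right 1 (δ/2)
      constructor <;> linarith
    have := hu hd
    rw [Real.dist_eq] at this
    simp only [indicator_of_mem hz, indicator_of_mem hw, Real.norm_eq_abs]
    have e : v z - v w = (v z - c z) - (v w - c w) + (c z - c w) := by ring
    rw [e]
    exact (abs_add_le _ _).trans (add_le_add (abs_sub _ _) this.le)

lemma ker_int {k : ℝ × ℝ → ℝ} (hk : Integrable k) {G : ℝ × ℝ → ℝ} (hG : Integrable G) :
    Integrable (fun q : (ℝ × ℝ) × (ℝ × ℝ) => G q.1 * k (q.1 - q.2)) ∧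
    ∫ q : (ℝ × ℝ) × (ℝ × ℝ), G q.1 * k (q.1 - q.2) = (∫ z, G z) * ∫ z, k z := by
  have h1 : Integrable (fun q : (ℝ × ℝ) × (ℝ × ℝ) => G q.1 * k (q.1 - q.2)) := by
    have := (hG.convolution_integrand (ContinuousLinearMap.mul ℝ ℝ) hk.comp_neg).swap
    refine this.congr (Eventually.of_forall fun q => ?_)
    simp
  refine ⟨h1, ?_⟩
  rw [Measure.volume_eq_prod, integral_prod _ h1]
  simp only [integral_const_mul, integral_sub_left_eq_self k, integral_mul_const]

lemma ker_int' {k : ℝ × ℝ → ℝ} (hk : Integrable k) {G : ℝ × ℝ → ℝ} (hG : Integrable G) :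
    Integrable (fun q : (ℝ × ℝ) × (ℝ × ℝ) => G q.2 * k (q.1 - q.2)) ∧
    ∫ q : (ℝ × ℝ) × (ℝ × ℝ), G q.2 * k (q.1 - q.2) = (∫ z, G z) * ∫ z, k z := by
  have h1 : Integrable (fun q : (ℝ × ℝ) × (ℝ × ℝ) => G q.2 * k (q.1 - q.2)) := by
    exact (hG.convolution_integrand (ContinuousLinearMap.mul ℝ ℝ) hk)
  refine ⟨h1, ?_⟩
  rw [Measure.volume_eq_prod, integral_prod_symm _ h1]
  simp only [integral_const_mul, integral_sub_right_eq_self k, integral_mul_const]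

lemma int4 {A : (ℝ × ℝ) × (ℝ × ℝ) → ℝ} {g h a b : ℝ → ℝ} {C Mg Mh Ma Mb R r : ℝ}
    (mA : Measurable A) (hA : ∀ z, |A z| ≤ C)
    (mg : Measurable g) (hg : ∀ t, |g t| ≤ Mg) (hg0 : ∀ t, t ∉ Icc (-R) R → g t = 0)
    (mh : Measurable h) (hh : ∀ t, |h t| ≤ Mh) (hh0 : ∀ t, t ∉ Icc (0:ℝ) 1 → h t = 0)
    (ma : Measurable a) (ha : ∀ t, |a t| ≤ Ma) (ha0 : ∀ t, r ≤ |t| → a t = 0)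
    (mb : Measurable b) (hb : ∀ t, |b t| ≤ Mb) (hb0 : ∀ t, r ≤ |t| → b t = 0) :
    Integrable (fun q : (ℝ × ℝ) × (ℝ × ℝ) => A q * (g q.1.1 * h q.1.2 * a (q.1.1 - q.2.1)
      * b (q.1.2 - q.2.2))) := by
  have iA : Integrable (fun q : (ℝ × ℝ) × (ℝ × ℝ) =>
      (fun z : ℝ × ℝ => 1 * (g z.1 * h z.2)) q.1 * (fun z : ℝ × ℝ => a z.1 * b z.2) (q.1 - q.2)) := by
    refine (ker_int (k := fun z : ℝ × ℝ => a z.1 * b z.2) (G := fun z : ℝ × ℝ => 1 * (g z.1 * h z.2)) ?_ ?_).1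
    · have := (show Integrable a from integrable_of_bdd (S := Icc (-r) r) (by simp) Ma ma
        (fun t ht => ha0 t (by
          by_contra hn; push Not at hn; exact ht ⟨(abs_lt.1 hn).1.le, (abs_lt.1 hn).2.le⟩)) ha).mul_prod
        (show Integrable b from integrable_of_bdd (S := Icc (-r) r) (by simp) Mb mb
        (fun t ht => hb0 t (by
          by_contra hn; push Not at hn; exact ht ⟨(abs_lt.1 hn).1.le, (abs_lt.1 hn).2.le⟩)) hb)
      exact this
    · exact int_prod (C := 1) measurable_const (by simp) mg hg hg0 mh hh hh0
  refine (iA.bdd_mul (c := C) mA.aestronglyMeasurable (Eventually.of_forall fun q => hA q)).congr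
    (Eventually.of_forall fun q => ?_)
  simp; left; ring

end ES

open MeasureTheory Set Filter Topology

namespace ES

lemma sign_sub_comm (a b : ℝ) : Real.sign (b - a) = - Real.sign (a - b) := by
  rw [← Real.sign_neg, neg_sub]

lemma sign_mul_self (r : ℝ) : Real.sign r * r = |r| := by
  rcases lt_trichotomy r 0 with h | h | h
  · rw [Real.sign_of_neg h, abs_of_neg h]; ring
  · simp [h]
  · rw [Real.sign_of_pos h, abs_of_pos h]; ring

/-- pointwise estimate of the doubled integrand -/
lemma pointwise {p a b b0 ps ps' ch ch' al al' be be' Ht Hs Vx Vy rx ry M N η E : ℝ}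
    (hp : p ∈ Ioc (1/2 : ℝ) 1) (ha : a ∈ Icc (0:ℝ) 1) (hb : b ∈ Icc (0:ℝ) 1)
    (hb0 : b0 ∈ Icc (0:ℝ) 1) (hps : 0 ≤ ps) (hch : 0 ≤ ch) (hal : 0 ≤ al) (hbe : 0 ≤ be)
    (hM : 0 ≤ M) (bps : |ps| ≤ M) (bps' : |ps'| ≤ M) (bch : |ch| ≤ M) (bch' : |ch'| ≤ M)
    (hHt0 : 0 ≤ Ht) (hHt : Ht ≤ 1) (hVx : 0 ≤ Vx) (hVy : |Vy * (b - ry)| ≤ N)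
    (hV : |Vx * (b - rx) - Vy * (b - ry)| ≤ 2 * η) (hE : |b0 - b| ≤ E) :
    (|a - b| * ((ps' * al + ps * al') * (ch * be)) + Ht * (Q p a b * ((ps * al) * (ch' * be + ch * be'))
      - Real.sign (a - b) * (Vx * (a - rx)) * ((ps * al) * (ch * be)))) +
    (|b - a| * ((ps * -al') * (ch * be)) + Hs * (Q p b a * ((ps * al) * (ch * -be'))
      - Real.sign (b - a) * (Vy * (b - ry)) * ((ps * al) * (ch * be)))) ≤
    (|a - b0| * (ps' * ch) + Ht * (Q p a b0 * (ps * ch'))) * (al * be) + 3 * M ^ 2 * (E * (al * be))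
      + |Ht - Hs| * (M ^ 2 * (al * |be'|) + N * M ^ 2 * (al * be)) + 2 * M ^ 2 * (η * (al * be)) := by
  have hk : 0 ≤ al * be := mul_nonneg hal hbe
  have hE' : |b - b0| ≤ E := by rw [abs_sub_comm]; exact hE
  have e : (|a - b| * ((ps' * al + ps * al') * (ch * be)) + Ht * (Q p a b * ((ps * al) * (ch' * be + ch * be'))
      - Real.sign (a - b) * (Vx * (a - rx)) * ((ps * al) * (ch * be)))) +
    (|b - a| * ((ps * -al') * (ch * be)) + Hs * (Q p b a * ((ps * al) * (ch * -be'))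
      - Real.sign (b - a) * (Vy * (b - ry)) * ((ps * al) * (ch * be)))) =
    |a - b| * (ps' * ch) * (al * be) + Ht * (Q p a b * (ps * ch')) * (al * be)
      + (Ht - Hs) * Q p a b * (ps * ch) * al * be'
      - Ht * Vx * (Real.sign (a - b) * (a - b)) * (ps * ch * (al * be))
      - Real.sign (a - b) * Ht * (Vx * (b - rx) - Vy * (b - ry)) * (ps * ch) * (al * be)
      - Real.sign (a - b) * (Ht - Hs) * (Vy * (b - ry)) * (ps * ch) * (al * be) := by
    rw [Q_comm p b a, abs_sub_comm b a, sign_sub_comm a b]; ring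
  rw [e, sign_mul_self]
  have sg := abs_sign_le (a - b)
  have bQ : |Q p a b| ≤ 1 := (Q_abs hp ha hb).trans (abs_sub_le_one ha hb)
  have m2 : ∀ x y : ℝ, |x| ≤ M → |y| ≤ M → |x * y| ≤ M ^ 2 := fun x y hx hy => by
    rw [abs_mul, sq]; exact mul_le_mul hx hy (abs_nonneg _) hM
  have hE0 : 0 ≤ E := (abs_nonneg _).trans hE
  have hN0 : 0 ≤ N := (abs_nonneg _).trans hVy
  have hη0 : 0 ≤ 2 * η := (abs_nonneg _).trans hV
  -- T1
  have T1 : |a - b| * (ps' * ch) * (al * be) ≤ |a - b0| * (ps' * ch) * (al * be) + M ^ 2 * (E * (al * be)) := by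
    have h1 : |(|a - b| - |a - b0|)| ≤ E := by
      refine (abs_abs_sub_abs_le _ _).trans ?_
      have : a - b - (a - b0) = b0 - b := by ring
      rw [this]; exact hE
    have h2 : |(|a - b| - |a - b0|) * (ps' * ch)| ≤ E * M ^ 2 := by
      rw [abs_mul]; exact mul_le_mul h1 (m2 _ _ bps' bch) (abs_nonneg _) hE0
    have h3 := mul_le_mul_of_nonneg_right ((le_abs_self _).trans h2) hk
    linarith
  have T2 : Ht * (Q p a b * (ps * ch')) * (al * be) ≤ Ht * (Q p a b0 * (ps * ch')) * (al * be)
      + 2 * M ^ 2 * (E * (al * be)) := by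
    have h1 : |Q p a b - Q p a b0| ≤ 2 * E := (Q_lip hp ha hb hb0).trans (by linarith)
    have h2 : |Ht * ((Q p a b - Q p a b0) * (ps * ch'))| ≤ 1 * (2 * E * M ^ 2) := by
      rw [abs_mul, abs_mul (Q p a b - Q p a b0)]
      refine mul_le_mul (by rw [abs_of_nonneg hHt0]; exact hHt)
        (mul_le_mul h1 (m2 _ _ bps bch') (abs_nonneg _) (by positivity)) (by positivity) zero_le_one
    have h3 := mul_le_mul_of_nonneg_right ((le_abs_self _).trans h2) hk
    linarith
  have T3 : (Ht - Hs) * Q p a b * (ps * ch) * al * be' ≤ |Ht - Hs| * (M ^ 2 * (al * |be'|)) := by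
    refine (le_abs_self _).trans ?_
    rw [abs_mul, abs_mul, abs_mul, abs_mul, abs_of_nonneg hal]
    have h1 : |Q p a b| * |ps * ch| ≤ 1 * M ^ 2 := mul_le_mul bQ (m2 _ _ bps bch) (abs_nonneg _) zero_le_one
    have h2 : 0 ≤ |Ht - Hs| * (al * |be'|) := by positivity
    have h3 := mul_le_mul_of_nonneg_right h1 h2
    linarith
  have T4 : 0 ≤ Ht * Vx * |a - b| * (ps * ch * (al * be)) := by positivity
  have T5 : - (Real.sign (a - b) * Ht * (Vx * (b - rx) - Vy * (b - ry)) * (ps * ch) * (al * be)) ≤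
      2 * M ^ 2 * (η * (al * be)) := by
    refine (neg_le_abs _).trans ?_
    rw [abs_mul, abs_mul, abs_mul, abs_mul, abs_of_nonneg hk]
    have h1 : |Real.sign (a - b)| * |Ht| ≤ 1 := mul_le_one₀ sg (abs_nonneg _) (by rw [abs_of_nonneg hHt0]; exact hHt)
    have h2 : |Real.sign (a - b)| * |Ht| * |Vx * (b - rx) - Vy * (b - ry)| ≤ 1 * (2 * η) :=
      mul_le_mul h1 hV (abs_nonneg _) zero_le_one
    have h3 := mul_le_mul h2 (m2 _ _ bps bch) (abs_nonneg _) (by linarith)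
    have h4 := mul_le_mul_of_nonneg_right h3 hk
    linarith
  have T6 : - (Real.sign (a - b) * (Ht - Hs) * (Vy * (b - ry)) * (ps * ch) * (al * be)) ≤
      |Ht - Hs| * (N * M ^ 2 * (al * be)) := by
    refine (neg_le_abs _).trans ?_
    rw [abs_mul, abs_mul, abs_mul, abs_mul, abs_of_nonneg hk]
    have h1 : |Real.sign (a - b)| * |Ht - Hs| ≤ 1 * |Ht - Hs| := mul_le_mul_of_nonneg_right sg (abs_nonneg _)
    have h2 := mul_le_mul h1 hVy (abs_nonneg _) (by positivity)
    have h3 := mul_le_mul h2 (m2 _ _ bps bch) (abs_nonneg _) (by positivity)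
    have h4 := mul_le_mul_of_nonneg_right h3 hk
    linarith
  linarith

end ES

open MeasureTheory Set Filter Topology

namespace ES

lemma int_indic (R : ℝ) (hR : 0 < R) :
    Integrable ((Icc (-R) R ×ˢ Icc (0:ℝ) 1).indicator (fun _ : ℝ × ℝ => (1:ℝ))) ∧
    ∫ z, (Icc (-R) R ×ˢ Icc (0:ℝ) 1).indicator (fun _ : ℝ × ℝ => (1:ℝ)) z = 2 * R := by
  have mK : MeasurableSet (Icc (-R) R ×ˢ Icc (0:ℝ) 1) := measurableSet_Icc.prod measurableSet_Icc
  have hv : volume (Icc (-R) R ×ˢ Icc (0:ℝ) 1) = ENNReal.ofReal (2 * R) := by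
    rw [Measure.volume_eq_prod, Measure.prod_prod, Real.volume_Icc, Real.volume_Icc]
    rw [show R - -R = 2 * R by ring, show (1:ℝ) - 0 = 1 by ring, ENNReal.ofReal_one, mul_one]
  constructor
  · rw [integrable_indicator_iff mK]
    exact integrableOn_const (by rw [hv]; exact ENNReal.ofReal_ne_top)
  · rw [integral_indicator mK, setIntegral_const]
    simp only [Measure.real, hv, smul_eq_mul, mul_one]
    exact ENNReal.toReal_ofReal (by positivity)

lemma doubling {p : ℝ} (hp : p ∈ Ioc (1/2 : ℝ) 1) {V ρ : ℝ → ℝ} (hc : Coef V ρ) {u₀ : ℝ → ℝ}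
    (hu₀ : Measurable u₀) (hu₀m : ∀ x, u₀ x ∈ Icc (0:ℝ) 1) {u₁ u₂ : ℝ × ℝ → ℝ}
    (hu₁ : IsEntropySolution p V ρ u₀ u₁) (hu₂ : IsEntropySolution p V ρ u₀ u₂)
    {ψ χ : ℝ → ℝ} (hψ : TT ψ) (hχ : TX χ) :
    0 ≤ ∫ z : ℝ × ℝ, (|uext u₀ u₁ z - uext u₀ u₂ z| * (deriv ψ z.1 * χ z.2)
      + Hv z.1 * (Q p (uext u₀ u₁ z) (uext u₀ u₂ z) * (ψ z.1 * deriv χ z.2))) := by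
  have mw1 := measurable_uext hu₀ hu₁.1
  have bw1 := uext_mem hu₀m hu₁.2.1
  have mw2 := measurable_uext hu₀ hu₂.1
  have bw2 := uext_mem hu₀m hu₂.2.1
  have K1 := fun g h k (hg : TT g) (hh : TX h) hk => krz hp hc hu₀ hu₀m hu₁ (g := g) (h := h) hg hh (k := k) hk
  have K2 := fun g h k (hg : TT g) (hh : TX h) hk => krz hp hc hu₀ hu₀m hu₂ (g := g) (h := h) hg hh (k := k) hk
  set w1 := uext u₀ u₁ with hw1
  set w2 := uext u₀ u₂ with hw2
  clear_value w1 w2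
  obtain ⟨M1, R, hM1, hR, b1, b2, b3⟩ := hψ.bounds
  obtain ⟨M2, R', hM2, hR', c1, c2, -⟩ := hχ.bounds
  obtain ⟨a0, b0, ha0, hb0, hab, c3⟩ := hχ.exists_Icc
  obtain ⟨N', hN', c4⟩ := hc.mul_bdd hχ
  have c5 : ∀ x, x ∉ Icc (0:ℝ) 1 → χ x = 0 ∧ deriv χ x = 0 :=
    fun x hx => hχ.zero_of_notMem (fun h => hx (Ioo_subset_Icc_self h))
  obtain ⟨N, hN, hVN⟩ := hc.bdd (a := a0 / 2) (b := (b0 + 1) / 2) (by linarith) (by linarith)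
  set M := max M1 M2 with hM
  have hMpos : 0 < M := lt_max_of_lt_left hM1
  have mψ := hψ.cd.continuous.measurable
  have mχ := hχ.cd.continuous.measurable
  have mψ' := measurable_deriv ψ
  have mχ' := measurable_deriv χ
  have mV := hc.mV
  have mρ := hc.mρ
  have mH := measurable_Hv
  have mQ : Measurable (fun z => Q p (w1 z) (w2 z)) := measurable_Q p mw1 mw2
  have bQ : ∀ z w, |Q p (w1 z) (w2 w)| ≤ 1 := fun z w =>
    (Q_abs hp (bw1 z) (bw2 w)).trans (abs_sub_le_one (bw1 z) (bw2 w))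
  set G : ℝ × ℝ → ℝ := fun z => |w1 z - w2 z| * (deriv ψ z.1 * χ z.2)
      + Hv z.1 * (Q p (w1 z) (w2 z) * (ψ z.1 * deriv χ z.2)) with hG
  have iG : Integrable G := by
    have i1 := (int_gh hc hψ hχ (A := fun z => |w1 z - w2 z|) (C := 1) (by fun_prop)
      (fun z => by rw [abs_abs]; exact abs_sub_le_one (bw1 z) (bw2 z))).1
    have i2 := (int_gh hc hψ hχ (A := fun z => Hv z.1 * Q p (w1 z) (w2 z)) (C := 1) (by fun_prop)
      (fun z => by rw [abs_mul]; exact mul_le_one₀ (abs_Hv_le _) (abs_nonneg _) (bQ z z))).2.1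
    refine (i1.add i2).congr (Eventually.of_forall fun z => ?_)
    simp only [Pi.add_apply, hG]; ring
  by_contra hneg
  rw [not_le] at hneg
  set C : ℝ := 3 * M ^ 2 * (2 + 2 * R) + 1 + 4 * M ^ 2 * R with hC
  have hCpos : 0 < C := by positivity
  set η : ℝ := -(∫ z, G z) / (2 * C) with hη
  have hηpos : 0 < η := div_pos (by linarith) (by positivity)
  suffices hfin : 0 ≤ (∫ z, G z) + C * η by
    have : C * η = -(∫ z, G z) / 2 := by rw [hη]; field_simp
    rw [this] at hfin
    linarith
  obtain ⟨e, ie, he0, heη, δ0, hδ0, hap⟩ := approx mw2 bw2 R hηpos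
  have hsub : Icc (a0/2) ((b0+1)/2) ⊆ Ioo (0:ℝ) 1 := fun x hx => ⟨by linarith [hx.1], by linarith [hx.2]⟩
  have ucV := isCompact_Icc.uniformContinuousOn_of_continuous (hc.cV.mono hsub)
  have ucVρ := isCompact_Icc.uniformContinuousOn_of_continuous ((hc.cV.mono hsub).mul
    (hc.cρ.mono (hsub.trans Ioo_subset_Icc_self)))
  obtain ⟨δ1, hδ1, hV1⟩ := Metric.uniformContinuousOn_iff.1 ucV η hηpos
  obtain ⟨δ2, hδ2, hV2⟩ := Metric.uniformContinuousOn_iff.1 ucVρ η hηpos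
  obtain ⟨δ, hδ, hδ0', hδ1', hδ2', hδ3, hδ4⟩ : ∃ δ > 0, δ ≤ δ0 ∧ δ ≤ δ1 ∧ δ ≤ δ2 ∧ δ ≤ a0 / 2 ∧ δ ≤ (1 - b0) / 2 := by
    have p1 : 0 < a0 / 2 := by linarith
    have p2 : 0 < (1 - b0) / 2 := by linarith
    refine ⟨min δ0 (min δ1 (min δ2 (min (a0/2) ((1-b0)/2)))), by positivity, ?_, ?_, ?_, ?_, ?_⟩ <;> simp
  obtain ⟨β, hβ, iβ1, hβ0⟩ := exists_moll hδ
  obtain ⟨Mβ, Rβ, hMβ, -, d1, d2, d3⟩ := hβ.bounds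
  have mβ := hβ.cd.continuous.measurable
  have mβ' := measurable_deriv β
  have iβ : Integrable β := hβ.cd.continuous.integrable_of_hasCompactSupport hβ.cs
  have iβ' : Integrable (deriv β) :=
    (hβ.cd.continuous_deriv (by norm_num)).integrable_of_hasCompactSupport hβ.cs.deriv
  set B' : ℝ := ∫ x, |deriv β x| with hB'
  have hB'0 : 0 ≤ B' := integral_nonneg fun x => abs_nonneg _
  obtain ⟨ε, hε, hεδ, hεη⟩ : ∃ ε > 0, ε ≤ δ ∧ M ^ 2 * (2 * ε * B') + N * M ^ 2 * (2 * ε) ≤ η := by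
    have hD : 0 < M ^ 2 * (2 * B') + N * M ^ 2 * 2 := by positivity
    refine ⟨min δ (η / (M ^ 2 * (2 * B') + N * M ^ 2 * 2)), by positivity, min_le_left _ _, ?_⟩
    have := min_le_right δ (η / (M ^ 2 * (2 * B') + N * M ^ 2 * 2))
    rw [le_div_iff₀ hD] at this
    linarith
  obtain ⟨α, hα, iα1, hα0⟩ := exists_moll hε
  obtain ⟨Mα, Rα, hMα, -, f1, f2, f3⟩ := hα.bounds
  have mα := hα.cd.continuous.measurable
  have mα' := measurable_deriv α
  have iα : Integrable α := hα.cd.continuous.integrable_of_hasCompactSupport hα.cs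
  have hα0' : ∀ t, δ ≤ |t| → α t = 0 ∧ deriv α t = 0 := fun t ht => hα0 t (hεδ.trans ht)
  -- differentiability
  have dψ : Differentiable ℝ ψ := hψ.cd.differentiable (by norm_num)
  have dχ : Differentiable ℝ χ := hχ.cd.differentiable (by norm_num)
  have dα : Differentiable ℝ α := hα.cd.differentiable (by norm_num)
  have dβ : Differentiable ℝ β := hβ.cd.differentiable (by norm_num)
  -- integrands
  set I1 : (ℝ × ℝ) × (ℝ × ℝ) → ℝ := fun q =>
    |w1 q.1 - w2 q.2| * ((deriv ψ q.1.1 * α (q.1.1 - q.2.1) + ψ q.1.1 * deriv α (q.1.1 - q.2.1)) *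
      (χ q.1.2 * β (q.1.2 - q.2.2))) + Hv q.1.1 * (Q p (w1 q.1) (w2 q.2) * ((ψ q.1.1 * α (q.1.1 - q.2.1)) *
      (deriv χ q.1.2 * β (q.1.2 - q.2.2) + χ q.1.2 * deriv β (q.1.2 - q.2.2)))
      - Real.sign (w1 q.1 - w2 q.2) * (V q.1.2 * (w1 q.1 - ρ q.1.2)) *
        ((ψ q.1.1 * α (q.1.1 - q.2.1)) * (χ q.1.2 * β (q.1.2 - q.2.2)))) with hI1
  set I2 : (ℝ × ℝ) × (ℝ × ℝ) → ℝ := fun q =>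
    |w2 q.2 - w1 q.1| * ((ψ q.1.1 * -deriv α (q.1.1 - q.2.1)) *
      (χ q.1.2 * β (q.1.2 - q.2.2))) + Hv q.2.1 * (Q p (w2 q.2) (w1 q.1) * ((ψ q.1.1 * α (q.1.1 - q.2.1)) *
      (χ q.1.2 * -deriv β (q.1.2 - q.2.2)))
      - Real.sign (w2 q.2 - w1 q.1) * (V q.2.2 * (w2 q.2 - ρ q.2.2)) *
        ((ψ q.1.1 * α (q.1.1 - q.2.1)) * (χ q.1.2 * β (q.1.2 - q.2.2)))) with hI2
  -- sections are nonnegative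
  have P1 : ∀ w, 0 ≤ ∫ z, I1 (z, w) := by
    intro w
    have hg : TT (fun t => ψ t * α (t - w.1)) := by
      refine TT.of_Icc (a := -R) (b := R) ?_ (fun t => mul_nonneg (hψ.nn _) (hα.nn _))
        (fun t ht => by simp [(b3 t ht).1])
      exact hψ.cd.mul (hα.cd.comp (by fun_prop))
    have hh : TX (fun x => χ x * β (x - w.2)) := by
      refine TX.of_Icc (a := a0) (b := b0) ?_ (fun t => mul_nonneg (hχ.nn _) (hβ.nn _)) ha0 hb0
        (fun t ht => by simp [(c3 t ht).1])
      exact hχ.cd.mul (hβ.cd.comp (by fun_prop))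
    have := K1 _ _ (w2 w) hg hh (bw2 w)
    have e1 : ∀ t, deriv (fun t => ψ t * α (t - w.1)) t = deriv ψ t * α (t - w.1) + ψ t * deriv α (t - w.1) := by
      intro t
      rw [deriv_fun_mul (dψ t) (by fun_prop), deriv_comp_sub_const]
    have e2 : ∀ t, deriv (fun x => χ x * β (x - w.2)) t = deriv χ t * β (t - w.2) + χ t * deriv β (t - w.2) := by
      intro t
      rw [deriv_fun_mul (dχ t) (by fun_prop), deriv_comp_sub_const]
    simp only [e1, e2] at this
    exact this
  have P2 : ∀ z, 0 ≤ ∫ w, I2 (z, w) := by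
    intro z
    have hg : TT (fun s => ψ z.1 * α (z.1 - s)) := by
      refine TT.of_Icc (a := z.1 - ε) (b := z.1 + ε) ?_ (fun t => mul_nonneg (hψ.nn _) (hα.nn _))
        (fun t ht => ?_)
      · exact contDiff_const.mul (hα.cd.comp (by fun_prop))
      · rw [(hα0 (z.1 - t) ?_).1, mul_zero]
        by_contra hn
        push Not at hn
        have := abs_lt.1 hn
        exact ht ⟨by linarith, by linarith⟩
    have hh : TX (fun y => χ z.2 * β (z.2 - y)) := by
      refine TX.of_Icc (a := a0 / 2) (b := (b0 + 1) / 2) ?_ (fun t => mul_nonneg (hχ.nn _) (hβ.nn _)) (by linarith)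
        (by linarith) (fun t ht => ?_)
      · exact contDiff_const.mul (hβ.cd.comp (by fun_prop))
      · by_cases hz : z.2 ∈ Icc a0 b0
        · rw [(hβ0 (z.2 - t) ?_).1, mul_zero]
          by_contra hn
          push Not at hn
          have := abs_lt.1 hn
          exact ht ⟨by linarith [hz.1], by linarith [hz.2]⟩
        · rw [(c3 _ hz).1, zero_mul]
    have := K2 _ _ (w1 z) hg hh (bw1 z)
    have e1 : ∀ t, deriv (fun s => ψ z.1 * α (z.1 - s)) t = ψ z.1 * -deriv α (z.1 - t) := by
      intro t
      rw [deriv_const_mul_field, deriv_comp_const_sub]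
    have e2 : ∀ t, deriv (fun y => χ z.2 * β (z.2 - y)) t = χ z.2 * -deriv β (z.2 - t) := by
      intro t
      rw [deriv_const_mul_field, deriv_comp_const_sub]
    simp only [e1, e2] at this
    exact this
  -- integrability
  have mQ2 : Measurable (fun q : (ℝ × ℝ) × (ℝ × ℝ) => Q p (w1 q.1) (w2 q.2)) :=
    measurable_Q p (mw1.comp measurable_fst) (mw2.comp measurable_snd)
  have ms2 : Measurable (fun q : (ℝ × ℝ) × (ℝ × ℝ) => Real.sign (w1 q.1 - w2 q.2)) :=
    measurable_sign.comp ((mw1.comp measurable_fst).sub (mw2.comp measurable_snd))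
  have bψ0 : ∀ t, t ∉ Icc (-R) R → ψ t = 0 := fun t ht => (b3 t ht).1
  have bψ0' : ∀ t, t ∉ Icc (-R) R → deriv ψ t = 0 := fun t ht => (b3 t ht).2
  have cχ0 : ∀ t, t ∉ Icc (0:ℝ) 1 → χ t = 0 := fun t ht => (c5 t ht).1
  have cχ0' : ∀ t, t ∉ Icc (0:ℝ) 1 → deriv χ t = 0 := fun t ht => (c5 t ht).2
  have α0 := fun t ht => (hα0' t ht).1
  have α0' := fun t ht => (hα0' t ht).2
  have β0 := fun t ht => (hβ0 t ht).1
  have β0' := fun t ht => (hβ0 t ht).2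
  have A1 : ∀ q : (ℝ × ℝ) × (ℝ × ℝ), |(|w1 q.1 - w2 q.2|)| ≤ 1 := fun q => by
    rw [abs_abs]; exact abs_sub_le_one (bw1 _) (bw2 _)
  have A2 : ∀ q : (ℝ × ℝ) × (ℝ × ℝ), |Hv q.1.1 * Q p (w1 q.1) (w2 q.2)| ≤ 1 := fun q => by
    rw [abs_mul]; exact mul_le_one₀ (abs_Hv_le _) (abs_nonneg _) (bQ _ _)
  have A4 : ∀ q : (ℝ × ℝ) × (ℝ × ℝ), |Hv q.2.1 * Q p (w1 q.1) (w2 q.2)| ≤ 1 := fun q => by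
    rw [abs_mul]; exact mul_le_one₀ (abs_Hv_le _) (abs_nonneg _) (bQ _ _)
  have A3 : ∀ q : (ℝ × ℝ) × (ℝ × ℝ),
      |Hv q.1.1 * (Real.sign (w1 q.1 - w2 q.2) * (w1 q.1 - ρ q.1.2))| ≤ 1 := fun q => by
    rw [abs_mul, abs_mul]
    exact mul_le_one₀ (abs_Hv_le _) (by positivity) (mul_le_one₀ (abs_sign_le _) (abs_nonneg _)
      (abs_sub_le_one (bw1 _) (hc.bρ _)))
  set W : ℝ → ℝ := (Icc (a0/2) ((b0+1)/2)).indicator V with hW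
  have mW : Measurable W := mV.indicator measurableSet_Icc
  have bW : ∀ y, |W y| ≤ N := fun y => by
    rw [hW, indicator_apply]; split_ifs with hy
    · rw [abs_of_nonneg (hc.nV y)]; exact hVN y hy
    · simpa using hN.le
  have A5 : ∀ q : (ℝ × ℝ) × (ℝ × ℝ),
      |Hv q.2.1 * (Real.sign (w1 q.1 - w2 q.2) * (w2 q.2 - ρ q.2.2)) * W q.2.2| ≤ 1 * N := fun q => by
    rw [abs_mul]
    refine mul_le_mul ?_ (bW _) (abs_nonneg _) zero_le_one
    rw [abs_mul, abs_mul]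
    exact mul_le_one₀ (abs_Hv_le _) (by positivity) (mul_le_one₀ (abs_sign_le _) (abs_nonneg _)
      (abs_sub_le_one (bw2 _) (hc.bρ _)))
  have iI1 : Integrable I1 := by
    have j1 := int4 (by fun_prop) A1 mψ' b2 bψ0' mχ c1 cχ0 mα f1 α0 mβ d1 β0
    have j2 := int4 (by fun_prop) A1 mψ b1 bψ0 mχ c1 cχ0 mα' f2 α0' mβ d1 β0
    have j3 := int4 (by fun_prop) A2 mψ b1 bψ0 mχ' c2 cχ0' mα f1 α0 mβ d1 β0
    have j4 := int4 (by fun_prop) A2 mψ b1 bψ0 mχ c1 cχ0 mα f1 α0 mβ' d2 β0'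
    have j5 := int4 (by fun_prop) A3 mψ b1 bψ0 (h := fun x => V x * χ x) (by fun_prop) c4
      (fun t ht => by simp [cχ0 t ht]) mα f1 α0 mβ d1 β0
    refine ((((j1.add j2).add j3).add j4).sub j5).congr (Eventually.of_forall fun q => ?_)
    simp only [Pi.add_apply, Pi.sub_apply, hI1]; ring
  have iI2 : Integrable I2 := by
    have j1 := int4 (by fun_prop) A1 mψ b1 bψ0 mχ c1 cχ0 mα' f2 α0' mβ d1 β0
    have j2 := int4 (by fun_prop) A4 mψ b1 bψ0 mχ c1 cχ0 mα f1 α0 mβ' d2 β0'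
    have j3 := int4 (by fun_prop) A5 mψ b1 bψ0 mχ c1 cχ0 mα f1 α0 mβ d1 β0
    refine ((j1.neg.sub j2).add j3).congr (Eventually.of_forall fun q => ?_)
    have hVW : χ q.1.2 * β (q.1.2 - q.2.2) * W q.2.2 = χ q.1.2 * β (q.1.2 - q.2.2) * V q.2.2 := by
      by_cases hx : q.1.2 ∈ Icc a0 b0
      · by_cases hy : δ ≤ |q.1.2 - q.2.2|
        · simp [β0 _ hy]
        · push Not at hy
          have := abs_lt.1 hy
          rw [hW, indicator_of_mem]
          exact ⟨by linarith [hx.1], by linarith [hx.2]⟩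
      · simp [(c3 _ hx).1]
    simp only [Pi.add_apply, Pi.sub_apply, Pi.neg_apply, hI2]
    rw [Q_comm p (w2 q.2), abs_sub_comm (w2 q.2), sign_sub_comm (w1 q.1) (w2 q.2)]
    linear_combination (Hv q.2.1 * (Real.sign (w1 q.1 - w2 q.2) * (w2 q.2 - ρ q.2.2)) *
      ψ q.1.1 * α (q.1.1 - q.2.1)) * hVW
  have S1 : 0 ≤ ∫ q, I1 q := by
    rw [Measure.volume_eq_prod, integral_prod_symm _ iI1]
    exact integral_nonneg P1
  have S2 : 0 ≤ ∫ q, I2 q := by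
    rw [Measure.volume_eq_prod, integral_prod _ iI2]
    exact integral_nonneg P2
  -- the bound
  set k : ℝ × ℝ → ℝ := fun z => α z.1 * β z.2 with hk
  set k' : ℝ × ℝ → ℝ := fun z => α z.1 * |deriv β z.2| with hk'
  have ik : Integrable k := iα.mul_prod iβ
  have ik' : Integrable k' := iα.mul_prod iβ'.abs
  have ek : ∫ z, k z = 1 := by
    rw [Measure.volume_eq_prod, integral_prod_mul α β, iα1, iβ1, one_mul]
  have ek' : ∫ z, k' z = B' := by
    rw [Measure.volume_eq_prod, integral_prod_mul α (fun x => |deriv β x|), iα1, one_mul]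
  set oK := (Icc (-R) R ×ˢ Icc (0:ℝ) 1).indicator (fun _ : ℝ × ℝ => (1:ℝ)) with hoK
  set oT := (Icc (-ε) ε ×ˢ Icc (0:ℝ) 1).indicator (fun _ : ℝ × ℝ => (1:ℝ)) with hoT
  obtain ⟨ioK, eoK⟩ := int_indic R hR
  obtain ⟨ioT, eoT⟩ := int_indic ε hε
  rw [← hoK] at ioK eoK
  rw [← hoT] at ioT eoT
  obtain ⟨g1, g1'⟩ := ker_int ik iG
  obtain ⟨g2, g2'⟩ := ker_int ik ie
  obtain ⟨g3, g3'⟩ := ker_int' ik ie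
  obtain ⟨g4, g4'⟩ := ker_int ik ioK
  obtain ⟨g5, g5'⟩ := ker_int ik' ioT
  obtain ⟨g6, g6'⟩ := ker_int ik ioT
  set B : (ℝ × ℝ) × (ℝ × ℝ) → ℝ := fun q => G q.1 * k (q.1 - q.2) +
      3 * M ^ 2 * (e q.1 * k (q.1 - q.2)) + 3 * M ^ 2 * (e q.2 * k (q.1 - q.2)) +
      (3 * M ^ 2 * η) * (oK q.1 * k (q.1 - q.2)) + M ^ 2 * (oT q.1 * k' (q.1 - q.2)) +
      (N * M ^ 2) * (oT q.1 * k (q.1 - q.2)) + (2 * M ^ 2 * η) * (oK q.1 * k (q.1 - q.2)) with hB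
  have z1 := g1.add (g2.const_mul (3 * M ^ 2))
  have z2 := z1.add (g3.const_mul (3 * M ^ 2))
  have z3 := z2.add (g4.const_mul (3 * M ^ 2 * η))
  have z4 := z3.add (g5.const_mul (M ^ 2))
  have z5 := z4.add (g6.const_mul (N * M ^ 2))
  have z6 := z5.add (g4.const_mul (2 * M ^ 2 * η))
  have iB : Integrable B := z6
  have eB : ∫ q, B q = (∫ z, G z) + 3 * M ^ 2 * (∫ z, e z) + 3 * M ^ 2 * (∫ z, e z) +
      (3 * M ^ 2 * η) * (2 * R) + M ^ 2 * (2 * ε * B') + (N * M ^ 2) * (2 * ε) + (2 * M ^ 2 * η) * (2 * R) := by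
    have e6 := integral_add z5 (g4.const_mul (2 * M ^ 2 * η))
    have e5 := integral_add z4 (g6.const_mul (N * M ^ 2))
    have e4 := integral_add z3 (g5.const_mul (M ^ 2))
    have e3 := integral_add z2 (g4.const_mul (3 * M ^ 2 * η))
    have e2 := integral_add z1 (g3.const_mul (3 * M ^ 2))
    have e1 := integral_add g1 (g2.const_mul (3 * M ^ 2))
    simp only [Pi.add_apply, integral_const_mul] at e1 e2 e3 e4 e5 e6
    simp only [hB]
    rw [e6, e5, e4, e3, e2, e1, g1', g2', g3', g4', g5', g6', ek, ek', eoK, eoT]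
    ring
  have k0 : ∀ z, 0 ≤ k z := fun z => mul_nonneg (hα.nn _) (hβ.nn _)
  have k0' : ∀ z, 0 ≤ k' z := fun z => mul_nonneg (hα.nn _) (abs_nonneg _)
  have oK0 : ∀ z, 0 ≤ oK z := fun z => indicator_nonneg (fun _ _ => zero_le_one) z
  have oT0 : ∀ z, 0 ≤ oT z := fun z => indicator_nonneg (fun _ _ => zero_le_one) z
  have hle : ∀ q, I1 q + I2 q ≤ B q := by
    rintro ⟨⟨t, x⟩, ⟨s, y⟩⟩
    have hBge : G (t, x) * k (t - s, x - y) ≤ B ((t, x), (s, y)) := by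
      have q1 := mul_nonneg (he0 (t, x)) (k0 (t - s, x - y))
      have q2 := mul_nonneg (he0 (s, y)) (k0 (t - s, x - y))
      have q3 := mul_nonneg (oK0 (t, x)) (k0 (t - s, x - y))
      have q4 := mul_nonneg (oT0 (t, x)) (k0' (t - s, x - y))
      have q5 := mul_nonneg (oT0 (t, x)) (k0 (t - s, x - y))
      have q6 := mul_nonneg (by positivity : 0 ≤ 3 * M ^ 2) q1
      have q7 := mul_nonneg (by positivity : 0 ≤ 3 * M ^ 2) q2
      have q8 := mul_nonneg (by positivity : 0 ≤ 3 * M ^ 2 * η) q3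
      have q9 := mul_nonneg (by positivity : 0 ≤ M ^ 2) q4
      have q10 := mul_nonneg (by positivity : 0 ≤ N * M ^ 2) q5
      have q11 := mul_nonneg (by positivity : 0 ≤ 2 * M ^ 2 * η) q3
      simp only [hB, Prod.mk_sub_mk]
      linarith
    by_cases c1' : t ∈ Icc (-R) R
    swap
    · refine le_trans (le_of_eq ?_) hBge
      simp [hI1, hI2, hG, b3 t c1']
    by_cases c2' : x ∈ Icc a0 b0
    swap
    · refine le_trans (le_of_eq ?_) hBge
      simp [hI1, hI2, hG, c3 x c2']
    by_cases c3' : ε ≤ |t - s|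
    · refine le_trans (le_of_eq ?_) hBge
      simp [hI1, hI2, hk, hα0 _ c3']
    by_cases c4' : δ ≤ |x - y|
    · refine le_trans (le_of_eq ?_) hBge
      simp [hI1, hI2, hk, hβ0 _ c4']
    push Not at c3' c4'
    have hx01 : x ∈ Icc (0:ℝ) 1 := ⟨by linarith [c2'.1], by linarith [c2'.2]⟩
    have hxc : x ∈ Icc (a0 / 2) ((b0 + 1) / 2) := ⟨by linarith [c2'.1], by linarith [c2'.2]⟩
    have hab4 := abs_lt.1 c4'
    have hyc : y ∈ Icc (a0 / 2) ((b0 + 1) / 2) := ⟨by linarith [c2'.1], by linarith [c2'.2]⟩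
    have hoK1 : oK (t, x) = 1 := by
      rw [hoK, indicator_of_mem]; exact ⟨c1', hx01⟩
    have hoTH : |Hv t - Hv s| ≤ oT (t, x) := by
      have hab3 := abs_lt.1 c3'
      by_cases ht : t ∈ Icc (-ε) ε
      · rw [hoT, indicator_of_mem (show (t, x) ∈ Icc (-ε) ε ×ˢ Icc (0:ℝ) 1 from ⟨ht, hx01⟩)]
        have i1 := Hv_nonneg t
        have i2 := Hv_nonneg s
        have i3 := Hv_le_one t
        have i4 := Hv_le_one s
        rw [abs_le]; constructor <;> linarith
      · have : Hv t = Hv s := by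
          rw [mem_Icc, not_and_or, not_le, not_le] at ht
          rcases ht with ht | ht
          · simp only [Hv]
            rw [if_neg (by linarith), if_neg (by linarith)]
          · simp only [Hv]
            rw [if_pos (by linarith), if_pos (by linarith)]
        rw [this, sub_self, abs_zero]; exact oT0 _
    have hb := bw2 (s, y)
    have hVy : |V y * (w2 (s, y) - ρ y)| ≤ N := by
      rw [abs_mul, abs_of_nonneg (hc.nV y)]
      have := abs_sub_le_one hb (hc.bρ y)
      calc V y * |w2 (s, y) - ρ y| ≤ V y * 1 := mul_le_mul_of_nonneg_left this (hc.nV y)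
        _ ≤ N := by rw [mul_one]; exact hVN y hyc
    have hVV : |V x * (w2 (s, y) - ρ x) - V y * (w2 (s, y) - ρ y)| ≤ 2 * η := by
      have j1 := hV1 x hxc y hyc (by rw [Real.dist_eq]; linarith)
      have j2 := hV2 x hxc y hyc (by rw [Real.dist_eq]; linarith)
      rw [Real.dist_eq] at j1 j2
      simp only [Pi.mul_apply] at j2
      have j3 : V x * (w2 (s, y) - ρ x) - V y * (w2 (s, y) - ρ y) =
        w2 (s, y) * (V x - V y) - (V x * ρ x - V y * ρ y) := by ring
      have j4 : |w2 (s, y) * (V x - V y)| ≤ η := by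
        rw [abs_mul, abs_of_nonneg hb.1]
        calc _ ≤ 1 * |V x - V y| := mul_le_mul_of_nonneg_right hb.2 (abs_nonneg _)
          _ ≤ η := by rw [one_mul]; exact j1.le
      rw [j3]
      refine (abs_sub _ _).trans ?_
      linarith
    have hE : |w2 (t, x) - w2 (s, y)| ≤ e (t, x) + e (s, y) + η :=
      hap (t, x) (s, y) c1' hx01 (by simp only; linarith) (by simp only; linarith)
    have hpt := pointwise hp (bw1 (t, x)) hb (bw2 (t, x)) (hψ.nn t) (hχ.nn x) (hα.nn (t - s)) (hβ.nn (x - y))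
      hMpos.le ((b1 t).trans (le_max_left M1 M2)) ((b2 t).trans (le_max_left M1 M2)) ((c1 x).trans (le_max_right M1 M2))
      ((c2 x).trans (le_max_right M1 M2)) (Hv_nonneg t) (Hv_le_one t) (hc.nV x) hVy hVV hE
      (al' := deriv α (t - s)) (be' := deriv β (x - y)) (Hs := Hv s)
    have hpt2 : |Hv t - Hv s| * (M ^ 2 * (α (t - s) * |deriv β (x - y)|) + N * M ^ 2 * (α (t - s) * β (x - y))) ≤
      oT (t, x) * (M ^ 2 * (α (t - s) * |deriv β (x - y)|) + N * M ^ 2 * (α (t - s) * β (x - y))) := by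
      refine mul_le_mul_of_nonneg_right hoTH ?_
      have := k0 (t - s, x - y)
      have := k0' (t - s, x - y)
      simp only [hk, hk'] at *
      positivity
    simp only [hB, hI1, hI2, hG, Prod.mk_sub_mk, hk, hk', hoK1]
    refine hpt.trans ?_
    linarith
  have hmono := integral_mono (iI1.add iI2) iB hle
  rw [integral_add' iI1 iI2, eB] at hmono
  have hM2 : 0 < 3 * M ^ 2 := by positivity
  have := mul_le_mul_of_nonneg_left heη hM2.le
  rw [hC]
  linarith

end ES

open MeasureTheory Set Filter Topology

namespace ES

/-- two sided cutoff -/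
noncomputable def cut (ε δ : ℝ) (x : ℝ) : ℝ :=
  Real.smoothTransition (x / ε - 1) * Real.smoothTransition ((1 - x) / δ - 1)

lemma cut_nonneg (ε δ x : ℝ) : 0 ≤ cut ε δ x :=
  mul_nonneg (Real.smoothTransition.nonneg _) (Real.smoothTransition.nonneg _)

lemma cut_le_one (ε δ x : ℝ) : cut ε δ x ≤ 1 :=
  mul_le_one₀ (Real.smoothTransition.le_one _) (Real.smoothTransition.nonneg _)
    (Real.smoothTransition.le_one _)

lemma cut_zero {ε δ x : ℝ} (hε : 0 < ε) (hδ : 0 < δ) (hx : x ∉ Icc ε (1 - δ)) : cut ε δ x = 0 := by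
  unfold cut
  rw [mem_Icc, not_and_or, not_le, not_le] at hx
  rcases hx with hx | hx
  · rw [Real.smoothTransition.zero_of_nonpos, zero_mul]
    rw [sub_nonpos, div_le_one hε]; exact hx.le
  · rw [Real.smoothTransition.zero_of_nonpos (x := (1 - x) / δ - 1), mul_zero]
    rw [sub_nonpos, div_le_one hδ]; linarith

lemma cut_one {ε δ x : ℝ} (hε : 0 < ε) (hδ : 0 < δ) (hx : x ∈ Icc (2 * ε) (1 - 2 * δ)) :
    cut ε δ x = 1 := by
  unfold cut
  rw [Real.smoothTransition.one_of_one_le, Real.smoothTransition.one_of_one_le, one_mul]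
  · rw [le_sub_iff_add_le, le_div_iff₀ hδ]; linarith [hx.2]
  · rw [le_sub_iff_add_le, le_div_iff₀ hε]; linarith [hx.1]

lemma cut_contDiff (ε δ : ℝ) : ContDiff ℝ 2 (cut ε δ) := by
  have h : ContDiff ℝ 2 Real.smoothTransition := Real.smoothTransition.contDiff (n := 2)
  exact (h.comp (by fun_prop)).mul (h.comp (by fun_prop))

lemma cut_TX {ε δ : ℝ} (hε : 0 < ε) (hδ : 0 < δ) : TX (cut ε δ) :=
  TX.of_Icc (cut_contDiff ε δ) (cut_nonneg ε δ) hε (by linarith) (fun _ hx => cut_zero hε hδ hx)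

lemma sT_bound : ∃ M, 0 < M ∧ (∀ x, |deriv Real.smoothTransition x| ≤ M) ∧
    ∀ x, x ∉ Icc (0:ℝ) 1 → deriv Real.smoothTransition x = 0 := by
  have h : ContDiff ℝ 2 Real.smoothTransition := Real.smoothTransition.contDiff (n := 2)
  have h0 : ∀ x, x ∉ Icc (0:ℝ) 1 → deriv Real.smoothTransition x = 0 := by
    intro x hx
    rw [mem_Icc, not_and_or, not_le, not_le] at hx
    rcases hx with hx | hx
    · have : Real.smoothTransition =ᶠ[𝓝 x] fun _ => 0 := by
        filter_upwards [Iio_mem_nhds hx] with y hy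
        exact Real.smoothTransition.zero_of_nonpos (le_of_lt hy)
      rw [this.deriv_eq, deriv_const]
    · have : Real.smoothTransition =ᶠ[𝓝 x] fun _ => 1 := by
        filter_upwards [Ioi_mem_nhds hx] with y hy
        exact Real.smoothTransition.one_of_one_le (le_of_lt hy)
      rw [this.deriv_eq, deriv_const]
  obtain ⟨M, hM⟩ := (isCompact_Icc (a := (0:ℝ)) (b := 1)).exists_bound_of_continuousOn
    (h.continuous_deriv (by norm_num)).continuousOn
  refine ⟨max 1 M, by positivity, fun x => ?_, h0⟩
  by_cases hx : x ∈ Icc (0:ℝ) 1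
  · exact (hM x hx).trans (le_max_right _ _)
  · rw [h0 x hx, abs_zero]; positivity

lemma cut_deriv {M : ℝ} (hM : ∀ x, |deriv Real.smoothTransition x| ≤ M)
    (h0 : ∀ x, x ∉ Icc (0:ℝ) 1 → deriv Real.smoothTransition x = 0) {ε δ : ℝ} (hε : 0 < ε)
    (hδ : 0 < δ) (x : ℝ) : |deriv (cut ε δ) x| ≤
      (Icc ε (2 * ε)).indicator (fun _ => M / ε) x +
      (Icc (1 - 2 * δ) (1 - δ)).indicator (fun _ => M / δ) x := by
  have h : ContDiff ℝ 2 Real.smoothTransition := Real.smoothTransition.contDiff (n := 2)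
  have hd : Differentiable ℝ Real.smoothTransition := h.differentiable (by norm_num)
  have d1 : HasDerivAt (fun x => Real.smoothTransition (x / ε - 1))
      (deriv Real.smoothTransition (x / ε - 1) * (1 / ε)) x := by
    have e : HasDerivAt (fun x : ℝ => x / ε - 1) (1 / ε) x :=
      ((hasDerivAt_id x).div_const ε).sub_const 1
    exact HasDerivAt.comp x (hd (x / ε - 1)).hasDerivAt e
  have d2 : HasDerivAt (fun x => Real.smoothTransition ((1 - x) / δ - 1))
      (deriv Real.smoothTransition ((1 - x) / δ - 1) * (-1 / δ)) x := by
    have e : HasDerivAt (fun x : ℝ => (1 - x) / δ - 1) (-1 / δ) x :=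
      (((hasDerivAt_id x).const_sub 1).div_const δ).sub_const 1
    exact HasDerivAt.comp x (hd ((1 - x) / δ - 1)).hasDerivAt e
  have hdc : deriv (cut ε δ) x = _ := (d1.mul d2).deriv
  rw [hdc]
  refine (abs_add_le _ _).trans (add_le_add ?_ ?_)
  · rw [abs_mul, abs_of_nonneg (Real.smoothTransition.nonneg _)]
    refine (mul_le_of_le_one_right (abs_nonneg _) (Real.smoothTransition.le_one _)).trans ?_
    rw [indicator_apply]; split_ifs with hx
    · rw [abs_mul, abs_of_nonneg (by positivity : 0 ≤ 1 / ε), mul_one_div]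
      exact div_le_div_of_nonneg_right (hM _) hε.le
    · rw [h0, zero_mul, abs_zero]
      intro hn
      apply hx
      have a1 := hn.1
      have a2 := hn.2
      rw [sub_nonneg, one_le_div hε] at a1
      rw [sub_le_iff_le_add, div_le_iff₀ hε] at a2
      exact ⟨a1, by linarith⟩
  · rw [abs_mul, abs_of_nonneg (Real.smoothTransition.nonneg _)]
    refine (mul_le_of_le_one_left (abs_nonneg _) (Real.smoothTransition.le_one _)).trans ?_
    rw [indicator_apply]; split_ifs with hx
    · rw [abs_mul, neg_div, abs_neg, abs_of_nonneg (by positivity : 0 ≤ 1 / δ), mul_one_div]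
      exact div_le_div_of_nonneg_right (hM _) hδ.le
    · rw [h0, zero_mul, abs_zero]
      intro hn
      apply hx
      have a1 := hn.1
      have a2 := hn.2
      rw [sub_nonneg, one_le_div hδ] at a1
      rw [sub_le_iff_le_add, div_le_iff₀ hδ] at a2
      exact ⟨by linarith, by linarith⟩

lemma TT.integrable {g : ℝ → ℝ} (hg : TT g) : Integrable g :=
  hg.cd.continuous.integrable_of_hasCompactSupport hg.cs

lemma TT.integrable_deriv {g : ℝ → ℝ} (hg : TT g) : Integrable (deriv g) :=
  (hg.cd.continuous_deriv (by norm_num)).integrable_of_hasCompactSupport hg.cs.deriv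

lemma cut_deriv_int : ∃ B : ℝ, 0 ≤ B ∧ ∀ ε δ : ℝ, 0 < ε → 0 < δ → ∫ x, |deriv (cut ε δ) x| ≤ B := by
  obtain ⟨M, hM0, hM, h0⟩ := sT_bound
  refine ⟨M + M, by positivity, fun ε δ hε hδ => ?_⟩
  have key : ∀ a b c : ℝ, Integrable ((Icc a b).indicator (fun _ : ℝ => c)) := fun a b c =>
    (integrable_indicator_iff measurableSet_Icc).2 (integrableOn_const (by simp))
  refine (integral_mono (cut_TX hε hδ).toTT.integrable_deriv.abs ((key _ _ _).add (key _ _ _))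
    (cut_deriv hM h0 hε hδ)).trans (le_of_eq ?_)
  rw [integral_add' (key _ _ _) (key _ _ _), integral_indicator measurableSet_Icc,
    integral_indicator measurableSet_Icc, setIntegral_const, setIntegral_const]
  rw [Measure.real, Measure.real, Real.volume_Icc, Real.volume_Icc,
    ENNReal.toReal_ofReal (by linarith), ENNReal.toReal_ofReal (by linarith)]
  simp only [smul_eq_mul]
  field_simp
  ring

lemma l2_core {p : ℝ} (hp : p ∈ Ioc (1/2 : ℝ) 1) {V ρ : ℝ → ℝ} (hc : Coef V ρ) {u₀ : ℝ → ℝ}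
    (hu₀ : Measurable u₀) (hu₀m : ∀ x, u₀ x ∈ Icc (0:ℝ) 1) {u : ℝ × ℝ → ℝ}
    (hu : IsEntropySolution p V ρ u₀ u) {g h : ℝ → ℝ} (hg : TT g) (hh : TX h)
    {c : ℝ} (hcc : c ∈ Icc (0:ℝ) 1) :
    Integrable (fun z : ℝ × ℝ => Hv z.1 * (uext u₀ u z - ρ z.2) ^ 2 * (g z.1 * (V z.2 * h z.2))) ∧
    ∫ z : ℝ × ℝ, Hv z.1 * (uext u₀ u z - ρ z.2) ^ 2 * (g z.1 * (V z.2 * h z.2)) ≤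
      2 * ((∫ t, |deriv g t|) * (∫ x, h x) + (∫ t, g t) * ∫ x, |deriv h x|)
      + (∫ t, g t) * ∫ x, (ρ x - c) ^ 2 * (V x * h x) := by
  have hE := ext_ineq hp hc hu₀ hu₀m hu hg hh hcc (s := fun v => v - c) (by fun_prop)
    (fun a b hab => by simpa using hab) (fun v hv => abs_sub_le_one hv hcc)
  have mw := measurable_uext hu₀ hu.1
  have bw := uext_mem hu₀m hu.2.1
  set w := uext u₀ u with hw
  clear_value w
  have mH := measurable_Hv
  have mρ := hc.mρ
  have mV := hc.mV
  have i1 := (int_gh hc hg hh (A := fun z => Hv z.1 * (w z - ρ z.2) ^ 2) (C := 1) (by fun_prop)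
    (fun z => by
      rw [abs_mul, abs_pow]
      exact mul_le_one₀ (abs_Hv_le _) (by positivity)
        (pow_le_one₀ (abs_nonneg _) (abs_sub_le_one (bw z) (hc.bρ _))))).2.2.2
  refine ⟨i1, ?_⟩
  obtain ⟨hlax, -⟩ := laxPair (p := p) (k := c) (s := fun v => v - c) (by fun_prop)
    (fun a b hab => by simpa using hab)
  set f : ℝ → ℝ := fun u => ∫ v in c..u, (v - c) with hf
  set q : ℝ → ℝ := fun u => ∫ v in c..u, deriv (fluxJ p) v * (v - c) with hq
  have mf : Measurable f := hlax.1.continuous.measurable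
  have mq : Measurable q := hlax.2.1.continuous.measurable
  have bf : ∀ z, |f (w z)| ≤ 1 := fun z => abs_int_le hcc (bw z) (fun v hv => abs_sub_le_one hv hcc)
  have bq : ∀ z, |q (w z)| ≤ 1 := fun z => abs_int_le hcc (bw z) (fun v hv => by
    rw [abs_mul]
    exact mul_le_one₀ (abs_deriv_fluxJ_le hp hv) (abs_nonneg _) (abs_sub_le_one hv hcc))
  have bHq : ∀ z : ℝ × ℝ, |Hv z.1 * q (w z)| ≤ 1 := fun z => by
    rw [abs_mul]; exact mul_le_one₀ (abs_Hv_le _) (abs_nonneg _) (bq z)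
  have j1 := (int_gh hc hg hh (A := fun z => f (w z)) (C := 1) (by fun_prop) bf).1
  have j2 := (int_gh hc hg hh (A := fun z => Hv z.1 * q (w z)) (C := 1) (by fun_prop) bHq).2.1
  have j3 := (int_gh hc hg hh (A := fun z => Hv z.1 * ((w z - c) * (w z - ρ z.2))) (C := 1) (by fun_prop)
    (fun z => by
      rw [abs_mul, abs_mul]
      exact mul_le_one₀ (abs_Hv_le _) (by positivity)
        (mul_le_one₀ (abs_sub_le_one (bw z) hcc) (abs_nonneg _) (abs_sub_le_one (bw z) (hc.bρ _))))).2.2.2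
  obtain ⟨N, hN, bN⟩ := hc.mul_bdd hh
  have mh := hh.cd.continuous.measurable
  have ir : Integrable (fun x => (ρ x - c) ^ 2 * (V x * h x)) := by
    refine integrable_of_bdd (S := Icc (0:ℝ) 1) (by simp) N (by fun_prop) (fun z hz => ?_) (fun z => ?_)
    · rw [(hh.zero_of_notMem (fun h => hz (Ioo_subset_Icc_self h))).1]; simp
    · rw [abs_mul, abs_pow]
      calc _ ≤ 1 * N := mul_le_mul (pow_le_one₀ (abs_nonneg _) (abs_sub_le_one (hc.bρ _) hcc)) (bN z)
            (abs_nonneg _) zero_le_one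
        _ = N := one_mul N
  have k1 : Integrable (fun z : ℝ × ℝ => |deriv g z.1| * h z.2) := hg.integrable_deriv.abs.mul_prod hh.integrable
  have k2 : Integrable (fun z : ℝ × ℝ => g z.1 * |deriv h z.2|) := hg.integrable.mul_prod hh.integrable_deriv.abs
  have k3 : Integrable (fun z : ℝ × ℝ => g z.1 * ((ρ z.2 - c) ^ 2 * (V z.2 * h z.2))) :=
    hg.integrable.mul_prod ir
  have l1 : ∫ z : ℝ × ℝ, |deriv g z.1| * h z.2 = (∫ t, |deriv g t|) * (∫ x, h x) := by
    rw [Measure.volume_eq_prod, integral_prod_mul (fun t => |deriv g t|) h]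
  have l2 : ∫ z : ℝ × ℝ, g z.1 * |deriv h z.2| = (∫ t, g t) * (∫ x, |deriv h x|) := by
    rw [Measure.volume_eq_prod, integral_prod_mul g (fun x => |deriv h x|)]
  have l3 : ∫ z : ℝ × ℝ, g z.1 * ((ρ z.2 - c) ^ 2 * (V z.2 * h z.2)) =
      (∫ t, g t) * ∫ x, (ρ x - c) ^ 2 * (V x * h x) := by
    rw [Measure.volume_eq_prod, integral_prod_mul g (fun x => (ρ x - c) ^ 2 * (V x * h x))]
  have m1 := k1.add k2
  have m2 := m1.add (k3.const_mul (1/2))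
  have m3 := m2.sub (i1.const_mul (1/2))
  have iF := (j1.add j2).sub j3
  have hmono := integral_mono iF m3 (fun z => ?_)
  · have hF : (∫ z : ℝ × ℝ, (f (w z) * (deriv g z.1 * h z.2)
      + Hv z.1 * (q (w z) * (g z.1 * deriv h z.2)
        - (w z - c) * (V z.2 * (w z - ρ z.2)) * (g z.1 * h z.2)))) = _ :=
      integral_congr_ae (Eventually.of_forall fun z => show _ =
        (((fun z : ℝ × ℝ => f (w z) * (deriv g z.1 * h z.2)) +
          (fun z : ℝ × ℝ => Hv z.1 * q (w z) * (g z.1 * deriv h z.2))) -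
          (fun z : ℝ × ℝ => Hv z.1 * ((w z - c) * (w z - ρ z.2)) * (g z.1 * (V z.2 * h z.2)))) z by
        simp only [Pi.add_apply, Pi.sub_apply]; ring)
    rw [hF] at hE
    have hh2 := hE.trans hmono
    rw [integral_sub' m2 (i1.const_mul (1/2)), integral_add' m1 (k3.const_mul (1/2)), integral_add' k1 k2,
      integral_const_mul, integral_const_mul, l1, l2, l3] at hh2
    linarith
  · simp only [Pi.add_apply, Pi.sub_apply]
    have hh0 := hh.nn z.2
    have hg0 := hg.nn z.1
    have n1 : f (w z) * (deriv g z.1 * h z.2) ≤ |deriv g z.1| * h z.2 := by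
      refine (le_abs_self _).trans ?_
      rw [abs_mul, abs_mul, abs_of_nonneg hh0]
      exact mul_le_of_le_one_left (by positivity) (bf z)
    have n2 : Hv z.1 * q (w z) * (g z.1 * deriv h z.2) ≤ g z.1 * |deriv h z.2| := by
      refine (le_abs_self _).trans ?_
      rw [abs_mul, abs_mul (g z.1), abs_of_nonneg hg0]
      exact mul_le_of_le_one_left (by positivity) (bHq z)
    have n3 : 0 ≤ g z.1 * (V z.2 * h z.2) := mul_nonneg hg0 (mul_nonneg (hc.nV _) hh0)
    have n4 : 1 / 2 * (Hv z.1 * (w z - ρ z.2) ^ 2) - 1 / 2 * (ρ z.2 - c) ^ 2 ≤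
        Hv z.1 * ((w z - c) * (w z - ρ z.2)) := by
      have p1 : 1 / 2 * (w z - ρ z.2) ^ 2 - 1 / 2 * (ρ z.2 - c) ^ 2 ≤ (w z - c) * (w z - ρ z.2) := by
        nlinarith [sq_nonneg (w z - c)]
      have p2 := mul_le_mul_of_nonneg_left p1 (Hv_nonneg z.1)
      have p3 := mul_le_mul_of_nonneg_right (Hv_le_one z.1) (sq_nonneg (ρ z.2 - c))
      linarith
    have n5 := mul_le_mul_of_nonneg_right n4 n3
    linarith

end ES

open MeasureTheory Set Filter Topology

namespace ES

/-- time cutoff -/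
lemma exists_time (T : ℝ) : ∃ g : ℝ → ℝ, TT g ∧ ∀ t ∈ Ioo 0 T, g t = 1 := by
  have h : ContDiff ℝ 2 Real.smoothTransition := Real.smoothTransition.contDiff (n := 2)
  refine ⟨fun t => Real.smoothTransition (t + 1) * Real.smoothTransition (T + 1 - t),
    TT.of_Icc (a := -1) (b := T + 1) ((h.comp (by fun_prop)).mul (h.comp (by fun_prop)))
    (fun t => mul_nonneg (Real.smoothTransition.nonneg _) (Real.smoothTransition.nonneg _)) ?_, ?_⟩
  · intro t ht
    rw [mem_Icc, not_and_or, not_le, not_le] at ht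
    rcases ht with ht | ht
    · rw [Real.smoothTransition.zero_of_nonpos (by linarith), zero_mul]
    · rw [Real.smoothTransition.zero_of_nonpos (x := T + 1 - t) (by linarith), mul_zero]
  · intro t ht
    simp only
    rw [Real.smoothTransition.one_of_one_le (by linarith [ht.1]),
      Real.smoothTransition.one_of_one_le (by linarith [ht.2]), one_mul]

lemma l2_piece {p : ℝ} (hp : p ∈ Ioc (1/2 : ℝ) 1) {V ρ : ℝ → ℝ} (hc : Coef V ρ) {u₀ : ℝ → ℝ}
    (hu₀ : Measurable u₀) (hu₀m : ∀ x, u₀ x ∈ Icc (0:ℝ) 1) {u : ℝ × ℝ → ℝ}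
    (hu : IsEntropySolution p V ρ u₀ u) (T : ℝ) : ∃ A B : ℝ, 0 ≤ B ∧
    ∀ ε δ c D : ℝ, 0 < ε → 0 < δ → c ∈ Icc (0:ℝ) 1 → ∫ x, (ρ x - c) ^ 2 * (V x * cut ε δ x) ≤ D →
    ∫⁻ z in Ioo 0 T ×ˢ Icc (2 * ε) (1 - 2 * δ), ENNReal.ofReal (V z.2 * (u z - ρ z.2) ^ 2) ≤
      ENNReal.ofReal (A + B * D) := by
  obtain ⟨g, hg, hg1⟩ := exists_time T
  obtain ⟨B0, hB0, hB⟩ := cut_deriv_int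
  have hgi : 0 ≤ ∫ t, g t := integral_nonneg hg.nn
  have hgi' : 0 ≤ ∫ t, |deriv g t| := integral_nonneg fun t => abs_nonneg _
  refine ⟨2 * ((∫ t, |deriv g t|) * 1 + (∫ t, g t) * B0), ∫ t, g t, hgi, ?_⟩
  intro ε δ c D hε hδ hcc hD
  obtain ⟨iI, hI⟩ := l2_core hp hc hu₀ hu₀m hu hg (cut_TX hε hδ) hcc
  have hcut1 : ∫ x, cut ε δ x ≤ 1 := by
    have e1 : ∫ x, (Icc (0:ℝ) 1).indicator (fun _ => (1:ℝ)) x = 1 := by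
      rw [integral_indicator measurableSet_Icc, setIntegral_const, Measure.real, Real.volume_Icc]
      simp
    rw [← e1]
    refine integral_mono (cut_TX hε hδ).toTT.integrable
      ((integrable_indicator_iff measurableSet_Icc).2 (integrableOn_const (by simp))) fun x => ?_
    simp only [indicator_apply]
    split_ifs with hx
    · exact cut_le_one _ _ _
    · rw [cut_zero hε hδ]
      intro hn; exact hx ⟨by linarith [hn.1], by linarith [hn.2]⟩
  have hI2 := hI.trans (add_le_add (mul_le_mul_of_nonneg_left (add_le_add
    (mul_le_mul_of_nonneg_left hcut1 hgi') (mul_le_mul_of_nonneg_left (hB ε δ hε hδ) hgi)) zero_le_two)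
    (mul_le_mul_of_nonneg_left hD hgi))
  refine le_trans ?_ (ENNReal.ofReal_le_ofReal hI2)
  rw [ofReal_integral_eq_lintegral_ofReal iI (Eventually.of_forall fun z => ?_)]
  · have mS : MeasurableSet (Ioo 0 T ×ˢ Icc (2 * ε) (1 - 2 * δ)) := measurableSet_Ioo.prod measurableSet_Icc
    refine le_trans (setLIntegral_mono_ae' mS ?_) (setLIntegral_le_lintegral (Ioo 0 T ×ˢ Icc (2 * ε) (1 - 2 * δ)) _)
    refine Eventually.of_forall fun z hz => ?_
    refine ENNReal.ofReal_le_ofReal (le_of_eq ?_)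
    have h1 := hz.1
    have h2 := hz.2
    rw [hg1 _ h1, cut_one hε hδ h2]
    simp only [Hv, uext, if_pos h1.1]
    ring
  · exact mul_nonneg (mul_nonneg (Hv_nonneg _) (sq_nonneg _))
      (mul_nonneg (hg.nn _) (mul_nonneg (hc.nV _) (cut_nonneg _ _ _)))

lemma condV2_fin {V ρ : ℝ → ℝ} (hc : Coef V ρ) (h2 : CondV2 V ρ) :
    ∫⁻ x in Ioo (0:ℝ) (7/8), ENNReal.ofReal (V x * (ρ x - ρ 0) ^ 2) < ⊤ ∧
    ∫⁻ x in Ioo (1/8:ℝ) 1, ENNReal.ofReal (V x * (ρ x - ρ 1) ^ 2) < ⊤ := by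
  have hev := (h2.eventually (gt_mem_nhds (zero_lt_one : (0:ENNReal) < 1))).and
    (Ioo_mem_nhdsGT (show (0:ℝ) < 1 by norm_num))
  obtain ⟨y, hy, hy0, hy1⟩ := hev.exists
  have key : ∀ a b c : ℝ, 0 < a → b < 1 → c ∈ Icc (0:ℝ) 1 →
      ∫⁻ x in Icc a b, ENNReal.ofReal (V x * (ρ x - c) ^ 2) < ⊤ := by
    intro a b c ha hb hcc
    obtain ⟨M, hM, hV⟩ := hc.bdd ha hb
    refine lt_of_le_of_lt (setLIntegral_mono' measurableSet_Icc (g := fun _ => ENNReal.ofReal M) ?_) ?_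
    · intro x hx
      refine ENNReal.ofReal_le_ofReal ?_
      have := abs_sub_le_one (hc.bρ x) hcc
      have h1 : (ρ x - c) ^ 2 ≤ 1 := by rw [← sq_abs]; exact pow_le_one₀ (abs_nonneg _) this
      exact (mul_le_of_le_one_right (hc.nV x) h1).trans (hV x hx)
    · rw [setLIntegral_const]
      exact ENNReal.mul_lt_top ENNReal.ofReal_lt_top (by simp)
  constructor
  · refine lt_of_le_of_lt (lintegral_mono_set (t := Ioo 0 y ∪ Icc y (7/8)) ?_) ?_
    · intro x hx
      rcases lt_or_ge x y with h | h
      · exact Or.inl ⟨hx.1, h⟩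
      · exact Or.inr ⟨h, hx.2.le⟩
    · refine lt_of_le_of_lt (lintegral_union_le _ _ _) (ENNReal.add_lt_top.2 ⟨?_, ?_⟩)
      · exact lt_of_le_of_lt le_self_add (hy.trans ENNReal.one_lt_top)
      · exact key _ _ _ hy0 (by norm_num) (hc.bρ _)
  · refine lt_of_le_of_lt (lintegral_mono_set (t := Ioo (1 - y) 1 ∪ Icc (1/8) (1 - y)) ?_) ?_
    · intro x hx
      rcases lt_or_ge (1 - y) x with h | h
      · exact Or.inl ⟨h, hx.2⟩
      · exact Or.inr ⟨hx.1.le, h⟩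
    · refine lt_of_le_of_lt (lintegral_union_le _ _ _) (ENNReal.add_lt_top.2 ⟨?_, ?_⟩)
      · exact lt_of_le_of_lt le_add_self (hy.trans ENNReal.one_lt_top)
      · exact key _ _ _ (by norm_num) (by linarith) (hc.bρ _)

lemma cut_D {V ρ : ℝ → ℝ} (hc : Coef V ρ) {a b c : ℝ} (h : ∫⁻ x in Ioo a b, ENNReal.ofReal (V x * (ρ x - c) ^ 2) < ⊤)
    {ε δ : ℝ} (hε : 0 < ε) (hδ : 0 < δ) (ha : a < ε) (hb : 1 - δ < b) :
    ∫ x, (ρ x - c) ^ 2 * (V x * cut ε δ x) ≤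
      (∫⁻ x in Ioo a b, ENNReal.ofReal (V x * (ρ x - c) ^ 2)).toReal := by
  have mV := hc.mV
  have mρ := hc.mρ
  have mc := (cut_contDiff ε δ).continuous.measurable
  rw [integral_eq_lintegral_of_nonneg_ae]
  · refine ENNReal.toReal_mono h.ne ?_
    rw [← lintegral_indicator measurableSet_Ioo]
    refine lintegral_mono fun x => ?_
    simp only [indicator_apply]
    split_ifs with hx
    · refine ENNReal.ofReal_le_ofReal ?_
      have h1 : 0 ≤ V x * (ρ x - c) ^ 2 := mul_nonneg (hc.nV x) (sq_nonneg _)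
      calc _ = V x * (ρ x - c) ^ 2 * cut ε δ x := by ring
        _ ≤ _ := mul_le_of_le_one_right h1 (cut_le_one _ _ _)
    · rw [cut_zero hε hδ (fun hn => hx ⟨by linarith [hn.1], by linarith [hn.2]⟩)]
      simp
  · exact Eventually.of_forall fun x => mul_nonneg (sq_nonneg _) (mul_nonneg (hc.nV x) (cut_nonneg _ _ _))
  · exact Measurable.aestronglyMeasurable (by fun_prop)

lemma l2_bound {p : ℝ} (hp : p ∈ Ioc (1/2 : ℝ) 1) {V ρ : ℝ → ℝ} (hc : Coef V ρ) (h2 : CondV2 V ρ) {u₀ : ℝ → ℝ}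
    (hu₀ : Measurable u₀) (hu₀m : ∀ x, u₀ x ∈ Icc (0:ℝ) 1) {u : ℝ × ℝ → ℝ}
    (hu : IsEntropySolution p V ρ u₀ u) (T : ℝ) :
    ∫⁻ z in Ioo 0 T ×ˢ Ioo (0:ℝ) 1, ENNReal.ofReal (V z.2 * (u z - ρ z.2) ^ 2) < ⊤ := by
  obtain ⟨A, B, hB, hAB⟩ := l2_piece hp hc hu₀ hu₀m hu T
  obtain ⟨f1, f2⟩ := condV2_fin hc h2
  set D1 := (∫⁻ x in Ioo (0:ℝ) (7/8), ENNReal.ofReal (V x * (ρ x - ρ 0) ^ 2)).toReal with hD1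
  set D2 := (∫⁻ x in Ioo (1/8:ℝ) 1, ENNReal.ofReal (V x * (ρ x - ρ 1) ^ 2)).toReal with hD2
  set e : ℕ → ℝ := fun n => 1 / ((n:ℝ) + 1) with he
  have e0 : ∀ n, 0 < e n := fun n => by positivity
  have ea : Antitone e := fun m n h => one_div_le_one_div_of_le (by positivity) (by gcongr)
  have left : ∫⁻ z in Ioo 0 T ×ˢ Ioc (0:ℝ) (1/2), ENNReal.ofReal (V z.2 * (u z - ρ z.2) ^ 2) < ⊤ := by
    have hU : Ioo 0 T ×ˢ Ioc (0:ℝ) (1/2) ⊆ ⋃ n, Ioo 0 T ×ˢ Icc (2 * e n) (1 - 2 * (1/4)) := by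
      intro z hz
      obtain ⟨n, hn⟩ := exists_nat_one_div_lt (show 0 < z.2 / 2 by linarith [hz.2.1])
      exact mem_iUnion.2 ⟨n, hz.1, by simp only [he]; linarith, by linarith [hz.2.2]⟩
    refine lt_of_le_of_lt (lintegral_mono_set hU) ?_
    rw [setLIntegral_iUnion_of_directed]
    · refine lt_of_le_of_lt (iSup_le fun n => ?_) (ENNReal.ofReal_lt_top (r := A + B * D1))
      exact hAB (e n) (1/4) (ρ 0) D1 (e0 n) (by norm_num) (hc.bρ 0)
        (cut_D hc f1 (e0 n) (by norm_num) (e0 n) (by norm_num))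
    · refine Monotone.directed_le fun m n h => prod_mono le_rfl (Icc_subset_Icc ?_ le_rfl)
      have := ea h
      linarith
  have right : ∫⁻ z in Ioo 0 T ×ˢ Ico (1/2:ℝ) 1, ENNReal.ofReal (V z.2 * (u z - ρ z.2) ^ 2) < ⊤ := by
    have hU : Ioo 0 T ×ˢ Ico (1/2:ℝ) 1 ⊆ ⋃ n, Ioo 0 T ×ˢ Icc (2 * (1/4)) (1 - 2 * e n) := by
      intro z hz
      obtain ⟨n, hn⟩ := exists_nat_one_div_lt (show 0 < (1 - z.2) / 2 by linarith [hz.2.2])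
      exact mem_iUnion.2 ⟨n, hz.1, by linarith [hz.2.1], by simp only [he]; linarith⟩
    refine lt_of_le_of_lt (lintegral_mono_set hU) ?_
    rw [setLIntegral_iUnion_of_directed]
    · refine lt_of_le_of_lt (iSup_le fun n => ?_) (ENNReal.ofReal_lt_top (r := A + B * D2))
      exact hAB (1/4) (e n) (ρ 1) D2 (by norm_num) (e0 n) (hc.bρ 1)
        (cut_D hc f2 (by norm_num) (e0 n) (by norm_num) (by linarith [e0 n]))
    · refine Monotone.directed_le fun m n h => prod_mono le_rfl (Icc_subset_Icc le_rfl ?_)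
      have := ea h
      linarith
  refine lt_of_le_of_lt (lintegral_mono_set (t := Ioo 0 T ×ˢ Ioc (0:ℝ) (1/2) ∪ Ioo 0 T ×ˢ Ico (1/2:ℝ) 1) ?_)
    (lt_of_le_of_lt (lintegral_union_le _ _ _) (ENNReal.add_lt_top.2 ⟨left, right⟩))
  intro z hz
  rcases le_or_gt z.2 (1/2) with h | h
  · exact Or.inl ⟨hz.1, hz.2.1, h⟩
  · exact Or.inr ⟨hz.1, h.le, hz.2.2⟩

end ES

open MeasureTheory Set Filter Topology

namespace ES

lemma exists_psi {T : ℝ} (hT : 0 < T) : ∃ ψ : ℝ → ℝ, TT ψ ∧ (∀ t, 0 < t → deriv ψ t ≤ 0) ∧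
    (∀ t ∈ Ioo 0 T, deriv ψ t ≤ -1) ∧ (∀ t, T + 1 ≤ t → ψ t = 0) := by
  have h : ContDiff ℝ 2 Real.smoothTransition := Real.smoothTransition.contDiff (n := 2)
  have hd : Differentiable ℝ Real.smoothTransition := h.differentiable (by norm_num)
  obtain ⟨M, hM0, hM, h0⟩ := sT_bound
  have hn : ∀ x, 0 ≤ deriv Real.smoothTransition x := fun x => Real.smoothTransition.monotone.deriv_nonneg
  set ψ : ℝ → ℝ := fun t => Real.smoothTransition (t + 2) * ((T + 1 - t) * Real.smoothTransition (T + 1 - t)) with hψ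
  have hz : ∀ t, T + 1 ≤ t → ψ t = 0 := fun t ht => by
    simp only [hψ]
    rw [Real.smoothTransition.zero_of_nonpos (x := T + 1 - t) (by linarith)]; ring
  have hder : ∀ t, 0 < t → deriv ψ t = -(Real.smoothTransition (T + 1 - t)) -
      (T + 1 - t) * deriv Real.smoothTransition (T + 1 - t) := by
    intro t ht
    have h1 : ψ =ᶠ[𝓝 t] fun t => (T + 1 - t) * Real.smoothTransition (T + 1 - t) := by
      filter_upwards [Ioi_mem_nhds ht] with s hs
      simp only [hψ]
      rw [Real.smoothTransition.one_of_one_le (x := s + 2) (by linarith [mem_Ioi.1 hs]), one_mul]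
    rw [h1.deriv_eq]
    have e1 : HasDerivAt (fun t : ℝ => T + 1 - t) (-1) t := (hasDerivAt_id t).const_sub (T + 1)
    have e2 : HasDerivAt (fun t : ℝ => Real.smoothTransition (T + 1 - t))
      (deriv Real.smoothTransition (T + 1 - t) * (-1)) t :=
      HasDerivAt.comp t (hd (T + 1 - t)).hasDerivAt e1
    rw [(e1.fun_mul e2).deriv]; ring
  refine ⟨ψ, ?_, ?_, ?_, hz⟩
  · refine TT.of_Icc (a := -2) (b := T + 1) ?_ ?_ ?_
    · exact (h.comp (by fun_prop)).mul (ContDiff.mul (by fun_prop) (h.comp (by fun_prop)))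
    · intro t
      rcases le_total (T + 1) t with ht | ht
      · rw [hz t ht]
      · exact mul_nonneg (Real.smoothTransition.nonneg _) (mul_nonneg (by linarith) (Real.smoothTransition.nonneg _))
    · intro t ht
      rw [mem_Icc, not_and_or, not_le, not_le] at ht
      rcases ht with ht | ht
      · simp only [hψ]
        rw [Real.smoothTransition.zero_of_nonpos (x := t + 2) (by linarith), zero_mul]
      · exact hz t ht.le
  · intro t ht
    rw [hder t ht]
    have := Real.smoothTransition.nonneg (T + 1 - t)
    rcases le_or_gt t (T + 1) with h1 | h1
    · have := mul_nonneg (by linarith : 0 ≤ T + 1 - t) (hn (T + 1 - t))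
      linarith
    · rw [h0 (T + 1 - t) (fun hx => by linarith [hx.1])]; linarith
  · intro t ht
    rw [hder t ht.1, Real.smoothTransition.one_of_one_le (by linarith [ht.2])]
    have := mul_nonneg (by linarith [ht.2] : 0 ≤ T + 1 - t) (hn (T + 1 - t))
    linarith

/-- the boundary layers -/
def bl (ε : ℝ) : Set ℝ := Icc ε (2 * ε) ∪ Icc (1 - 2 * ε) (1 - ε)

lemma measurableSet_bl (ε : ℝ) : MeasurableSet (bl ε) := measurableSet_Icc.union measurableSet_Icc

lemma stab {p : ℝ} (hp : p ∈ Ioc (1/2 : ℝ) 1) {V ρ : ℝ → ℝ} (hc : Coef V ρ) {u₀ : ℝ → ℝ}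
    (hu₀ : Measurable u₀) (hu₀m : ∀ x, u₀ x ∈ Icc (0:ℝ) 1) {u₁ u₂ : ℝ × ℝ → ℝ}
    (hu₁ : IsEntropySolution p V ρ u₀ u₁) (hu₂ : IsEntropySolution p V ρ u₀ u₂) {T : ℝ} (hT : 0 < T) :
    ∃ K : ℝ, 0 < K ∧ ∀ ε : ℝ, 0 < ε →
    ∫⁻ z in Ioo 0 T ×ˢ Icc (2 * ε) (1 - 2 * ε), ENNReal.ofReal |u₁ z - u₂ z| ≤
    ∫⁻ z in Ioo 0 (T + 1) ×ˢ bl ε, ENNReal.ofReal (K * (|u₁ z - u₂ z| / ε)) := by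
  obtain ⟨ψ, hψ, hψ1, hψ2, hψ3⟩ := exists_psi hT
  obtain ⟨N, R, hN, hR, b1, b2, b3⟩ := hψ.bounds
  obtain ⟨M, hM0, hM, h0⟩ := sT_bound
  refine ⟨N * (2 * M), by positivity, fun ε hε => ?_⟩
  have hχ := cut_TX hε hε
  have hD := doubling hp hc hu₀ hu₀m hu₁ hu₂ hψ hχ
  have mw1 := measurable_uext hu₀ hu₁.1
  have bw1 := uext_mem hu₀m hu₁.2.1
  have mw2 := measurable_uext hu₀ hu₂.1
  have bw2 := uext_mem hu₀m hu₂.2.1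
  have m1 := hu₁.1
  have m2 := hu₂.1
  have mH := measurable_Hv
  have mQ : Measurable (fun z => Q p (uext u₀ u₁ z) (uext u₀ u₂ z)) := measurable_Q p mw1 mw2
  have bQ : ∀ z, |Q p (uext u₀ u₁ z) (uext u₀ u₂ z)| ≤ 1 := fun z =>
    (Q_abs hp (bw1 z) (bw2 z)).trans (abs_sub_le_one (bw1 z) (bw2 z))
  have bd : ∀ z, |u₁ z - u₂ z| ≤ 1 := fun z => abs_sub_le_one (hu₁.2.1 z) (hu₂.2.1 z)
  set S := Ioo 0 T ×ˢ Icc (2 * ε) (1 - 2 * ε) with hS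
  set S' := Ioo 0 (T + 1) ×ˢ bl ε with hS'
  have mS : MeasurableSet S := measurableSet_Ioo.prod measurableSet_Icc
  have mS' : MeasurableSet S' := measurableSet_Ioo.prod (measurableSet_bl ε)
  have vS : volume S ≠ ⊤ := by
    rw [hS, Measure.volume_eq_prod, Measure.prod_prod, Real.volume_Ioo, Real.volume_Icc]
    exact ENNReal.mul_ne_top ENNReal.ofReal_ne_top ENNReal.ofReal_ne_top
  have vS' : volume S' ≠ ⊤ := by
    rw [hS', Measure.volume_eq_prod, Measure.prod_prod, Real.volume_Ioo]
    refine ENNReal.mul_ne_top ENNReal.ofReal_ne_top ?_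
    refine ne_top_of_le_ne_top ?_ (measure_union_le _ _)
    rw [Real.volume_Icc, Real.volume_Icc]
    exact ENNReal.add_ne_top.2 ⟨ENNReal.ofReal_ne_top, ENNReal.ofReal_ne_top⟩
  have i1 : Integrable (S.indicator fun z => |u₁ z - u₂ z|) :=
    integrable_of_bdd vS 1 (Measurable.indicator (by fun_prop) mS) (fun z hz => indicator_of_notMem hz _) (fun z => by
      rw [indicator_apply]; split_ifs
      · rw [abs_abs]; exact bd z
      · simp)
  have i2 : Integrable (S'.indicator fun z => N * (2 * M) * (|u₁ z - u₂ z| / ε)) :=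
    integrable_of_bdd vS' (N * (2 * M) * (1 / ε)) (Measurable.indicator (by fun_prop) mS')
      (fun z hz => indicator_of_notMem hz _) (fun z => by
      by_cases hz : z ∈ S'
      · rw [indicator_of_mem hz, abs_of_nonneg (by positivity)]
        have := bd z
        gcongr
      · rw [indicator_of_notMem hz, abs_zero]; positivity)
  have iF : Integrable (fun z : ℝ × ℝ => (|uext u₀ u₁ z - uext u₀ u₂ z| * (deriv ψ z.1 * cut ε ε z.2)
      + Hv z.1 * (Q p (uext u₀ u₁ z) (uext u₀ u₂ z) * (ψ z.1 * deriv (cut ε ε) z.2)))) := by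
    have i1 := (int_gh hc hψ hχ (A := fun z => |uext u₀ u₁ z - uext u₀ u₂ z|) (C := 1) (by fun_prop)
      (fun z => by rw [abs_abs]; exact abs_sub_le_one (bw1 z) (bw2 z))).1
    have i2 := (int_gh hc hψ hχ (A := fun z => Hv z.1 * Q p (uext u₀ u₁ z) (uext u₀ u₂ z)) (C := 1) (by fun_prop)
      (fun z => by rw [abs_mul]; exact mul_le_one₀ (abs_Hv_le _) (abs_nonneg _) (bQ z))).2.1
    refine (i1.add i2).congr (Eventually.of_forall fun z => ?_)
    simp only [Pi.add_apply]; ring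
  have hle : ∀ z : ℝ × ℝ, (|uext u₀ u₁ z - uext u₀ u₂ z| * (deriv ψ z.1 * cut ε ε z.2)
      + Hv z.1 * (Q p (uext u₀ u₁ z) (uext u₀ u₂ z) * (ψ z.1 * deriv (cut ε ε) z.2))) ≤
      ((S'.indicator fun z => N * (2 * M) * (|u₁ z - u₂ z| / ε)) - (S.indicator fun z => |u₁ z - u₂ z|)) z := by
    intro z
    simp only [Pi.sub_apply]
    rcases le_or_gt z.1 0 with ht | ht
    · have e1 : uext u₀ u₁ z = uext u₀ u₂ z := by simp [uext, not_lt.2 ht]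
      have e2 : Hv z.1 = 0 := by simp [Hv, not_lt.2 ht]
      rw [e1, e2, indicator_of_notMem (fun h => by linarith [h.1.1]), indicator_of_notMem (fun h => by linarith [h.1.1])]
      simp
    · have e1 : uext u₀ u₁ z = u₁ z := by simp [uext, ht]
      have e1' : uext u₀ u₂ z = u₂ z := by simp [uext, ht]
      have e2 : Hv z.1 = 1 := by simp [Hv, ht]
      have hq := Q_abs hp (bw1 z) (bw2 z)
      rw [e1, e1'] at hq ⊢
      rw [e2, one_mul]
      have d0 := abs_nonneg (u₁ z - u₂ z)
      have t1 : |u₁ z - u₂ z| * (deriv ψ z.1 * cut ε ε z.2) ≤ -(S.indicator (fun z => |u₁ z - u₂ z|) z) := by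
        rw [indicator_apply]; split_ifs with hz
        · rw [cut_one hε hε hz.2]
          have := mul_le_mul_of_nonneg_left (hψ2 _ hz.1) d0
          linarith
        · rw [neg_zero]
          exact mul_nonpos_of_nonneg_of_nonpos d0 (mul_nonpos_of_nonpos_of_nonneg (hψ1 _ ht) (cut_nonneg _ _ _))
      have t2 : Q p (u₁ z) (u₂ z) * (ψ z.1 * deriv (cut ε ε) z.2) ≤
          S'.indicator (fun z => N * (2 * M) * (|u₁ z - u₂ z| / ε)) z := by
        rcases le_or_gt (T + 1) z.1 with hT1 | hT1
        · rw [hψ3 _ hT1, zero_mul, mul_zero]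
          exact indicator_nonneg (fun z _ => by positivity) z
        have hcd := cut_deriv hM h0 hε hε z.2
        by_cases hz : z.2 ∈ bl ε
        · rw [indicator_of_mem (show z ∈ S' from ⟨⟨ht, hT1⟩, hz⟩)]
          have hcd2 : |deriv (cut ε ε) z.2| ≤ 2 * M / ε := by
            refine hcd.trans ?_
            have k1 : (Icc ε (2 * ε)).indicator (fun _ => M / ε) z.2 ≤ M / ε :=
              indicator_le_self' (fun _ _ => by positivity) _
            have k2 : (Icc (1 - 2 * ε) (1 - ε)).indicator (fun _ => M / ε) z.2 ≤ M / ε :=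
              indicator_le_self' (fun _ _ => by positivity) _
            have : 2 * M / ε = M / ε + M / ε := by ring
            linarith
          refine (le_abs_self _).trans ?_
          rw [abs_mul, abs_mul]
          calc _ ≤ |u₁ z - u₂ z| * (N * (2 * M / ε)) := by
                have := b1 z.1
                gcongr
            _ = _ := by ring
        · rw [indicator_of_notMem (fun h => hz (Or.inl h)), indicator_of_notMem (fun h => hz (Or.inr h)), add_zero] at hcd
          have : deriv (cut ε ε) z.2 = 0 := abs_nonpos_iff.1 hcd
          rw [this, mul_zero, mul_zero]
          exact indicator_nonneg (fun z _ => by positivity) z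
      linarith
  have hm := hD.trans (integral_mono iF (i2.sub i1) hle)
  rw [integral_sub' i2 i1, sub_nonneg] at hm
  have hm' := ENNReal.ofReal_le_ofReal hm
  rw [ofReal_integral_eq_lintegral_ofReal i1 (Eventually.of_forall fun z => indicator_nonneg (fun z _ => abs_nonneg _) z),
    ofReal_integral_eq_lintegral_ofReal i2 (Eventually.of_forall fun z => indicator_nonneg (fun z _ => by positivity) z)] at hm'
  rw [← lintegral_indicator mS, ← lintegral_indicator mS']
  have q1 : ∀ z, ENNReal.ofReal (S.indicator (fun z => |u₁ z - u₂ z|) z) =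
      S.indicator (fun z => ENNReal.ofReal |u₁ z - u₂ z|) z := by
    intro z; by_cases hz : z ∈ S
    · rw [indicator_of_mem hz, indicator_of_mem hz]
    · rw [indicator_of_notMem hz, indicator_of_notMem hz, ENNReal.ofReal_zero]
  have q2 : ∀ z, ENNReal.ofReal (S'.indicator (fun z => N * (2 * M) * (|u₁ z - u₂ z| / ε)) z) =
      S'.indicator (fun z => ENNReal.ofReal (N * (2 * M) * (|u₁ z - u₂ z| / ε))) z := by
    intro z; by_cases hz : z ∈ S'
    · rw [indicator_of_mem hz, indicator_of_mem hz]
    · rw [indicator_of_notMem hz, indicator_of_notMem hz, ENNReal.ofReal_zero]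
  rw [lintegral_congr q1, lintegral_congr q2] at hm'
  exact hm'

end ES

open MeasureTheory Set Filter Topology
namespace ES

lemma v1_const {V : ℝ → ℝ} (h : CondV1 V) : ∃ C : ENNReal, C < ⊤ ∧ ∀ᶠ y in 𝓝[>] (0:ℝ),
    ENNReal.ofReal (1 / y ^ 2) * ∫⁻ x in Ioo (0 : ℝ) y, ENNReal.ofReal (1 / V x + 1 / V (1 - x)) ≤ C := by
  obtain ⟨C, h1, h2⟩ := exists_between h
  exact ⟨C, h2, (eventually_lt_of_limsup_lt h1).mono fun y hy => hy.le⟩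

lemma bl_bound {V ρ : ℝ → ℝ} (hc : Coef V ρ) {ε : ℝ} (hε : 0 < ε) :
    ∫⁻ x in bl ε, ENNReal.ofReal (1 / V x) ≤
      ∫⁻ x in Ioo (0:ℝ) (3 * ε), ENNReal.ofReal (1 / V x + 1 / V (1 - x)) := by
  have mV := hc.mV
  have m1 : Measurable (fun x => ENNReal.ofReal (1 / V x)) := by fun_prop
  have m2 : Measurable (fun x => ENNReal.ofReal (1 / V (1 - x))) := by fun_prop
  have e : ∀ x, ENNReal.ofReal (1 / V x + 1 / V (1 - x)) =
      ENNReal.ofReal (1 / V x) + ENNReal.ofReal (1 / V (1 - x)) := fun x =>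
    ENNReal.ofReal_add (one_div_nonneg.2 (hc.nV _)) (one_div_nonneg.2 (hc.nV _))
  rw [lintegral_congr e, lintegral_add_left m1]
  refine (lintegral_union_le _ _ _).trans ?_
  refine add_le_add (lintegral_mono_set fun x hx => ⟨by linarith [hx.1], by linarith [hx.2]⟩) ?_
  have h1 : ∫⁻ x in Icc (1 - 2 * ε) (1 - ε), ENNReal.ofReal (1 / V x) =
      ∫⁻ x in Icc ε (2 * ε), ENNReal.ofReal (1 / V (1 - x)) := by
    rw [← lintegral_indicator measurableSet_Icc, ← lintegral_indicator measurableSet_Icc]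
    rw [← lintegral_sub_left_eq_self _ (1:ℝ)]
    refine lintegral_congr fun x => ?_
    by_cases hx : x ∈ Icc ε (2 * ε)
    · rw [indicator_of_mem hx, indicator_of_mem]
      exact ⟨by linarith [hx.2], by linarith [hx.1]⟩
    · rw [indicator_of_notMem hx, indicator_of_notMem]
      exact fun h => hx ⟨by linarith [h.2], by linarith [h.1]⟩
  rw [h1]
  exact lintegral_mono_set fun x hx => ⟨by linarith [hx.1], by linarith [hx.2]⟩

lemma young {v d ε κ a b : ℝ} (hv : 0 < v) (hε : 0 < ε) (hκ : 0 < κ) (h : d ^ 2 ≤ 2 * (a ^ 2 + b ^ 2)) :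
    d / ε ≤ κ / ε ^ 2 * (1 / v) + 1 / (2 * κ) * (v * a ^ 2 + v * b ^ 2) := by
  have h1 : 0 ≤ 1 / (κ * v) * (κ / ε - v * d / 2) ^ 2 := by positivity
  have h2 : 1 / (κ * v) * (κ / ε - v * d / 2) ^ 2 = κ / ε ^ 2 * (1 / v) - d / ε + v / (4 * κ) * d ^ 2 := by
    field_simp
    ring
  have h3 : v / (4 * κ) * d ^ 2 ≤ v / (4 * κ) * (2 * (a ^ 2 + b ^ 2)) := by gcongr
  have h4 : v / (4 * κ) * (2 * (a ^ 2 + b ^ 2)) = 1 / (2 * κ) * (v * a ^ 2 + v * b ^ 2) := by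
    field_simp
    ring
  linarith

lemma uniq_local {p : ℝ} (hp : p ∈ Ioc (1/2 : ℝ) 1) {V ρ : ℝ → ℝ} (hc : Coef V ρ) (h1 : CondV1 V)
    (h2 : CondV2 V ρ) {u₀ : ℝ → ℝ}
    (hu₀ : Measurable u₀) (hu₀m : ∀ x, u₀ x ∈ Icc (0:ℝ) 1) {u₁ u₂ : ℝ × ℝ → ℝ}
    (hu₁ : IsEntropySolution p V ρ u₀ u₁) (hu₂ : IsEntropySolution p V ρ u₀ u₂) {T a : ℝ} (hT : 0 < T)
    (ha : 0 < a) :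
    ∫⁻ z in Ioo 0 T ×ˢ Icc a (1 - a), ENNReal.ofReal |u₁ z - u₂ z| = 0 := by
  obtain ⟨K, hK, hst⟩ := stab hp hc hu₀ hu₀m hu₁ hu₂ hT
  obtain ⟨C, hC, hCe⟩ := v1_const h1
  have b1 := l2_bound hp hc h2 hu₀ hu₀m hu₁ (T + 1)
  have b2 := l2_bound hp hc h2 hu₀ hu₀m hu₂ (T + 1)
  have mV := hc.mV
  have mρ := hc.mρ
  have m1 := hu₁.1
  have m2 := hu₂.1
  set E : ℝ × ℝ → ENNReal := fun z => ENNReal.ofReal (V z.2 * (u₁ z - ρ z.2) ^ 2) +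
    ENNReal.ofReal (V z.2 * (u₂ z - ρ z.2) ^ 2) with hE
  have mE : Measurable E := by fun_prop
  set B := Ioo 0 (T + 1) ×ˢ Ioo (0:ℝ) 1 with hB
  have fE : ∫⁻ z in B, E z ≠ ⊤ := by
    rw [hE, lintegral_add_left (by fun_prop)]
    exact ENNReal.add_ne_top.2 ⟨b1.ne, b2.ne⟩
  have evs : ∀ᶠ ε in 𝓝[>] (0:ℝ), ε < 1 / 4 ∧ 0 < ε := by
    filter_upwards [Ioo_mem_nhdsGT (show (0:ℝ) < 1 / 4 by norm_num)] with ε hε using ⟨hε.2, hε.1⟩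
  have tz : Tendsto (fun ε : ℝ => ∫⁻ z in Ioo 0 (T + 1) ×ˢ bl ε, E z) (𝓝[>] 0) (𝓝 0) := by
    have hv : Tendsto (fun ε : ℝ => (volume.restrict B) (Ioo 0 (T + 1) ×ˢ bl ε)) (𝓝[>] 0) (𝓝 0) := by
      have hb : ∀ ε : ℝ, (volume.restrict B) (Ioo 0 (T + 1) ×ˢ bl ε) ≤
          ENNReal.ofReal (T + 1) * (ENNReal.ofReal ε + ENNReal.ofReal ε) := fun ε => by
        refine (Measure.restrict_apply_le _ _).trans ?_
        rw [Measure.volume_eq_prod, Measure.prod_prod, Real.volume_Ioo, sub_zero]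
        gcongr
        refine (measure_union_le _ _).trans ?_
        rw [Real.volume_Icc, Real.volume_Icc]
        gcongr <;> linarith
      have ht : Tendsto (fun ε : ℝ => ENNReal.ofReal (T + 1) * (ENNReal.ofReal ε + ENNReal.ofReal ε))
          (𝓝[>] 0) (𝓝 0) := by
        have t0 : Tendsto (fun ε : ℝ => ENNReal.ofReal ε) (𝓝[>] 0) (𝓝 0) := by
          have := (ENNReal.continuous_ofReal.tendsto (0:ℝ)).mono_left (nhdsWithin_le_nhds (s := Ioi 0))
          rwa [ENNReal.ofReal_zero] at this
        have := ENNReal.Tendsto.const_mul (a := ENNReal.ofReal (T + 1)) (t0.add t0) (Or.inr ENNReal.ofReal_ne_top)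
        rwa [add_zero, mul_zero] at this
      exact tendsto_of_tendsto_of_tendsto_of_le_of_le tendsto_const_nhds ht (fun _ => zero_le) hb
    have := tendsto_setLIntegral_zero fE hv
    refine this.congr' ?_
    filter_upwards [evs] with ε hε
    rw [Measure.restrict_restrict (measurableSet_Ioo.prod (measurableSet_bl ε)), inter_eq_left.2]
    rintro z ⟨hz1, hz2⟩
    refine ⟨hz1, ?_⟩
    rcases hz2 with h | h <;> constructor <;> linarith [h.1, h.2]
  have key : ∀ κ : ℝ, 0 < κ → ∫⁻ z in Ioo 0 T ×ˢ Icc a (1 - a), ENNReal.ofReal |u₁ z - u₂ z| ≤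
      ENNReal.ofReal κ * (ENNReal.ofReal (K * (T + 1)) * (9 * C)) := by
    intro κ hκ
    have lim : Tendsto (fun ε : ℝ => ENNReal.ofReal κ * (ENNReal.ofReal (K * (T + 1)) * (9 * C)) +
        ENNReal.ofReal (K * (1 / (2 * κ))) * ∫⁻ z in Ioo 0 (T + 1) ×ˢ bl ε, E z) (𝓝[>] 0)
        (𝓝 (ENNReal.ofReal κ * (ENNReal.ofReal (K * (T + 1)) * (9 * C)))) := by
      have := (tendsto_const_nhds (x := ENNReal.ofReal κ * (ENNReal.ofReal (K * (T + 1)) * (9 * C)))).add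
        (ENNReal.Tendsto.const_mul (a := ENNReal.ofReal (K * (1 / (2 * κ)))) tz (Or.inr ENNReal.ofReal_ne_top))
      rwa [mul_zero, add_zero] at this
    refine ge_of_tendsto lim ?_
    have t3 : Tendsto (fun ε : ℝ => 3 * ε) (𝓝[>] 0) (𝓝[>] 0) := by
      refine tendsto_nhdsWithin_iff.2 ⟨?_, ?_⟩
      · have : Tendsto (fun ε : ℝ => 3 * ε) (𝓝 0) (𝓝 (3 * 0)) := by
          apply Continuous.tendsto; fun_prop
        rw [mul_zero] at this
        exact this.mono_left nhdsWithin_le_nhds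
      · filter_upwards [evs] with ε hε
        have := hε.2
        show 0 < 3 * ε
        linarith
    filter_upwards [evs, t3.eventually hCe, Ioo_mem_nhdsGT (show (0:ℝ) < a / 2 by linarith)] with ε hε hV hεa
    have hε0 := hε.2
    have hsub : Ioo 0 T ×ˢ Icc a (1 - a) ⊆ Ioo 0 T ×ˢ Icc (2 * ε) (1 - 2 * ε) :=
      prod_mono subset_rfl (Icc_subset_Icc (by linarith [hεa.2]) (by linarith [hεa.2]))
    refine (lintegral_mono_set hsub).trans ((hst ε hε0).trans ?_)
    have mS' : MeasurableSet (Ioo 0 (T + 1) ×ˢ bl ε) := measurableSet_Ioo.prod (measurableSet_bl ε)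
    have pw : ∀ z ∈ Ioo 0 (T + 1) ×ˢ bl ε, ENNReal.ofReal (K * (|u₁ z - u₂ z| / ε)) ≤
        ENNReal.ofReal (K * (κ / ε ^ 2)) * ENNReal.ofReal (1 / V z.2) + ENNReal.ofReal (K * (1 / (2 * κ))) * E z := by
      intro z hz
      have hz2 : z.2 ∈ Ioo (0:ℝ) 1 := by
        rcases hz.2 with h | h <;> constructor <;> linarith [h.1, h.2, hε.1]
      have hv := hc.pV _ hz2
      have hd : |u₁ z - u₂ z| ^ 2 ≤ 2 * ((u₁ z - ρ z.2) ^ 2 + (u₂ z - ρ z.2) ^ 2) := by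
        rw [sq_abs]
        nlinarith [sq_nonneg ((u₁ z - ρ z.2) + (u₂ z - ρ z.2))]
      have hy := mul_le_mul_of_nonneg_left (young hv hε0 hκ hd) hK.le
      simp only [hE]
      rw [← ENNReal.ofReal_add (by positivity) (by positivity), ← ENNReal.ofReal_mul (by positivity),
        ← ENNReal.ofReal_mul (by positivity), ← ENNReal.ofReal_add (by positivity) (by positivity)]
      refine ENNReal.ofReal_le_ofReal (hy.trans (le_of_eq ?_))
      ring
    refine (setLIntegral_mono (by fun_prop) pw).trans ?_
    rw [lintegral_add_right _ (by fun_prop), lintegral_const_mul _ mE]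
    gcongr
    rw [lintegral_const_mul _ (by fun_prop)]
    have hpr : ∫⁻ z in Ioo 0 (T + 1) ×ˢ bl ε, ENNReal.ofReal (1 / V z.2) =
        ENNReal.ofReal (T + 1) * ∫⁻ x in bl ε, ENNReal.ofReal (1 / V x) := by
      rw [Measure.volume_eq_prod, ← Measure.prod_restrict]
      have := lintegral_prod_mul (μ := volume.restrict (Ioo 0 (T + 1))) (ν := volume.restrict (bl ε))
        (f := fun _ => 1) (g := fun x => ENNReal.ofReal (1 / V x)) aemeasurable_const (by fun_prop)
      simpa using this
    rw [hpr]
    have hb := bl_bound hc hε0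
    have hA : ENNReal.ofReal (K * (κ / ε ^ 2)) =
        ENNReal.ofReal κ * ENNReal.ofReal K * 9 * ENNReal.ofReal (1 / (3 * ε) ^ 2) := by
      rw [show (9 : ENNReal) = ENNReal.ofReal 9 by simp, ← ENNReal.ofReal_mul hκ.le, ← ENNReal.ofReal_mul (by positivity),
        ← ENNReal.ofReal_mul (by positivity)]
      congr 1
      field_simp
      ring
    rw [hA, ENNReal.ofReal_mul hK.le]
    calc _ ≤ ENNReal.ofReal κ * ENNReal.ofReal K * 9 * ENNReal.ofReal (1 / (3 * ε) ^ 2) *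
          (ENNReal.ofReal (T + 1) * ∫⁻ x in Ioo (0:ℝ) (3 * ε), ENNReal.ofReal (1 / V x + 1 / V (1 - x))) := by
          gcongr
      _ = ENNReal.ofReal κ * (ENNReal.ofReal K * ENNReal.ofReal (T + 1) * (9 * (ENNReal.ofReal (1 / (3 * ε) ^ 2) *
          ∫⁻ x in Ioo (0:ℝ) (3 * ε), ENNReal.ofReal (1 / V x + 1 / V (1 - x))))) := by ring
      _ ≤ _ := by gcongr
  have t0 : Tendsto (fun κ : ℝ => ENNReal.ofReal κ * (ENNReal.ofReal (K * (T + 1)) * (9 * C))) (𝓝[>] 0) (𝓝 0) := by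
    have t0 : Tendsto (fun ε : ℝ => ENNReal.ofReal ε) (𝓝[>] 0) (𝓝 0) := by
      have := (ENNReal.continuous_ofReal.tendsto (0:ℝ)).mono_left (nhdsWithin_le_nhds (s := Ioi 0))
      rwa [ENNReal.ofReal_zero] at this
    have := ENNReal.Tendsto.mul_const (b := ENNReal.ofReal (K * (T + 1)) * (9 * C)) t0
      (Or.inr (ENNReal.mul_ne_top ENNReal.ofReal_ne_top (ENNReal.mul_ne_top (by simp) hC.ne)))
    rwa [zero_mul] at this
  refine le_antisymm (ge_of_tendsto t0 ?_) zero_le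
  filter_upwards [self_mem_nhdsWithin] with κ hκ using key κ hκ

lemma uniq_coef {p : ℝ} (hp : p ∈ Ioc (1/2 : ℝ) 1) {V ρ : ℝ → ℝ} (hc : Coef V ρ) (h1 : CondV1 V)
    (h2 : CondV2 V ρ) {u₀ : ℝ → ℝ}
    (hu₀ : Measurable u₀) (hu₀m : ∀ x, u₀ x ∈ Icc (0:ℝ) 1) {u₁ u₂ : ℝ × ℝ → ℝ}
    (hu₁ : IsEntropySolution p V ρ u₀ u₁) (hu₂ : IsEntropySolution p V ρ u₀ u₂) :
    ∀ᵐ z ∂(volume.restrict (Ioi (0 : ℝ) ×ˢ Ioo (0 : ℝ) 1)), u₁ z = u₂ z := by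
  have m1 := hu₁.1
  have m2 := hu₂.1
  have hsub : Ioi (0 : ℝ) ×ˢ Ioo (0 : ℝ) 1 ⊆ ⋃ n : ℕ, Ioo 0 ((n:ℝ) + 1) ×ˢ Icc (1 / ((n:ℝ) + 1)) (1 - 1 / ((n:ℝ) + 1)) := by
    rintro z ⟨ht, hx⟩
    have ht : 0 < z.1 := ht
    obtain ⟨n1, hn1⟩ := exists_nat_gt z.1
    obtain ⟨n2, hn2⟩ := exists_nat_one_div_lt hx.1
    obtain ⟨n3, hn3⟩ := exists_nat_one_div_lt (sub_pos.2 hx.2)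
    have k2 : 1 / (((n1 + n2 + n3 : ℕ):ℝ) + 1) ≤ 1 / ((n2:ℝ) + 1) := by
      gcongr; omega
    have k3 : 1 / (((n1 + n2 + n3 : ℕ):ℝ) + 1) ≤ 1 / ((n3:ℝ) + 1) := by
      gcongr; omega
    have k1 : (n1:ℝ) ≤ ((n1 + n2 + n3 : ℕ):ℝ) := by exact_mod_cast (by omega)
    refine mem_iUnion.2 ⟨n1 + n2 + n3, ⟨ht, ?_⟩, ?_, ?_⟩ <;> linarith
  refine ae_restrict_of_ae_restrict_of_subset hsub ?_
  rw [ae_restrict_iUnion_iff]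
  intro n
  have h0 := uniq_local hp hc h1 h2 hu₀ hu₀m hu₁ hu₂ (T := (n:ℝ) + 1) (a := 1 / ((n:ℝ) + 1)) (by positivity) (by positivity)
  rw [lintegral_eq_zero_iff (by fun_prop)] at h0
  filter_upwards [h0] with z hz
  have : |u₁ z - u₂ z| ≤ 0 := by simpa using hz
  exact sub_eq_zero.1 (abs_nonpos_iff.1 this)

end ES

open MeasureTheory Set Filter Topology
namespace ES

lemma measurable_indicator_iff_aux {f : ℝ → ℝ} {s : Set ℝ} (hf : ContinuousOn f s) (hs : MeasurableSet s) :
    Measurable (s.indicator f) := by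
  classical
  rw [← piecewise_eq_indicator]
  exact hf.measurable_piecewise continuousOn_const hs

lemma coef_of {V ρ : ℝ → ℝ} (hV : ContinuousOn V (Ioo 0 1)) (hVpos : ∀ x ∈ Ioo (0 : ℝ) 1, 0 < V x)
    (hρ : ContinuousOn ρ (Icc 0 1)) (hρmem : ∀ x ∈ Icc (0 : ℝ) 1, ρ x ∈ Ioo (0 : ℝ) 1) :
    Coef ((Ioo (0:ℝ) 1).indicator V) ((Icc (0:ℝ) 1).indicator ρ) where
  mV := (measurable_indicator_iff_aux hV measurableSet_Ioo)
  nV := indicator_nonneg fun x hx => (hVpos x hx).le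
  pV := fun x hx => by rw [indicator_of_mem hx]; exact hVpos x hx
  cV := hV.congr fun x hx => indicator_of_mem hx _
  mρ := (measurable_indicator_iff_aux hρ measurableSet_Icc)
  bρ := fun x => by
    by_cases hx : x ∈ Icc (0:ℝ) 1
    · rw [indicator_of_mem hx]; exact Ioo_subset_Icc_self (hρmem x hx)
    · rw [indicator_of_notMem hx]; simp
  cρ := hρ.congr fun x hx => indicator_of_mem hx _

lemma entropy_congr {p : ℝ} {V ρ V' ρ' u₀ : ℝ → ℝ} {u : ℝ × ℝ → ℝ} (hV : ∀ x ∈ Ioo (0:ℝ) 1, V' x = V x)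
    (hρ : ∀ x ∈ Ioo (0:ℝ) 1, ρ' x = ρ x) (h : IsEntropySolution p V ρ u₀ u) : IsEntropySolution p V' ρ' u₀ u := by
  refine ⟨h.1, h.2.1, fun f q hfq φ h1 h2 h3 h4 => ?_⟩
  have := h.2.2 f q hfq φ h1 h2 h3 h4
  have e : ∫ z in Ioi (0 : ℝ) ×ˢ Ioo (0 : ℝ) 1, deriv f (u z) * (V' z.2 * (u z - ρ' z.2)) * φ z =
      ∫ z in Ioi (0 : ℝ) ×ˢ Ioo (0 : ℝ) 1, deriv f (u z) * (V z.2 * (u z - ρ z.2)) * φ z :=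
    setIntegral_congr_fun (measurableSet_Ioi.prod measurableSet_Ioo) fun z hz => by
      simp only [hV _ hz.2, hρ _ hz.2]
  rw [e]; exact this

lemma v1_congr {V V' : ℝ → ℝ} (hV : ∀ x ∈ Ioo (0:ℝ) 1, V' x = V x) (h : CondV1 V) : CondV1 V' := by
  refine lt_of_eq_of_lt (limsup_congr ?_) h
  filter_upwards [Ioo_mem_nhdsGT (show (0:ℝ) < 1 by norm_num)] with y hy
  congr 1
  refine setLIntegral_congr_fun measurableSet_Ioo fun x hx => ?_
  rw [hV x ⟨hx.1, hx.2.trans hy.2⟩, hV (1 - x) ⟨by linarith [hx.2, hy.2], by linarith [hx.1]⟩]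

lemma v2_congr {V V' ρ ρ' : ℝ → ℝ} (hV : ∀ x ∈ Ioo (0:ℝ) 1, V' x = V x)
    (hρ : ∀ x ∈ Icc (0:ℝ) 1, ρ' x = ρ x) (h : CondV2 V ρ) : CondV2 V' ρ' := by
  refine Tendsto.congr' ?_ h
  filter_upwards [Ioo_mem_nhdsGT (show (0:ℝ) < 1 by norm_num)] with y hy
  have r0 := hρ 0 (by simp)
  have r1 := hρ 1 (by simp)
  congr 1
  · refine setLIntegral_congr_fun measurableSet_Ioo fun x hx => ?_
    rw [hV x ⟨hx.1, hx.2.trans hy.2⟩, hρ x ⟨hx.1.le, (hx.2.trans hy.2).le⟩, r0]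
  · refine setLIntegral_congr_fun measurableSet_Ioo fun x hx => ?_
    have h0 : 0 < x := by linarith [hx.1, hy.2]
    rw [hV x ⟨h0, hx.2⟩, hρ x ⟨h0.le, hx.2.le⟩, r1]

end ES

/-- uniqueness of entropy solutions under (V1) and (V2). -/
theorem entropy_solution_unique (p : ℝ) (hp : p ∈ Ioc (1 / 2 : ℝ) 1)
    (V ρ : ℝ → ℝ)
    (hV : ContDiffOn ℝ 1 V (Ioo 0 1)) (hVpos : ∀ x ∈ Ioo (0 : ℝ) 1, 0 < V x)
    (hV1 : CondV1 V)
    (hρ : ContDiffOn ℝ 1 ρ (Icc 0 1)) (hρmem : ∀ x ∈ Icc (0 : ℝ) 1, ρ x ∈ Ioo (0 : ℝ) 1)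
    (hV2 : CondV2 V ρ)
    (u₀ : ℝ → ℝ) (hu₀ : Measurable u₀) (hu₀mem : ∀ x, u₀ x ∈ Icc (0 : ℝ) 1)
    (u₁ u₂ : ℝ × ℝ → ℝ)
    (h₁ : IsEntropySolution p V ρ u₀ u₁) (h₂ : IsEntropySolution p V ρ u₀ u₂) :
    ∀ᵐ z ∂(volume.restrict (Ioi (0 : ℝ) ×ˢ Ioo (0 : ℝ) 1)), u₁ z = u₂ z := by
  have hV' : ∀ x ∈ Ioo (0:ℝ) 1, (Ioo (0:ℝ) 1).indicator V x = V x := fun x hx => indicator_of_mem hx _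
  have hρ' : ∀ x ∈ Icc (0:ℝ) 1, (Icc (0:ℝ) 1).indicator ρ x = ρ x := fun x hx => indicator_of_mem hx _
  have hρ'' : ∀ x ∈ Ioo (0:ℝ) 1, (Icc (0:ℝ) 1).indicator ρ x = ρ x := fun x hx => hρ' x (Ioo_subset_Icc_self hx)
  exact ES.uniq_coef hp (ES.coef_of hV.continuousOn hVpos hρ.continuousOn hρmem) (ES.v1_congr hV' hV1)
    (ES.v2_congr hV' hρ' hV2) hu₀ hu₀mem (ES.entropy_congr hV' hρ'' h₁) (ES.entropy_congr hV' hρ'' h₂)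
end

section
/- Let T > 0, let V : (0,1) → (0,∞) be continuous with ∫₀^y V(x) dx = ∞ and ∫_{1−y}^1 V(x) dx = ∞ for every y ∈ (0,1), and let ρ : [0,1] → (0,1) be continuous. Suppose u : (0,T)×[0,1] → [0,1] is measurable, x ↦ u(t,x) is continuous on [0,1] for every t ∈ (0,T), and ∫₀^T ∫₀¹ V(x)(u(t,x) − ρ(x))² dx dt < ∞. Then u(t,0) = ρ(0) and u(t,1) = ρ(1) for almost every t ∈ (0,T). -/
open MeasureTheory Set Filter Topology

lemma aux_top (V g : ℝ → ℝ) (S : Set ℝ) (hS : MeasurableSet S) (hsub : S ⊆ Ioo (0 : ℝ) 1)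
    (hV : ∀ x ∈ Ioo (0 : ℝ) 1, 0 < V x) (c : ℝ) (hc : 0 < c) (hg : ∀ x ∈ S, c ≤ g x ^ 2)
    (htop : (∫⁻ x in S, ENNReal.ofReal (V x)) = ⊤) :
    (∫⁻ x in Ioo (0 : ℝ) 1, ENNReal.ofReal (V x * g x ^ 2)) = ⊤ := by
  rw [eq_top_iff]
  calc (⊤ : ENNReal) = ENNReal.ofReal c * ∫⁻ x in S, ENNReal.ofReal (V x) := by
        rw [htop, ENNReal.mul_top]
        simpa using hc
    _ = ∫⁻ x in S, ENNReal.ofReal c * ENNReal.ofReal (V x) :=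
        (lintegral_const_mul' _ _ ENNReal.ofReal_ne_top).symm
    _ ≤ ∫⁻ x in S, ENNReal.ofReal (V x * g x ^ 2) := by
        refine setLIntegral_mono' hS fun x hx => ?_
        rw [← ENNReal.ofReal_mul hc.le, mul_comm]
        exact ENNReal.ofReal_le_ofReal
          (mul_le_mul_of_nonneg_left (hg x hx) (hV x (hsub hx)).le)
    _ ≤ _ := lintegral_mono_set hsub

lemma aux_nhds (g : ℝ → ℝ) (hg : ContinuousOn g (Icc 0 1)) (a : ℝ) (ha : a ∈ Icc (0 : ℝ) 1)
    (hne : g a ≠ 0) : ∃ δ ∈ Ioo (0 : ℝ) 1, ∀ x ∈ Icc (0 : ℝ) 1, |x - a| < δ →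
      g a ^ 2 / 2 ≤ g x ^ 2 := by
  have h1 : ContinuousWithinAt (fun x => g x ^ 2) (Icc 0 1) a := (hg a ha).pow 2
  have hp : 0 < g a ^ 2 := by positivity
  have h2 : ∀ᶠ x in 𝓝[Icc 0 1] a, g a ^ 2 / 2 < g x ^ 2 :=
    h1.eventually (lt_mem_nhds (by linarith))
  obtain ⟨ε, hε, h⟩ := Metric.mem_nhdsWithin_iff.1 h2
  refine ⟨min ε (1 / 2), ⟨by positivity, lt_of_le_of_lt (min_le_right _ _) (by norm_num)⟩, ?_⟩
  intro x hx hxa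
  have : g a ^ 2 / 2 < g x ^ 2 := h ⟨by
    rw [Metric.mem_ball, Real.dist_eq]
    exact lt_of_lt_of_le hxa (min_le_left _ _), hx⟩
  exact this.le

/-- if `V` is non-integrable near both endpoints and `u` is spatially
continuous with finite energy `∬ V(x)(u−ρ)² < ∞`, then `u(t,0) = ρ(0)` and
`u(t,1) = ρ(1)` for almost every `t ∈ (0,T)`. -/
theorem boundary_values_attained (T : ℝ) (hT : 0 < T) (V ρ : ℝ → ℝ)
    (hVcont : ContinuousOn V (Ioo 0 1)) (hVpos : ∀ x ∈ Ioo (0 : ℝ) 1, 0 < V x)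
    (hVnonint : ∀ y ∈ Ioo (0 : ℝ) 1,
      (∫⁻ x in Ioo (0 : ℝ) y, ENNReal.ofReal (V x)) = ⊤ ∧
      (∫⁻ x in Ioo (1 - y) (1 : ℝ), ENNReal.ofReal (V x)) = ⊤)
    (hρcont : ContinuousOn ρ (Icc 0 1)) (hρmem : ∀ x ∈ Icc (0 : ℝ) 1, ρ x ∈ Ioo (0 : ℝ) 1)
    (u : ℝ × ℝ → ℝ) (humeas : Measurable u) (humem : ∀ z : ℝ × ℝ, u z ∈ Icc (0 : ℝ) 1)
    (hucont : ∀ t ∈ Ioo (0 : ℝ) T, ContinuousOn (fun x => u (t, x)) (Icc 0 1))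
    (henergy : (∫⁻ z in Ioo (0 : ℝ) T ×ˢ Ioo (0 : ℝ) 1,
      ENNReal.ofReal (V z.2 * (u z - ρ z.2) ^ 2)) < ⊤) :
    ∀ᵐ t ∂(volume.restrict (Ioo (0 : ℝ) T)), u (t, 0) = ρ 0 ∧ u (t, 1) = ρ 1 := by
  have hm : AEMeasurable (fun z : ℝ × ℝ => ENNReal.ofReal (V z.2 * (u z - ρ z.2) ^ 2))
      (volume.restrict (Ioo (0 : ℝ) T ×ˢ Ioo (0 : ℝ) 1)) := by
    have hs : MeasurableSet (Ioo (0 : ℝ) T ×ˢ Ioo (0 : ℝ) 1) :=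
      measurableSet_Ioo.prod measurableSet_Ioo
    have h1 : AEMeasurable (fun z : ℝ × ℝ => V z.2)
        (volume.restrict (Ioo (0 : ℝ) T ×ˢ Ioo (0 : ℝ) 1)) :=
      (hVcont.comp continuousOn_snd (fun z hz => hz.2)).aemeasurable hs
    have h2 : AEMeasurable (fun z : ℝ × ℝ => ρ z.2)
        (volume.restrict (Ioo (0 : ℝ) T ×ˢ Ioo (0 : ℝ) 1)) :=
      (hρcont.comp continuousOn_snd (fun z hz => Ioo_subset_Icc_self hz.2)).aemeasurable hs
    exact (h1.mul ((humeas.aemeasurable.sub h2).pow_const 2)).ennreal_ofReal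
  rw [Measure.volume_eq_prod, ← Measure.prod_restrict] at hm henergy
  rw [lintegral_prod _ hm] at henergy
  have hfin := ae_lt_top' hm.lintegral_prod_right' henergy.ne
  filter_upwards [hfin, ae_restrict_mem measurableSet_Ioo] with t ht htT
  have hg : ContinuousOn (fun x => u (t, x) - ρ x) (Icc 0 1) := (hucont t htT).sub hρcont
  constructor
  · by_contra hne
    obtain ⟨δ, hδ, h⟩ := aux_nhds _ hg 0 (by simp) (sub_ne_zero.2 hne)
    have hp : u (t, 0) - ρ 0 ≠ 0 := sub_ne_zero.2 hne
    refine ht.ne (aux_top V (fun x => u (t, x) - ρ x) (Ioo 0 δ) measurableSet_Ioo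
      (Ioo_subset_Ioo_right hδ.2.le) hVpos _ (by positivity) (fun x hx => h x ?_ ?_)
      (hVnonint δ hδ).1)
    · exact ⟨hx.1.le, (hx.2.trans hδ.2).le⟩
    · rw [abs_lt]; constructor <;> linarith [hx.1, hx.2]
  · by_contra hne
    obtain ⟨δ, hδ, h⟩ := aux_nhds _ hg 1 (by simp) (sub_ne_zero.2 hne)
    have hp : u (t, 1) - ρ 1 ≠ 0 := sub_ne_zero.2 hne
    refine ht.ne (aux_top V (fun x => u (t, x) - ρ x) (Ioo (1 - δ) 1) measurableSet_Ioo
      (Ioo_subset_Ioo_left (by linarith [hδ.2])) hVpos _ (by positivity) (fun x hx => h x ?_ ?_)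
      (hVnonint δ hδ).2)
    · exact ⟨by linarith [hx.1, hδ.2], hx.2.le⟩
    · rw [abs_lt]; constructor <;> linarith [hx.1, hx.2]
end
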